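/- Let G be an Artin group of large type satisfying the (3,3,m)-hypothesis, with permissible factorisation sets 𝒫 and 𝒫_{ij}. Let P' be a polynomial with nonnegative coefficients such that for every pair i ≠ j, every h ∈ G(i,j) and every k' ∈ ℕ, the number of elements h_1 ∈ G(i,j) with ℓ(h_1) = k' and (h_1, h_1^{-1}h) ∈ 𝒫_{ij}(h) is at most P'(k'). Suppose g ∈ G has geodesic word representatives v and w whose first letters differ, and let 0 ≤ k ≤ ℓ(g). Then the number of elements g_1 ∈ G with ℓ(g_1) = k, (g_1, g_1^{-1}g) ∈ 𝒫, and such that every geodesic word representing g_1 begins with the first letter of v, is at most Σ_{j=1}^{k} P'(j). -/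

import Mathlib

namespace ArtinRD

/-- The alternating product `xyxy...` with `m` factors, starting with `x`. -/
def altProd {G : Type*} [Monoid G] : ℕ → G → G → G
  | 0, _, _ => 1
  | n + 1, x, y => x * altProd n y x

/-- The Artin relators determined by a Coxeter-type matrix `M` (`⊤` meaning `∞`). -/
def artinRels (n : ℕ) (M : Fin n → Fin n → ℕ∞) : Set (FreeGroup (Fin n)) :=
  {r | ∃ i j : Fin n, i ≠ j ∧ ∃ m : ℕ, M i j = (m : ℕ∞) ∧
    r = altProd m (FreeGroup.of i) (FreeGroup.of j) *
        (altProd m (FreeGroup.of j) (FreeGroup.of i))⁻¹}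

/-- The Artin group associated to the matrix `M`. -/
abbrev ArtinGroup (n : ℕ) (M : Fin n → Fin n → ℕ∞) : Type := PresentedGroup (artinRels n M)

/-- The standard generator `x_i` of the Artin group. -/
def gen (n : ℕ) (M : Fin n → Fin n → ℕ∞) (i : Fin n) : ArtinGroup n M := PresentedGroup.of i

/-- The set `A = {x_1^{±1}, ..., x_n^{±1}}` of standard letters. -/
def genSet (n : ℕ) (M : Fin n → Fin n → ℕ∞) : Set (ArtinGroup n M) :=
  {g | ∃ i : Fin n, g = gen n M i ∨ g = (gen n M i)⁻¹}

/-- Word length of `g` with respect to a set `S`: the least `N` such that `g` is a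
product of `N` elements of `S`. -/
noncomputable def wordLength {G : Type*} [Group G] (S : Set G) (g : G) : ℕ :=
  sInf {N : ℕ | ∃ w : List G, (∀ a ∈ w, a ∈ S) ∧ w.length = N ∧ w.prod = g}

/-- The word length on an Artin group with respect to the standard letters. -/
noncomputable def ℓA (n : ℕ) (M : Fin n → Fin n → ℕ∞) : ArtinGroup n M → ℕ :=
  wordLength (genSet n M)

/-- A letter: a generator index together with a sign (`true` = positive). -/
abbrev Letter (n : ℕ) := Fin n × Bool

/-- The group element corresponding to a letter. -/
def toGen (n : ℕ) (M : Fin n → Fin n → ℕ∞) (l : Letter n) : ArtinGroup n M :=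
  if l.2 then gen n M l.1 else (gen n M l.1)⁻¹

/-- The group element represented by a word over the letters. -/
def wordElt (n : ℕ) (M : Fin n → Fin n → ℕ∞) (w : List (Letter n)) : ArtinGroup n M :=
  (w.map (toGen n M)).prod

/-- A word is geodesic if its length equals the word length of the element it represents. -/
def IsGeodesic (n : ℕ) (M : Fin n → Fin n → ℕ∞) (w : List (Letter n)) : Prop :=
  wordLength (genSet n M) (wordElt n M w) = w.length

/-- `h` is a left divisor of `g`: the factorisation `g = h ⬝ (h⁻¹ g)` is geodesic. -/
def IsLeftDiv {G : Type*} [Group G] (ℓ : G → ℕ) (h g : G) : Prop :=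
  ℓ h + ℓ (h⁻¹ * g) = ℓ g

/-- `h` is a right divisor of `g`: the factorisation `g = (g h⁻¹) ⬝ h` is geodesic. -/
def IsRightDiv {G : Type*} [Group G] (ℓ : G → ℕ) (h g : G) : Prop :=
  ℓ (g * h⁻¹) + ℓ h = ℓ g

/-- The two-generator ("dihedral") subgroup `G(i,j)`. -/
def Gij (n : ℕ) (M : Fin n → Fin n → ℕ∞) (i j : Fin n) : Subgroup (ArtinGroup n M) :=
  Subgroup.closure {gen n M i, gen n M j}

/-- The letters `x_i^{±1}, x_j^{±1}` as group elements. -/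
def lettersIJ (n : ℕ) (M : Fin n → Fin n → ℕ∞) (i j : Fin n) : Set (ArtinGroup n M) :=
  {gen n M i, (gen n M i)⁻¹, gen n M j, (gen n M j)⁻¹}

/-- The maximal `{x_i,x_j}`-prefix of a word. -/
def ijPrefix (n : ℕ) (i j : Fin n) (w : List (Letter n)) : List (Letter n) :=
  w.takeWhile (fun l => l.1 == i || l.1 == j)

/-- `h` is a left divisor of `g` lying in `G(i,j)` of maximal word length. -/
def IsMaxLD (n : ℕ) (M : Fin n → Fin n → ℕ∞) (i j : Fin n) (g h : ArtinGroup n M) : Prop :=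
  h ∈ Gij n M i j ∧ IsLeftDiv (ℓA n M) h g ∧
    ∀ h' ∈ Gij n M i j, IsLeftDiv (ℓA n M) h' g → ℓA n M h' ≤ ℓA n M h

/-- `h` is a right divisor of `g` lying in `G(i,j)` of maximal word length. -/
def IsMaxRD (n : ℕ) (M : Fin n → Fin n → ℕ∞) (i j : Fin n) (g h : ArtinGroup n M) : Prop :=
  h ∈ Gij n M i j ∧ IsRightDiv (ℓA n M) h g ∧
    ∀ h' ∈ Gij n M i j, IsRightDiv (ℓA n M) h' g → ℓA n M h' ≤ ℓA n M h

/-- A positive element of `G(i,j)`: a product of the generators `x_i, x_j`. -/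
def posIJ (n : ℕ) (M : Fin n → Fin n → ℕ∞) (i j : Fin n) (h : ArtinGroup n M) : Prop :=
  h ∈ Submonoid.closure ({gen n M i, gen n M j} : Set (ArtinGroup n M))

/-- A negative element of `G(i,j)`: a product of the inverses of `x_i, x_j`. -/
def negIJ (n : ℕ) (M : Fin n → Fin n → ℕ∞) (i j : Fin n) (h : ArtinGroup n M) : Prop :=
  h ∈ Submonoid.closure ({(gen n M i)⁻¹, (gen n M j)⁻¹} : Set (ArtinGroup n M))

/-- The Garside element `Δ_{ij} = ₘ(x_i,x_j)` (for `m = m_{ij}`). -/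
def DeltaIJ (n : ℕ) (M : Fin n → Fin n → ℕ∞) (i j : Fin n) (m : ℕ) : ArtinGroup n M :=
  altProd m (gen n M i) (gen n M j)

/-- `k` is the largest exponent such that `Δ_{ij}^k` is a left divisor of `h`. -/
def IsMaxDPowIJ (n : ℕ) (M : Fin n → Fin n → ℕ∞) (i j : Fin n) (m k : ℕ)
    (h : ArtinGroup n M) : Prop :=
  IsLeftDiv (ℓA n M) (DeltaIJ n M i j m ^ k) h ∧
    ∀ k' : ℕ, IsLeftDiv (ℓA n M) (DeltaIJ n M i j m ^ k') h → k' ≤ k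

/-- `k` is the largest exponent such that `Δ_{ij}^{-k}` is a left divisor of `h`. -/
def IsMaxNegDPowIJ (n : ℕ) (M : Fin n → Fin n → ℕ∞) (i j : Fin n) (m k : ℕ)
    (h : ArtinGroup n M) : Prop :=
  IsLeftDiv (ℓA n M) ((DeltaIJ n M i j m)⁻¹ ^ k) h ∧
    ∀ k' : ℕ, IsLeftDiv (ℓA n M) ((DeltaIJ n M i j m)⁻¹ ^ k') h → k' ≤ k

/-- `h` has a representative of the form `a^s b^t` with `a, b ∈ {x_i^{±1}, x_j^{±1}}`. -/
def TwoSyllIJ (n : ℕ) (M : Fin n → Fin n → ℕ∞) (i j : Fin n) (h : ArtinGroup n M) : Prop :=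
  ∃ a ∈ lettersIJ n M i j, ∃ b ∈ lettersIJ n M i j, ∃ s t : ℕ, h = a ^ s * b ^ t

/-- The permissible factorisations `𝒫_{ij}` in the dihedral subgroup `G(i,j)`:
geodesic factorisations `(h₁, h₂)` of `h₁h₂` into elements of `G(i,j)` such that, if
`m_{ij} < ∞` and the product is positive or negative, additionally one of the two
factors has at most two syllables or the factorisation is not `Δ_{ij}`-decreasing. -/
def PijMem (n : ℕ) (M : Fin n → Fin n → ℕ∞) (i j : Fin n)
    (h₁ h₂ : ArtinGroup n M) : Prop :=
  h₁ ∈ Gij n M i j ∧ h₂ ∈ Gij n M i j ∧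
  ℓA n M h₁ + ℓA n M h₂ = ℓA n M (h₁ * h₂) ∧
  (∀ m : ℕ, M i j = (m : ℕ∞) → (posIJ n M i j (h₁ * h₂) ∨ negIJ n M i j (h₁ * h₂)) →
    (TwoSyllIJ n M i j h₁ ∨ TwoSyllIJ n M i j h₂ ∨
     (posIJ n M i j (h₁ * h₂) ∧ posIJ n M i j h₁ ∧ posIJ n M i j h₂ ∧
       ∃ k₁ k₂ : ℕ, IsMaxDPowIJ n M i j m k₁ h₁ ∧ IsMaxDPowIJ n M i j m k₂ h₂ ∧
         IsMaxDPowIJ n M i j m (k₁ + k₂) (h₁ * h₂)) ∨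
     (negIJ n M i j (h₁ * h₂) ∧ negIJ n M i j h₁ ∧ negIJ n M i j h₂ ∧
       ∃ k₁ k₂ : ℕ, IsMaxNegDPowIJ n M i j m k₁ h₁ ∧ IsMaxNegDPowIJ n M i j m k₂ h₂ ∧
         IsMaxNegDPowIJ n M i j m (k₁ + k₂) (h₁ * h₂))))

/-- The set `𝒫` of permissible factorisations of elements of `G`: geodesic
factorisations `(g₁, g₂)` such that for every pair `i ≠ j`, the pair
`(RD_{ij}(g₁), LD_{ij}(g₂))` is a permissible factorisation in `G(i,j)`. -/
def PMem (n : ℕ) (M : Fin n → Fin n → ℕ∞)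
    (LD RD : Fin n → Fin n → ArtinGroup n M → ArtinGroup n M)
    (q : ArtinGroup n M × ArtinGroup n M) : Prop :=
  ℓA n M q.1 + ℓA n M q.2 = ℓA n M (q.1 * q.2) ∧
  ∀ i j : Fin n, i ≠ j → PijMem n M i j (RD i j q.1) (LD i j q.2)

/-!
Geodesics in an Artin group of large type are governed by its dihedral subgroups. An element of a
dihedral Artin group has a Garside normal form, whose levels determine its length and the first
letters of its geodesics. In general call a word reduced if dihedral moves, which replace a geodesic
subword on two generators by another one for the same element, never lead to a cancellation. The
group acts on the classes of reduced words under these moves, so reduced words are geodesic, and two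
geodesics for the same element are connected by dihedral moves. Hence an element has first letters
`a` and `b` on different generators only if these satisfy a braid relation of length `m` and the
left divisor of the element in `G(a,b)` has at least `m` syllables.

The count is by induction on the length `k`, for divisors `r` of `g` that are preceded by a fixed
element `H` of `G(a,b)`. Those in `G(a,b)` are permissible divisors in a dihedral subgroup, of
length `ℓ(RD(H)) + k` after multiplication by `RD(H)`. All others leave `G(a,b)` at the same element
`x` and through the same letter `c`; here the `(3,3,m)`-hypothesis is needed. They are the products
of `x` with the divisors of `x⁻¹ g` of length `k - ℓ(x)` that begin with `c` and are preceded by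
`H x`. The right dihedral divisor of `H x` is strictly shorter than that of `H` plus `ℓ(x)`, so that
the remaining divisors are counted by a strictly shorter sum of values of the bound.
-/

/-! ### Garside normal forms in dihedral Artin groups -/

/-- Left Garside normal forms in the dihedral Artin group on generators `x true`, `x false` with
`Δ = altProd m (x true) (x false)`. The form `deltaPow k` is `Δ ^ k`, and `blocks k f c cs` is a
product of alternating words of lengths `c :: cs` followed by `Δ ^ k`, where the first block starts
with `x f` and every other block starts with the last letter of the block before it. -/
inductive GarsideForm : Type
  | deltaPow (k : ℤ) : GarsideForm
  | blocks (k : ℤ) (f : Bool) (c : ℕ) (cs : List ℕ) : GarsideForm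

namespace GarsideForm

/-- The form with block lengths `cs`, possibly none, the first of them starting with `x f`. -/
def ofBlocks (k : ℤ) (f : Bool) : List ℕ → GarsideForm
  | [] => deltaPow k
  | c :: cs => blocks k f c cs

/-- Left multiplication by the generator `x z`. -/
def mulPos (m : ℕ) (z : Bool) : GarsideForm → GarsideForm
  | deltaPow k => blocks k z 1 []
  | blocks k f c cs =>
    if z = f then blocks k z 1 (c :: cs)
    else if c + 1 = m then ofBlocks (k + 1) f cs else blocks k z (c + 1) cs

/-- Left multiplication by the inverse of the generator `x z`. -/
def mulNeg (m : ℕ) (z : Bool) : GarsideForm → GarsideForm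
  | deltaPow k => blocks (k - 1) (!z) (m - 1) []
  | blocks k f c cs =>
    if z = f then (if c = 1 then ofBlocks k z cs else blocks k (!z) (c - 1) cs)
    else blocks (k - 1) f (m - 1) (c :: cs)

/-- Left multiplication by a signed letter; the second component is the sign, `true` being `+`. -/
def act (m : ℕ) (a : Bool × Bool) (s : GarsideForm) : GarsideForm :=
  if a.2 then mulPos m a.1 s else mulNeg m a.1 s

/-- All blocks are proper: they have positive length less than that of `Δ`. -/
def IsValid (m : ℕ) : GarsideForm → Prop
  | deltaPow _ => True
  | blocks _ _ c cs => ∀ x ∈ c :: cs, 1 ≤ x ∧ x < m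

/-- The level `t` of a form: the exponent of `Δ` plus the number of blocks of length at least `t`.
A letter changes exactly one of the levels `1, …, m`, and that one by `1`. -/
def level : GarsideForm → ℕ → ℤ
  | deltaPow k, _ => k
  | blocks k _ c cs, t => k + (List.countP (fun x => decide (t ≤ x)) (c :: cs) : ℕ)

/-- The geodesic length of a form, as the sum of the absolute values of its levels. -/
def length (m : ℕ) (s : GarsideForm) : ℕ := ∑ t ∈ Finset.Icc 1 m, (level s t).natAbs

/-- The level raised by left multiplication with `x z`. -/
def raisedLevel (z : Bool) : GarsideForm → ℕ
  | deltaPow _ => 1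
  | blocks _ f c _ => if z = f then 1 else c + 1

/-- The level lowered by left multiplication with the inverse of `x z`. -/
def loweredLevel (m : ℕ) (z : Bool) : GarsideForm → ℕ
  | deltaPow _ => m
  | blocks _ f c _ => if z = f then c else m

variable {m : ℕ} {s : GarsideForm}

theorem isValid_blocks {k : ℤ} {f : Bool} {c : ℕ} {cs : List ℕ} :
    IsValid m (blocks k f c cs) ↔ (1 ≤ c ∧ c < m) ∧ ∀ x ∈ cs, 1 ≤ x ∧ x < m := by
  simp only [IsValid, List.mem_cons, forall_eq_or_imp]

theorem isValid_ofBlocks {k : ℤ} {f : Bool} {cs : List ℕ} :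
    IsValid m (ofBlocks k f cs) ↔ ∀ x ∈ cs, 1 ≤ x ∧ x < m := by
  cases cs <;> simp [ofBlocks, IsValid]

theorem level_ofBlocks (k : ℤ) (f : Bool) (cs : List ℕ) (t : ℕ) :
    level (ofBlocks k f cs) t = k + (List.countP (fun x => decide (t ≤ x)) cs : ℕ) := by
  cases cs <;> simp [ofBlocks, level]

theorem IsValid.mulPos (hm : 2 ≤ m) (z : Bool) (h : IsValid m s) : IsValid m (mulPos m z s) := by
  cases s with
  | deltaPow k => exact isValid_blocks.2 ⟨by omega, by simp⟩
  | blocks k f c cs =>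
    rw [isValid_blocks] at h
    simp only [GarsideForm.mulPos]
    split_ifs
    · exact isValid_blocks.2 ⟨by omega, List.forall_mem_cons.2 h⟩
    · exact isValid_ofBlocks.2 h.2
    · exact isValid_blocks.2 ⟨by omega, h.2⟩

theorem IsValid.mulNeg (hm : 2 ≤ m) (z : Bool) (h : IsValid m s) : IsValid m (mulNeg m z s) := by
  cases s with
  | deltaPow k => exact isValid_blocks.2 ⟨by omega, by simp⟩
  | blocks k f c cs =>
    rw [isValid_blocks] at h
    simp only [GarsideForm.mulNeg]
    split_ifs
    · exact isValid_ofBlocks.2 h.2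
    · exact isValid_blocks.2 ⟨by omega, h.2⟩
    · exact isValid_blocks.2 ⟨by omega, List.forall_mem_cons.2 h⟩

theorem IsValid.act (hm : 2 ≤ m) (a : Bool × Bool) (h : IsValid m s) : IsValid m (act m a s) := by
  unfold GarsideForm.act
  split_ifs
  · exact h.mulPos hm _
  · exact h.mulNeg hm _

theorem IsValid.iterate_act (hm : 2 ≤ m) (a : Bool × Bool) (r : ℕ) (h : IsValid m s) :
    IsValid m ((GarsideForm.act m a)^[r] s) := by
  induction r with
  | zero => exact h
  | succ r ih =>
    rw [Function.iterate_succ_apply']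
    exact ih.act hm a

theorem mulNeg_mulPos (z : Bool) (h : IsValid m s) : mulNeg m z (mulPos m z s) = s := by
  cases s with
  | deltaPow k => simp [mulPos, mulNeg, ofBlocks]
  | blocks k f c cs =>
    obtain ⟨hc, -⟩ := isValid_blocks.1 h
    obtain rfl | rfl := Bool.eq_or_eq_not f z
    · simp [mulPos, mulNeg, ofBlocks]
    · by_cases hcm : c + 1 = m
      · have hm1 : m - 1 = c := by omega
        cases cs <;> simp [mulPos, mulNeg, ofBlocks, hcm, hm1]
      · simp [mulPos, mulNeg, hcm, show c ≠ 0 by omega]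

theorem mulPos_mulNeg (hm : 1 ≤ m) (z : Bool) (h : IsValid m s) :
    mulPos m z (mulNeg m z s) = s := by
  have hm1 : m - 1 + 1 = m := by omega
  cases s with
  | deltaPow k => simp [mulPos, mulNeg, ofBlocks, hm1]
  | blocks k f c cs =>
    obtain ⟨hc, -⟩ := isValid_blocks.1 h
    obtain rfl | rfl := Bool.eq_or_eq_not f z
    · obtain rfl | hc1 := eq_or_ne c 1
      · cases cs <;> simp [mulPos, mulNeg, ofBlocks]
      · simp [mulPos, mulNeg, hc1, show c - 1 + 1 = c by omega, show c ≠ m by omega]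
    · simp [mulPos, mulNeg, ofBlocks, hm1]

theorem act_not_act (hm : 1 ≤ m) (z σ : Bool) (h : IsValid m s) :
    act m (z, !σ) (act m (z, σ) s) = s := by
  cases σ
  · simpa [act] using mulPos_mulNeg hm z h
  · simpa [act] using mulNeg_mulPos z h

theorem act_act_not (hm : 1 ≤ m) (z σ : Bool) (h : IsValid m s) :
    act m (z, σ) (act m (z, !σ) s) = s := by
  simpa only [Bool.not_not] using act_not_act hm z (!σ) h

theorem act_injOn (hm : 1 ≤ m) (a : Bool × Bool) : Set.InjOn (act m a) {s | IsValid m s} := by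
  intro s h s' h' e
  rw [← act_not_act hm a.1 a.2 h, ← act_not_act hm a.1 a.2 h', Prod.mk.eta, e]

theorem level_antitone (s : GarsideForm) : Antitone (level s) := by
  intro t t' h
  cases s with
  | deltaPow k => exact le_rfl
  | blocks k f c cs =>
    have hle : List.countP (fun x => decide (t' ≤ x)) (c :: cs) ≤
        List.countP (fun x => decide (t ≤ x)) (c :: cs) :=
      List.countP_mono_left fun x _ hx => decide_eq_true (h.trans (of_decide_eq_true hx))
    simp only [level]
    omega

theorem level_succ_lt_level (k : ℤ) (f : Bool) (c : ℕ) (cs : List ℕ) :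
    level (blocks k f c cs) (c + 1) < level (blocks k f c cs) c := by
  have hle : List.countP (fun x => decide (c + 1 ≤ x)) cs ≤
      List.countP (fun x => decide (c ≤ x)) cs :=
    List.countP_mono_left fun x _ hx => by
      simp only [decide_eq_true_eq] at hx ⊢
      omega
  have hc : ¬ c + 1 ≤ c := by omega
  simp only [level, List.countP_cons, hc, le_refl, decide_true, decide_false, if_true,
    Bool.false_eq_true, if_false]
  omega

theorem level_mulPos (z : Bool) (h : IsValid m s) {t : ℕ} (ht : 1 ≤ t) (htm : t ≤ m) :
    level (mulPos m z s) t = level s t + if t = raisedLevel z s then 1 else 0 := by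
  have le_succ_iff (c : ℕ) : t ≤ c + 1 ↔ t ≤ c ∨ t = c + 1 := by omega
  have le_one_iff : t ≤ 1 ↔ t = 1 := by omega
  cases s with
  | deltaPow k =>
    by_cases h1 : t = 1 <;> simp [mulPos, level, raisedLevel, le_one_iff, h1]
  | blocks k f c cs =>
    obtain ⟨hc, -⟩ := isValid_blocks.1 h
    obtain rfl | rfl := Bool.eq_or_eq_not f z
    · by_cases h1 : t = 1 <;> simp [mulPos, level, raisedLevel, List.countP_cons, le_one_iff, h1]
      ring
    · by_cases hcm : c + 1 = m
      · simp only [mulPos, raisedLevel, hcm, Bool.eq_not_self, if_false, if_true, level_ofBlocks]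
        obtain rfl | hne := eq_or_ne t m
        · simp [level, show ¬ t ≤ c by omega]
          ring
        · simp [level, hne, show t ≤ c by omega]
          ring
      · obtain rfl | hne := eq_or_ne t (c + 1)
        · simp [mulPos, level, raisedLevel, hcm]
          ring
        · simp [mulPos, level, raisedLevel, List.countP_cons, hcm, hne, le_succ_iff]

theorem raisedLevel_mem_Icc (hm : 1 ≤ m) (z : Bool) (h : IsValid m s) :
    raisedLevel z s ∈ Finset.Icc 1 m := by
  rw [Finset.mem_Icc]
  cases s with
  | deltaPow k => exact ⟨le_rfl, hm⟩
  | blocks k f c cs =>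
    obtain ⟨hc, -⟩ := isValid_blocks.1 h
    simp only [raisedLevel]
    split_ifs <;> omega

theorem loweredLevel_mem_Icc (hm : 1 ≤ m) (z : Bool) (h : IsValid m s) :
    loweredLevel m z s ∈ Finset.Icc 1 m := by
  rw [Finset.mem_Icc]
  cases s with
  | deltaPow k => exact ⟨hm, le_rfl⟩
  | blocks k f c cs =>
    obtain ⟨hc, -⟩ := isValid_blocks.1 h
    simp only [loweredLevel]
    split_ifs <;> omega

theorem raisedLevel_mulNeg (hm : 1 ≤ m) (z : Bool) (h : IsValid m s) :
    raisedLevel z (mulNeg m z s) = loweredLevel m z s := by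
  have hm1 : m - 1 + 1 = m := by omega
  cases s with
  | deltaPow k => simp [raisedLevel, loweredLevel, mulNeg, hm1]
  | blocks k f c cs =>
    obtain ⟨hc, -⟩ := isValid_blocks.1 h
    obtain rfl | rfl := Bool.eq_or_eq_not f z
    · obtain rfl | hc1 := eq_or_ne c 1
      · cases cs <;> simp [mulNeg, loweredLevel, ofBlocks, raisedLevel]
      · simp [mulNeg, loweredLevel, raisedLevel, hc1, show c - 1 + 1 = c by omega]
    · simp [mulNeg, loweredLevel, raisedLevel, hm1]

theorem level_mulNeg (hm : 2 ≤ m) (z : Bool) (h : IsValid m s) {t : ℕ} (ht : 1 ≤ t)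
    (htm : t ≤ m) :
    level (mulNeg m z s) t = level s t - if t = loweredLevel m z s then 1 else 0 := by
  have hpos := level_mulPos z (h.mulNeg hm z) ht htm
  rw [mulPos_mulNeg (by omega) z h, raisedLevel_mulNeg (by omega) z h] at hpos
  omega

theorem sum_natAbs_add_single {ι : Type*} [DecidableEq ι] {S : Finset ι} {κ κ' : ι → ℤ} {i : ι}
    (hi : i ∈ S) (h : ∀ t ∈ S, κ' t = κ t + if t = i then 1 else 0) :
    (0 ≤ κ i → ∑ t ∈ S, (κ' t).natAbs = ∑ t ∈ S, (κ t).natAbs + 1) ∧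
    (κ i < 0 → ∑ t ∈ S, (κ t).natAbs = ∑ t ∈ S, (κ' t).natAbs + 1) := by
  have hrest : ∑ t ∈ S.erase i, (κ' t).natAbs = ∑ t ∈ S.erase i, (κ t).natAbs :=
    Finset.sum_congr rfl fun t ht => by
      rw [h t (Finset.mem_of_mem_erase ht), if_neg (Finset.ne_of_mem_erase ht), add_zero]
  have hκ : κ' i = κ i + 1 := by rw [h i hi, if_pos rfl]
  rw [← Finset.add_sum_erase S _ hi, ← Finset.add_sum_erase S _ hi, hrest]
  omega

theorem length_mulPos (hm : 1 ≤ m) (z : Bool) (h : IsValid m s) :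
    (0 ≤ level s (raisedLevel z s) → length m (mulPos m z s) = length m s + 1) ∧
    (level s (raisedLevel z s) < 0 → length m s = length m (mulPos m z s) + 1) :=
  sum_natAbs_add_single (raisedLevel_mem_Icc hm z h) fun _ ht =>
    level_mulPos z h (Finset.mem_Icc.1 ht).1 (Finset.mem_Icc.1 ht).2

theorem length_mulNeg (hm : 2 ≤ m) (z : Bool) (h : IsValid m s) :
    (1 ≤ level s (loweredLevel m z s) → length m s = length m (mulNeg m z s) + 1) ∧
    (level s (loweredLevel m z s) < 1 → length m (mulNeg m z s) = length m s + 1) := by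
  have hm1 : 1 ≤ m := by omega
  obtain ⟨hlo, hhi⟩ := Finset.mem_Icc.1 (loweredLevel_mem_Icc hm1 z h)
  have hpos := length_mulPos hm1 z (h.mulNeg hm z)
  rw [mulPos_mulNeg hm1 z h, raisedLevel_mulNeg hm1 z h, level_mulNeg hm z h hlo hhi,
    if_pos rfl] at hpos
  omega

/-- The letter `a` is the first letter of a geodesic word for the form `s`. -/
def IsFirst (m : ℕ) (a : Bool × Bool) (s : GarsideForm) : Prop :=
  length m (act m (a.1, !a.2) s) < length m s

theorem isFirst_true_iff (hm : 2 ≤ m) (z : Bool) (h : IsValid m s) :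
    IsFirst m (z, true) s ↔ 1 ≤ level s (loweredLevel m z s) := by
  have hlen := length_mulNeg hm z h
  change length m (mulNeg m z s) < length m s ↔ _
  omega

theorem isFirst_false_iff (hm : 1 ≤ m) (z : Bool) (h : IsValid m s) :
    IsFirst m (z, false) s ↔ level s (raisedLevel z s) < 0 := by
  have hlen := length_mulPos hm z h
  change length m (mulPos m z s) < length m s ↔ _
  omega

theorem length_act (hm : 2 ≤ m) (a : Bool × Bool) (h : IsValid m s) :
    length m (act m a s) = length m s + 1 ∨ length m s = length m (act m a s) + 1 := by
  obtain ⟨z, _ | _⟩ := a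
  · have hlen := length_mulNeg hm z h
    change length m (mulNeg m z s) = _ ∨ _ = length m (mulNeg m z s) + 1
    omega
  · have hlen := length_mulPos (by omega) z h
    change length m (mulPos m z s) = _ ∨ _ = length m (mulPos m z s) + 1
    omega

theorem isFirst_iff (hm : 2 ≤ m) (a : Bool × Bool) (h : IsValid m s) :
    IsFirst m a s ↔ length m s = length m (act m (a.1, !a.2) s) + 1 := by
  have hlen := length_act hm (a.1, !a.2) h
  unfold IsFirst
  omega

theorem not_isFirst_not (hm : 2 ≤ m) (z σ : Bool) (h : IsValid m s) (h₁ : IsFirst m (z, σ) s) :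
    ¬ IsFirst m (z, !σ) s := by
  suffices key : IsFirst m (z, true) s → ¬ IsFirst m (z, false) s by
    cases σ
    · exact fun h₂ => key h₂ h₁
    · exact key h₁
  rw [isFirst_true_iff hm z h, isFirst_false_iff (by omega) z h]
  suffices level s (loweredLevel m z s) ≤ level s (raisedLevel z s) by omega
  cases s with
  | deltaPow k => exact le_rfl
  | blocks k f c cs =>
    obtain ⟨hc, -⟩ := isValid_blocks.1 h
    simp only [loweredLevel, raisedLevel]
    split_ifs
    · exact level_antitone _ hc.1
    · exact level_antitone _ (show c + 1 ≤ m by omega)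

theorem level_blocks_ne_zero {k : ℤ} {f σ τ : Bool} {c : ℕ} {cs : List ℕ} (hm : 2 ≤ m)
    (h : IsValid m (blocks k f c cs)) (h₁ : IsFirst m (f, σ) (blocks k f c cs))
    (h₂ : IsFirst m (!f, τ) (blocks k f c cs)) {t : ℕ} (ht : 1 ≤ t) (htm : t ≤ m) :
    level (blocks k f c cs) t ≠ 0 := by
  have hle1 := level_antitone (blocks k f c cs) ht
  have hlem := level_antitone (blocks k f c cs) htm
  cases σ
  · rw [isFirst_false_iff (by omega) _ h] at h₁
    simp only [raisedLevel, if_true] at h₁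
    omega
  · cases τ
    · rw [isFirst_true_iff hm _ h] at h₁
      rw [isFirst_false_iff (by omega) _ h] at h₂
      simp only [loweredLevel, if_true] at h₁
      simp only [raisedLevel, Bool.not_eq_eq_eq_not, Bool.eq_not_self, if_false] at h₂
      rcases le_or_gt t c with htc | htc
      · have := level_antitone (blocks k f c cs) htc
        omega
      · have := level_antitone (blocks k f c cs) (show c + 1 ≤ t from htc)
        omega
    · rw [isFirst_true_iff hm _ h] at h₂
      simp only [loweredLevel, Bool.not_eq_eq_eq_not, Bool.eq_not_self, if_false] at h₂
      omega

theorem level_ne_zero_of_isFirst_of_isFirst_not (hm : 2 ≤ m) {z σ τ : Bool} (h : IsValid m s)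
    (h₁ : IsFirst m (z, σ) s) (h₂ : IsFirst m (!z, τ) s) {t : ℕ} (ht : 1 ≤ t) (htm : t ≤ m) :
    level s t ≠ 0 := by
  cases s with
  | deltaPow k =>
    cases σ
    · exact ((isFirst_false_iff (by omega) z h).1 h₁).ne
    · exact (zero_lt_one.trans_le ((isFirst_true_iff hm z h).1 h₁)).ne'
  | blocks k f c cs =>
    obtain rfl | rfl := Bool.eq_or_eq_not z f
    · exact level_blocks_ne_zero hm h h₁ h₂ ht htm
    · rw [Bool.not_not] at h₂
      exact level_blocks_ne_zero hm h h₂ h₁ ht htm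

theorem length_eq_zero_iff (hm : 1 ≤ m) (h : IsValid m s) : length m s = 0 ↔ s = deltaPow 0 := by
  constructor
  · intro h0
    simp only [length, Finset.sum_eq_zero_iff, Finset.mem_Icc, Int.natAbs_eq_zero] at h0
    cases s with
    | deltaPow k => rw [show k = 0 from h0 1 ⟨le_rfl, hm⟩]
    | blocks k f c cs =>
      obtain ⟨hc, -⟩ := isValid_blocks.1 h
      have hlt := level_succ_lt_level k f c cs
      rw [h0 c (by omega), h0 (c + 1) (by omega)] at hlt
      exact absurd hlt (lt_irrefl 0)
  · rintro rfl
    simp [length, level]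

theorem exists_isFirst (hm : 2 ≤ m) (h : IsValid m s) (h0 : length m s ≠ 0) :
    ∃ a, IsFirst m a s := by
  cases s with
  | deltaPow k =>
    have hk : k ≠ 0 := fun hk => h0 ((length_eq_zero_iff (by omega) h).2 (hk ▸ rfl))
    rcases lt_or_gt_of_ne hk with hneg | hpos
    · exact ⟨(true, false), (isFirst_false_iff (by omega) _ h).2 hneg⟩
    · exact ⟨(true, true), (isFirst_true_iff hm _ h).2 hpos⟩
  | blocks k f c cs =>
    have hlt := level_succ_lt_level k f c cs
    rcases lt_or_ge (level (blocks k f c cs) c) 1 with hc | hc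
    · refine ⟨(!f, false), (isFirst_false_iff (by omega) _ h).2 ?_⟩
      simp only [raisedLevel, Bool.not_eq_eq_eq_not, Bool.eq_not_self, if_false]
      omega
    · refine ⟨(f, true), (isFirst_true_iff hm _ h).2 ?_⟩
      simpa only [loweredLevel, if_true] using hc

/-- The number of nonzero levels among `1, …, m`. It grows by at most one with every syllable. -/
def nonzeroLevels (m : ℕ) (s : GarsideForm) : ℕ :=
  ((Finset.Icc 1 m).filter (fun t => level s t ≠ 0)).card

theorem raisedLevel_mulPos_eq_one {z : Bool} (h : IsValid m s) (h1 : raisedLevel z s = 1) :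
    raisedLevel z (mulPos m z s) = 1 := by
  cases s with
  | deltaPow k => simp [mulPos, raisedLevel]
  | blocks k f c cs =>
    obtain ⟨hc, -⟩ := isValid_blocks.1 h
    simp only [raisedLevel] at h1
    split_ifs at h1 with hz
    · simp [mulPos, raisedLevel, hz]
    · omega

theorem loweredLevel_mulNeg_eq {z : Bool} (h : IsValid m s) (h1 : loweredLevel m z s = m) :
    loweredLevel m z (mulNeg m z s) = m := by
  cases s with
  | deltaPow k => simp [mulNeg, loweredLevel]
  | blocks k f c cs =>
    obtain ⟨hc, -⟩ := isValid_blocks.1 h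
    simp only [loweredLevel] at h1
    split_ifs at h1 with hz
    · omega
    · simp [mulNeg, loweredLevel, hz]

-- The level drops strictly after the first block length `c`, so `c` cannot separate two levels that
-- are both zero. Hence of `t < t'` only `t` can be raised, and from then on only level `1` is.
theorem zero_levels_mulPos (z : Bool) (h : IsValid m s) {t t' : ℕ} (ht : 1 ≤ t) (htt' : t < t')
    (ht' : t' ≤ m) (hzero : level s t' = 0 ∧ (level s t = 0 ∨ raisedLevel z s = 1)) :
    level (mulPos m z s) t' = 0 ∧
      (level (mulPos m z s) t = 0 ∨ raisedLevel z (mulPos m z s) = 1) := by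
  obtain ⟨hz', hz⟩ := hzero
  rw [level_mulPos z h (by omega) ht', level_mulPos z h ht (by omega), hz']
  by_cases hr : raisedLevel z s = 1
  · rw [hr, if_neg (by omega)]
    exact ⟨rfl, Or.inr (raisedLevel_mulPos_eq_one h hr)⟩
  · replace hz := hz.resolve_right hr
    cases s with
    | deltaPow k => exact absurd rfl hr
    | blocks k f c cs =>
      have hzf : z ≠ f := fun e => hr (by simp [raisedLevel, e])
      have hlt := level_succ_lt_level k f c cs
      have hnotsep : ¬ (t ≤ c ∧ c + 1 ≤ t') := fun ⟨h₁, h₂⟩ => by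
        have := level_antitone (blocks k f c cs) h₁
        have := level_antitone (blocks k f c cs) h₂
        omega
      simp only [raisedLevel, hzf, if_false]
      rw [if_neg (by omega)]
      refine ⟨rfl, ?_⟩
      obtain rfl | hne := eq_or_ne t (c + 1)
      · right
        simp [mulPos, hzf, show c + 1 ≠ m by omega]
      · left
        rw [hz, if_neg hne, add_zero]

theorem zero_levels_mulNeg (hm : 2 ≤ m) (z : Bool) (h : IsValid m s) {t t' : ℕ} (ht : 1 ≤ t)
    (htt' : t < t') (ht' : t' ≤ m)
    (hzero : level s t = 0 ∧ (level s t' = 0 ∨ loweredLevel m z s = m)) :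
    level (mulNeg m z s) t = 0 ∧
      (level (mulNeg m z s) t' = 0 ∨ loweredLevel m z (mulNeg m z s) = m) := by
  obtain ⟨hz, hz'⟩ := hzero
  rw [level_mulNeg hm z h (by omega) ht', level_mulNeg hm z h ht (by omega), hz]
  by_cases hl : loweredLevel m z s = m
  · rw [hl, if_neg (by omega)]
    exact ⟨rfl, Or.inr (loweredLevel_mulNeg_eq h hl)⟩
  · replace hz' := hz'.resolve_right hl
    cases s with
    | deltaPow k => exact absurd rfl hl
    | blocks k f c cs =>
      have hzf : z = f := by
        by_contra hzf
        exact hl (by simp [loweredLevel, hzf])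
      have hlt := level_succ_lt_level k f c cs
      have hnotsep : ¬ (t ≤ c ∧ c + 1 ≤ t') := fun ⟨h₁, h₂⟩ => by
        have := level_antitone (blocks k f c cs) h₁
        have := level_antitone (blocks k f c cs) h₂
        omega
      simp only [loweredLevel, hzf, if_true]
      rw [if_neg (by omega)]
      refine ⟨rfl, ?_⟩
      obtain rfl | hne := eq_or_ne t' c
      · right
        simp [mulNeg, show t' ≠ 1 by omega]
      · left
        rw [hz', if_neg hne, sub_zero]

theorem level_iterate_act_eq_zero (hm : 2 ≤ m) (a : Bool × Bool) (r : ℕ) (h : IsValid m s)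
    {t t' : ℕ} (ht : 1 ≤ t) (htt' : t < t') (ht' : t' ≤ m) (hz : level s t = 0)
    (hz' : level s t' = 0) :
    level ((act m a)^[r] s) t = 0 ∨ level ((act m a)^[r] s) t' = 0 := by
  obtain ⟨z, _ | _⟩ := a
  · suffices ∀ r, level ((act m (z, false))^[r] s) t = 0 ∧
        (level ((act m (z, false))^[r] s) t' = 0 ∨
          loweredLevel m z ((act m (z, false))^[r] s) = m) from Or.inl (this r).1
    intro r
    induction r with
    | zero => exact ⟨hz, Or.inl hz'⟩
    | succ r ih =>
      rw [Function.iterate_succ_apply']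
      exact zero_levels_mulNeg hm z (h.iterate_act hm _ r) ht htt' ht' ih
  · suffices ∀ r, level ((act m (z, true))^[r] s) t' = 0 ∧
        (level ((act m (z, true))^[r] s) t = 0 ∨
          raisedLevel z ((act m (z, true))^[r] s) = 1) from Or.inr (this r).1
    intro r
    induction r with
    | zero => exact ⟨hz', Or.inl hz⟩
    | succ r ih =>
      rw [Function.iterate_succ_apply']
      exact zero_levels_mulPos z (h.iterate_act hm _ r) ht htt' ht' ih

theorem nonzeroLevels_iterate_act_le (hm : 2 ≤ m) (a : Bool × Bool) (r : ℕ) (h : IsValid m s) :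
    nonzeroLevels m ((act m a)^[r] s) ≤ nonzeroLevels m s + 1 := by
  set s' := (act m a)^[r] s
  let filled := (Finset.Icc 1 m).filter (fun t => level s t = 0 ∧ level s' t ≠ 0)
  have not_both {t t' : ℕ} (ht : t ∈ filled) (ht' : t' ∈ filled) : ¬ t < t' := by
    intro hlt
    simp only [filled, Finset.mem_filter, Finset.mem_Icc] at ht ht'
    exact (level_iterate_act_eq_zero hm a r h ht.1.1 hlt ht'.1.2 ht.2.1 ht'.2.1).elim
      ht.2.2 ht'.2.2
  have hfilled : filled.card ≤ 1 := Finset.card_le_one.2 fun t ht t' ht' =>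
    le_antisymm (not_lt.1 (not_both ht' ht)) (not_lt.1 (not_both ht ht'))
  have hsub : (Finset.Icc 1 m).filter (fun t => level s' t ≠ 0) ⊆
      (Finset.Icc 1 m).filter (fun t => level s t ≠ 0) ∪ filled := by
    intro t ht
    simp only [filled, Finset.mem_union, Finset.mem_filter] at ht ⊢
    tauto
  calc nonzeroLevels m s'
      ≤ ((Finset.Icc 1 m).filter (fun t => level s t ≠ 0) ∪ filled).card :=
        Finset.card_le_card hsub
    _ ≤ nonzeroLevels m s + filled.card := Finset.card_union_le _ _
    _ ≤ nonzeroLevels m s + 1 := Nat.add_le_add_left hfilled _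

theorem exists_syllable (hm : 2 ≤ m) {z σ : Bool} (h : IsValid m s) (hF : IsFirst m (z, σ) s) :
    ∃ r s', 1 ≤ r ∧ IsValid m s' ∧ s = (act m (z, σ))^[r] s' ∧ length m s = r + length m s' ∧
      ∀ τ, ¬ IsFirst m (z, τ) s' := by
  induction hN : length m s using Nat.strong_induction_on generalizing s with
  | _ N ih =>
    have hlen : length m s = length m (act m (z, !σ) s) + 1 := (isFirst_iff hm _ h).1 hF
    have hv : IsValid m (act m (z, !σ) s) := h.act hm _
    have hback : act m (z, σ) (act m (z, !σ) s) = s := act_act_not (by omega) z σ h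
    by_cases hF' : IsFirst m (z, σ) (act m (z, !σ) s)
    · obtain ⟨r, s', hr, hv', he, hL, hno⟩ := ih _ (by omega) hv hF' rfl
      refine ⟨r + 1, s', by omega, hv', ?_, by omega, hno⟩
      rw [Function.iterate_succ_apply', ← he, hback]
    · refine ⟨1, _, le_rfl, hv, hback.symm, by omega, fun τ hτ => ?_⟩
      obtain rfl | rfl := Bool.eq_or_eq_not τ σ
      · exact hF' hτ
      · have hlen' := (isFirst_iff hm _ hv).1 hτ
        simp only [Bool.not_not, hback] at hlen'
        omega

/-- At least `k` syllables, starting with a power of `x z` and on alternating generators, can be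
split off `s` on the left; each is maximal and the lengths add up. -/
def HasSyllables (m : ℕ) : ℕ → Bool → GarsideForm → Prop
  | 0, _, _ => True
  | k + 1, z, s => ∃ σ r s', 1 ≤ r ∧ IsValid m s' ∧ s = (act m (z, σ))^[r] s' ∧
      length m s = r + length m s' ∧ (∀ τ, ¬ IsFirst m (z, τ) s') ∧ HasSyllables m k (!z) s'

theorem HasSyllables.mono {k k' : ℕ} (hk : k ≤ k') {z : Bool} (h : HasSyllables m k' z s) :
    HasSyllables m k z s := by
  induction k generalizing k' z s with
  | zero => trivial
  | succ k ih =>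
    obtain ⟨k', rfl⟩ : ∃ l, k' = l + 1 := Nat.exists_eq_succ_of_ne_zero (by omega)
    obtain ⟨σ, r, s', hr, hv, he, hL, hno, hrest⟩ := h
    exact ⟨σ, r, s', hr, hv, he, hL, hno, ih (Nat.le_of_succ_le_succ hk) hrest⟩

theorem IsFirst.hasSyllables (hm : 2 ≤ m) {z σ : Bool} (h : IsValid m s)
    (hF : IsFirst m (z, σ) s) : HasSyllables m (nonzeroLevels m s) z s := by
  induction hN : length m s using Nat.strong_induction_on generalizing s z σ with
  | _ N ih =>
    obtain ⟨r, s', hr, hv', he, hL, hno⟩ := exists_syllable hm h hF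
    have hle : nonzeroLevels m s ≤ nonzeroLevels m s' + 1 :=
      he ▸ nonzeroLevels_iterate_act_le hm (z, σ) r hv'
    refine HasSyllables.mono hle ⟨σ, r, s', hr, hv', he, hL, hno, ?_⟩
    by_cases h0 : length m s' = 0
    · have hnz : nonzeroLevels m s' = 0 := by
        rw [(length_eq_zero_iff (by omega) hv').1 h0]
        simp [nonzeroLevels, level]
      rw [hnz]
      trivial
    · obtain ⟨⟨z', τ⟩, hz'⟩ := exists_isFirst hm hv' h0
      obtain rfl | rfl := Bool.eq_or_eq_not z' z
      · exact absurd hz' (hno τ)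
      · exact ih _ (by omega) hv' hz' rfl

theorem hasSyllables_of_isFirst_of_isFirst_not (hm : 2 ≤ m) {z σ τ : Bool} (h : IsValid m s)
    (h₁ : IsFirst m (z, σ) s) (h₂ : IsFirst m (!z, τ) s) : HasSyllables m m z s := by
  have hcard : nonzeroLevels m s = m := by
    unfold nonzeroLevels
    rw [Finset.filter_true_of_mem fun t ht => level_ne_zero_of_isFirst_of_isFirst_not hm h h₁ h₂
      (Finset.mem_Icc.1 ht).1 (Finset.mem_Icc.1 ht).2, Nat.card_Icc, Nat.add_sub_cancel]
  simpa only [hcard] using h₁.hasSyllables hm h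

/-- The form with the two generators exchanged. -/
def swap : GarsideForm → GarsideForm
  | deltaPow k => deltaPow k
  | blocks k f c cs => blocks k (!f) c cs

theorem swap_ofBlocks (k : ℤ) (f : Bool) (cs : List ℕ) :
    swap (ofBlocks k f cs) = ofBlocks k (!f) cs := by
  cases cs <;> simp [ofBlocks, swap]

theorem swap_act (m : ℕ) (z σ : Bool) (s : GarsideForm) :
    swap (act m (z, σ) s) = act m (!z, σ) (swap s) := by
  have swap_blocks (k f c cs) : swap (blocks k f c cs) = blocks k (!f) c cs := rfl
  cases s with
  | deltaPow k => cases σ <;> simp [act, mulPos, mulNeg, swap]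
  | blocks k f c cs =>
    rw [swap_blocks]
    cases σ
    · by_cases hc : c = 1 <;> cases z <;> cases f <;>
        simp [act, mulNeg, swap_blocks, swap_ofBlocks, hc]
    · by_cases hc : c + 1 = m <;> cases z <;> cases f <;>
        simp [act, mulPos, swap_blocks, swap_ofBlocks, hc]

theorem length_swap (m : ℕ) (s : GarsideForm) : length m (swap s) = length m s := by
  cases s <;> simp [swap, length, level]

end GarsideForm

/-! ### Evaluation of Garside normal forms -/

theorem iterate_not_iterate_not (n : ℕ) (z : Bool) : not^[n] (not^[n] z) = z :=
  Function.LeftInverse.iterate Bool.not_not n z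

theorem iterate_not_add_two (n : ℕ) (z : Bool) : not^[n + 2] z = not^[n] z := by
  simp only [Function.iterate_succ_apply, Bool.not_not]

theorem iterate_not_not (n : ℕ) (z : Bool) : not^[n] (!z) = !not^[n] z :=
  ((Function.Commute.refl not).iterate_left n).eq z

namespace GarsideForm

/-- Left multiplication by the alternating word of length `n` that ends with `x z`. -/
def mulAlternating (m : ℕ) : ℕ → Bool → GarsideForm → GarsideForm
  | 0, _, s => s
  | n + 1, z, s => mulAlternating m n (!z) (mulPos m z s)

theorem mulAlternating_add (m a b : ℕ) (z : Bool) (s : GarsideForm) :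
    mulAlternating m (a + b) z s = mulAlternating m b (not^[a] z) (mulAlternating m a z s) := by
  induction a generalizing z s with
  | zero => simp [mulAlternating]
  | succ a ih =>
    rw [Nat.add_right_comm, mulAlternating, ih, Function.iterate_succ_apply, mulAlternating]

theorem mulAlternating_blocks_not {m n c : ℕ} (h : c + n < m) (z : Bool) (k : ℤ)
    (cs : List ℕ) :
    mulAlternating m n z (blocks k (!z) c cs) = blocks k (!not^[n] z) (c + n) cs := by
  induction n generalizing z c with
  | zero => simp [mulAlternating]
  | succ n ih =>
    have hmul : mulPos m z (blocks k (!z) c cs) = blocks k (!!z) (c + 1) cs := by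
      simp [mulPos, show c + 1 ≠ m by omega]
    rw [mulAlternating, hmul, ih (by omega), Function.iterate_succ_apply, Nat.add_right_comm,
      Nat.add_assoc]

theorem mulAlternating_ofBlocks {m n : ℕ} (h : n + 1 < m) (z : Bool) (k : ℤ) (cs : List ℕ) :
    mulAlternating m (n + 1) z (ofBlocks k z cs) = blocks k (not^[n] z) (n + 1) cs := by
  have hmul : mulPos m z (ofBlocks k z cs) = blocks k (!!z) 1 cs := by
    cases cs <;> simp [mulPos, ofBlocks]
  rw [mulAlternating, hmul, mulAlternating_blocks_not (by omega), iterate_not_not, Bool.not_not,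
    add_comm]

theorem mulAlternating_delta_ofBlocks {m : ℕ} (hm : 2 ≤ m) (z : Bool) (k : ℤ) (cs : List ℕ) :
    mulAlternating m m z (ofBlocks k z cs) = ofBlocks (k + 1) (not^[m] z) cs := by
  obtain ⟨n, rfl⟩ := Nat.exists_eq_add_of_le' hm
  rw [mulAlternating_add (n + 2) (n + 1) 1, mulAlternating_ofBlocks (by omega),
    iterate_not_add_two, Function.iterate_succ_apply']
  simp [mulAlternating, mulPos]

theorem mulAlternating_delta_blocks_not {m c : ℕ} (hc : 1 ≤ c) (hcm : c < m) (z : Bool) (k : ℤ)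
    (cs : List ℕ) :
    mulAlternating m m z (blocks k (!z) c cs) = blocks (k + 1) (not^[m] (!z)) c cs := by
  obtain ⟨b, rfl⟩ := Nat.exists_eq_add_of_lt hcm
  obtain ⟨d, rfl⟩ := Nat.exists_eq_add_of_le' hc
  set m := d + 1 + b + 1 with hmdef
  have hcomplete : mulAlternating m 1 (not^[b] z) (blocks k (!not^[b] z) (d + 1 + b) cs) =
      ofBlocks (k + 1) (not^[b + 1] z) cs := by
    rw [Function.iterate_succ_apply']
    simp [mulAlternating, mulPos, hmdef]
  calc mulAlternating m m z (blocks k (!z) (d + 1) cs)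
      = mulAlternating m (d + 1) (not^[b + 1] z)
          (mulAlternating m (b + 1) z (blocks k (!z) (d + 1) cs)) := by
        rw [← mulAlternating_add m (b + 1) (d + 1), show b + 1 + (d + 1) = m by omega]
    _ = mulAlternating m (d + 1) (not^[b + 1] z) (ofBlocks (k + 1) (not^[b + 1] z) cs) := by
        rw [mulAlternating_add m b 1, mulAlternating_blocks_not (by omega), hcomplete]
    _ = blocks (k + 1) (not^[m] (!z)) (d + 1) cs := by
        rw [mulAlternating_ofBlocks (by omega), ← Function.iterate_add_apply,
          ← Function.iterate_succ_apply, show m.succ = d + (b + 1) + 2 by omega,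
          iterate_not_add_two]

theorem mulAlternating_delta_not {m : ℕ} (hm : 2 ≤ m) (z : Bool) {s : GarsideForm}
    (h : IsValid m s) : mulAlternating m m z s = mulAlternating m m (!z) s := by
  suffices key : ∀ z, mulAlternating m m z s = match s with
      | deltaPow k => deltaPow (k + 1)
      | blocks k f c cs => blocks (k + 1) (not^[m] f) c cs by rw [key, key]
  intro z
  cases s with
  | deltaPow k => exact mulAlternating_delta_ofBlocks hm z k []
  | blocks k f c cs =>
    obtain ⟨⟨hc, hcm⟩, -⟩ := isValid_blocks.1 h
    obtain rfl | rfl := Bool.eq_or_eq_not f z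
    · exact mulAlternating_delta_ofBlocks hm f k (c :: cs)
    · exact mulAlternating_delta_blocks_not hc hcm z k cs

section Eval

variable {Γ : Type*} [Group Γ]

/-- The product of the alternating words in `X` of lengths `cs`, the first starting with `X f`,
followed by the `k`-th power of the alternating word `Δ` of length `m`. -/
def evalBlocks (m : ℕ) (X : Bool → Γ) (k : ℤ) : Bool → List ℕ → Γ
  | _, [] => (altProd m (X true) (X false)) ^ k
  | f, c :: cs => altProd c (X f) (X (!f)) * evalBlocks m X k (not^[c + 1] f) cs

/-- The value of a form in a group with two distinguished elements `X true` and `X false`. -/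
def eval (m : ℕ) (X : Bool → Γ) : GarsideForm → Γ
  | deltaPow k => evalBlocks m X k true []
  | blocks k f c cs => evalBlocks m X k f (c :: cs)

/-- The value of a signed letter; the second component is the sign, `true` being `+`. -/
def letterEval (X : Bool → Γ) (a : Bool × Bool) : Γ := if a.2 then X a.1 else (X a.1)⁻¹

theorem eval_ofBlocks (m : ℕ) (X : Bool → Γ) (k : ℤ) (f : Bool) (cs : List ℕ) :
    eval m X (ofBlocks k f cs) = evalBlocks m X k f cs := by
  cases cs <;> rfl

theorem altProd_succ_right (X : Bool → Γ) (n : ℕ) (w : Bool) :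
    altProd (n + 1) (X w) (X (!w)) = altProd n (X w) (X (!w)) * X (not^[n] w) := by
  induction n generalizing w with
  | zero => simp [altProd]
  | succ n ih =>
    have ih := ih (!w)
    rw [Bool.not_not] at ih
    rw [altProd, ih, ← mul_assoc, Function.iterate_succ_apply, altProd]

variable {m : ℕ} {X : Bool → Γ}

theorem altProd_eq_delta
    (hX : altProd m (X true) (X false) = altProd m (X false) (X true)) (z : Bool) :
    altProd m (X z) (X (!z)) = altProd m (X true) (X false) := by
  cases z
  · exact hX.symm
  · rfl

theorem delta_mul_gen (hX : altProd m (X true) (X false) = altProd m (X false) (X true))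
    (z : Bool) : altProd m (X true) (X false) * X z =
      X (not^[m] z) * altProd m (X true) (X false) := by
  have hright := altProd_succ_right X m (not^[m] z)
  rw [iterate_not_iterate_not, altProd_eq_delta hX] at hright
  have hleft := altProd_eq_delta hX (!not^[m] z)
  rw [Bool.not_not] at hleft
  rw [← hright, altProd, hleft]

theorem delta_mul_altProd (hX : altProd m (X true) (X false) = altProd m (X false) (X true))
    (c : ℕ) (z : Bool) : altProd m (X true) (X false) * altProd c (X z) (X (!z)) =
      altProd c (X (not^[m] z)) (X (!not^[m] z)) * altProd m (X true) (X false) := by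
  induction c generalizing z with
  | zero => simp [altProd]
  | succ c ih =>
    have ih := ih (!z)
    rw [iterate_not_not, Bool.not_not, Bool.not_not] at ih
    rw [altProd, ← mul_assoc, delta_mul_gen hX, mul_assoc, ih, altProd, mul_assoc]

theorem delta_mul_evalBlocks (hX : altProd m (X true) (X false) = altProd m (X false) (X true))
    (k : ℤ) (f : Bool) (cs : List ℕ) :
    altProd m (X true) (X false) * evalBlocks m X k f cs =
      evalBlocks m X (k + 1) (not^[m] f) cs := by
  induction cs generalizing f with
  | nil => rw [evalBlocks, evalBlocks, zpow_add_one, mul_self_zpow, zpow_add_one]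
  | cons c cs ih =>
    rw [evalBlocks, ← mul_assoc, delta_mul_altProd hX, mul_assoc, ih, evalBlocks,
      ← Function.iterate_add_apply, ← Function.iterate_add_apply, add_comm m]

theorem eval_mulPos (hX : altProd m (X true) (X false) = altProd m (X false) (X true))
    (z : Bool) (s : GarsideForm) : eval m X (mulPos m z s) = X z * eval m X s := by
  cases s with
  | deltaPow k => simp [mulPos, eval, evalBlocks, altProd]
  | blocks k f c cs =>
    obtain rfl | rfl := Bool.eq_or_eq_not f z
    · simp [mulPos, eval, evalBlocks, altProd]
    · have hgrow : X z * altProd c (X !z) (X !!z) = altProd (c + 1) (X z) (X !z) := by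
        rw [altProd, Bool.not_not]
      by_cases hc : c + 1 = m
      · simp only [mulPos, Bool.eq_not_self, if_false, hc, if_true, eval_ofBlocks]
        rw [eval, evalBlocks, ← mul_assoc, hgrow, hc, altProd_eq_delta hX,
          delta_mul_evalBlocks hX, iterate_not_iterate_not]
      · simp only [mulPos, Bool.eq_not_self, if_false, hc, eval, evalBlocks]
        rw [← mul_assoc, hgrow, Function.iterate_succ_apply _ (c + 1)]

theorem eval_act (hm : 1 ≤ m)
    (hX : altProd m (X true) (X false) = altProd m (X false) (X true))
    (a : Bool × Bool) {s : GarsideForm} (h : IsValid m s) :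
    eval m X (act m a s) = letterEval X a * eval m X s := by
  obtain ⟨z, _ | _⟩ := a
  · change eval m X (mulNeg m z s) = (X z)⁻¹ * eval m X s
    rw [eq_inv_mul_iff_mul_eq, ← eval_mulPos hX, mulPos_mulNeg hm z h]
  · exact eval_mulPos hX z s

end Eval

/-- The form represented by a word in signed letters. -/
def ofWord (m : ℕ) (u : List (Bool × Bool)) : GarsideForm := u.foldr (act m) (deltaPow 0)

theorem isValid_ofWord {m : ℕ} (hm : 2 ≤ m) (u : List (Bool × Bool)) :
    IsValid m (ofWord m u) := by
  induction u with
  | nil => trivial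
  | cons a u ih => exact ih.act hm a

theorem eval_ofWord {Γ : Type*} [Group Γ] {m : ℕ} {X : Bool → Γ} (hm : 2 ≤ m)
    (hX : altProd m (X true) (X false) = altProd m (X false) (X true))
    (u : List (Bool × Bool)) : eval m X (ofWord m u) = (u.map (letterEval X)).prod := by
  induction u with
  | nil => exact zpow_zero _
  | cons a u ih =>
    rw [List.map_cons, List.prod_cons, ← ih]
    exact eval_act (by omega) hX a (isValid_ofWord hm u)

/-- Left multiplication by the generator `x z`, as a permutation of the valid forms. -/
def genPerm {m : ℕ} (hm : 2 ≤ m) (z : Bool) : Equiv.Perm {s : GarsideForm // IsValid m s} where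
  toFun s := ⟨mulPos m z s.1, s.2.mulPos hm z⟩
  invFun s := ⟨mulNeg m z s.1, s.2.mulNeg hm z⟩
  left_inv s := Subtype.ext (mulNeg_mulPos z s.2)
  right_inv s := Subtype.ext (mulPos_mulNeg (by omega) z s.2)

theorem altProd_genPerm {m : ℕ} (hm : 2 ≤ m) (n : ℕ) (z : Bool)
    (s : {s : GarsideForm // IsValid m s}) :
    (altProd n (genPerm hm (not^[n + 1] z)) (genPerm hm (!not^[n + 1] z)) s).1 =
      mulAlternating m n z s.1 := by
  induction n generalizing z s with
  | zero => rfl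
  | succ n ih =>
    have ih := ih (!z) (genPerm hm z s)
    rw [Function.iterate_succ_apply, Bool.not_not] at ih
    rw [altProd_succ_right, iterate_not_add_two, iterate_not_iterate_not, Equiv.Perm.mul_apply, ih]
    rfl

theorem genPerm_braid {m : ℕ} (hm : 2 ≤ m) :
    altProd m (genPerm hm true) (genPerm hm false) =
      altProd m (genPerm hm false) (genPerm hm true) := by
  suffices key : ∀ z, altProd m (genPerm hm (not^[m + 1] z)) (genPerm hm (!not^[m + 1] z)) =
      altProd m (genPerm hm (!not^[m + 1] z)) (genPerm hm (not^[m + 1] z)) by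
    simpa only [iterate_not_iterate_not, Bool.not_true] using key (not^[m + 1] true)
  intro z
  ext s : 2
  have hnot := altProd_genPerm hm m (!z) s
  rw [iterate_not_not, Bool.not_not] at hnot
  rw [altProd_genPerm hm m z s, hnot, mulAlternating_delta_not hm z s.2]

theorem ofWord_append {m : ℕ} (hm : 2 ≤ m) (u t : List (Bool × Bool)) :
    ofWord m (u ++ t) =
      ((u.map (letterEval (genPerm hm))).prod ⟨ofWord m t, isValid_ofWord hm t⟩).1 := by
  induction u with
  | nil => rfl
  | cons a u ih =>
    rw [List.map_cons, List.prod_cons, Equiv.Perm.mul_apply]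
    change act m a (ofWord m (u ++ t)) = _
    rw [ih]
    obtain ⟨z, _ | _⟩ := a <;> rfl

theorem ofWord_append_congr_left {m : ℕ} (hm : 2 ≤ m) {u u' : List (Bool × Bool)}
    (h : ofWord m u = ofWord m u') (t : List (Bool × Bool)) :
    ofWord m (u ++ t) = ofWord m (u' ++ t) := by
  rw [ofWord_append hm, ofWord_append hm, ← eval_ofWord hm (genPerm_braid hm), h,
    eval_ofWord hm (genPerm_braid hm)]

theorem length_ofWord_le {m : ℕ} (hm : 2 ≤ m) (u : List (Bool × Bool)) :
    length m (ofWord m u) ≤ u.length := by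
  induction u with
  | nil => simp [ofWord, length, level]
  | cons a u ih =>
    have hlen := length_act hm a (isValid_ofWord hm u)
    change length m (act m a (ofWord m u)) ≤ u.length + 1
    omega

theorem exists_word {m : ℕ} (hm : 2 ≤ m) {s : GarsideForm} (h : IsValid m s) :
    ∃ u, ofWord m u = s ∧ u.length = length m s := by
  induction hN : length m s using Nat.strong_induction_on generalizing s with
  | _ N ih =>
    by_cases h0 : length m s = 0
    · exact ⟨[], ((length_eq_zero_iff (by omega) h).1 h0).symm, by rw [← hN, h0, List.length_nil]⟩
    · obtain ⟨a, ha⟩ := exists_isFirst hm h h0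
      have hlen := (isFirst_iff hm _ h).1 ha
      obtain ⟨u, hu, hul⟩ := ih _ (by omega) (h.act hm (a.1, !a.2)) rfl
      refine ⟨a :: u, ?_, by rw [List.length_cons]; omega⟩
      change act m a (ofWord m u) = s
      rw [hu]
      exact act_act_not (by omega) a.1 a.2 h

end GarsideForm

/-! ### Words over a large-type Coxeter matrix -/

section Words

variable {ι : Type*}

/-- The generators `i` and `j` are distinct and satisfy a braid relation of length at least three.
The label `∞` of a Coxeter matrix is encoded as `0`. -/
def IsEdge (M : ι → ι → ℕ) (i j : ι) : Prop := i ≠ j ∧ 3 ≤ M i j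

/-- All letters of `u` are signed copies of `i` or `j`. -/
def OnPair (i j : ι) (u : List (ι × Bool)) : Prop := ∀ a ∈ u, a.1 = i ∨ a.1 = j

/-- The formal inverse of a signed letter. -/
def invLetter (a : ι × Bool) : ι × Bool := (a.1, !a.2)

theorem invLetter_invLetter (a : ι × Bool) : invLetter (invLetter a) = a := by
  simp only [invLetter, Bool.not_not]

theorem IsEdge.two_le {M : ι → ι → ℕ} {i j : ι} (hp : IsEdge M i j) : 2 ≤ M i j :=
  Nat.le_of_succ_le hp.2

theorem IsEdge.one_le {M : ι → ι → ℕ} {i j : ι} (hp : IsEdge M i j) : 1 ≤ M i j :=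
  Nat.le_of_succ_le hp.two_le

theorem IsEdge.symm {M : ι → ι → ℕ} (hM : ∀ i j, M i j = M j i) {i j : ι} (hp : IsEdge M i j) :
    IsEdge M j i :=
  ⟨hp.1.symm, hM i j ▸ hp.2⟩

theorem OnPair.cons {i j : ι} {a : ι × Bool} {u : List (ι × Bool)} (ha : a.1 = i ∨ a.1 = j)
    (h : OnPair i j u) : OnPair i j (a :: u) :=
  List.forall_mem_cons.2 ⟨ha, h⟩

theorem OnPair.append {i j : ι} {u u' : List (ι × Bool)} (h : OnPair i j u)
    (h' : OnPair i j u') : OnPair i j (u ++ u') :=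
  List.forall_mem_append.2 ⟨h, h'⟩

variable [DecidableEq ι]

/-- A letter in `i` and `j` as a letter of a dihedral group, where `i` becomes `x true`. -/
def dihedralLetter (i : ι) (a : ι × Bool) : Bool × Bool := (decide (a.1 = i), a.2)

/-- The Garside normal form of a word in `i` and `j`. -/
def dihedralForm (M : ι → ι → ℕ) (i j : ι) (u : List (ι × Bool)) : GarsideForm :=
  GarsideForm.ofWord (M i j) (u.map (dihedralLetter i))

/-- The word `u` is a geodesic word in `i` and `j` for the dihedral group on `i` and `j`. -/
def DihedralGeodesic (M : ι → ι → ℕ) (i j : ι) (u : List (ι × Bool)) : Prop :=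
  OnPair i j u ∧ GarsideForm.length (M i j) (dihedralForm M i j u) = u.length

/-- The words `u` and `u'` are geodesics for the same element of the dihedral group on `i`, `j`. -/
structure CoGeodesic (M : ι → ι → ℕ) (i j : ι) (u u' : List (ι × Bool)) : Prop where
  left : DihedralGeodesic M i j u
  right : DihedralGeodesic M i j u'
  form_eq : dihedralForm M i j u = dihedralForm M i j u'

/-- Replacement of a dihedral geodesic subword by another geodesic for the same element. -/
def DihedralMove (M : ι → ι → ℕ) (w w' : List (ι × Bool)) : Prop :=
  ∃ i j α u u' β, IsEdge M i j ∧ CoGeodesic M i j u u' ∧ w = α ++ u ++ β ∧ w' = α ++ u' ++ β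

/-- The words `w` and `w'` are connected by dihedral moves. -/
def WordEquiv (M : ι → ι → ℕ) (w w' : List (ι × Bool)) : Prop :=
  Relation.ReflTransGen (DihedralMove M) w w'

/-- The letter `a` is the first letter of some word equivalent to `w`. -/
def IsHead (M : ι → ι → ℕ) (a : ι × Bool) (w : List (ι × Bool)) : Prop :=
  ∃ z, WordEquiv M w (a :: z)

/-- No word equivalent to `y` starts with a letter in `i` or `j`. -/
def IsFreeOf (M : ι → ι → ℕ) (i j : ι) (y : List (ι × Bool)) : Prop :=
  ∀ a, IsHead M a y → a.1 ≠ i ∧ a.1 ≠ j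

/-- No letter of the word cancels against the remainder of the word after it, up to equivalence. -/
def IsReduced (M : ι → ι → ℕ) : List (ι × Bool) → Prop
  | [] => True
  | a :: v => IsReduced M v ∧ ¬ IsHead M (invLetter a) v

/-- The words `a :: v` and `b :: v'` differ by a single dihedral move, up to equivalence of their
tails, and the subword that is moved is a maximal prefix in `i` and `j`. -/
def HeadSwap (M : ι → ι → ℕ) (i j : ι) (a : ι × Bool) (v : List (ι × Bool)) (b : ι × Bool)
    (v' : List (ι × Bool)) : Prop :=
  ∃ u u' y, CoGeodesic M i j (a :: u) (b :: u') ∧ WordEquiv M v (u ++ y) ∧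
    WordEquiv M v' (u' ++ y) ∧ IsFreeOf M i j y

variable {M : ι → ι → ℕ} {i j : ι} {a b c : ι × Bool}
  {u u' v v' v'' w w' w'' x x' y y' : List (ι × Bool)}

theorem dihedralForm_cons (M : ι → ι → ℕ) (i j : ι) (a : ι × Bool) (u : List (ι × Bool)) :
    dihedralForm M i j (a :: u) =
      GarsideForm.act (M i j) (dihedralLetter i a) (dihedralForm M i j u) := rfl

theorem isValid_dihedralForm (hp : IsEdge M i j) (u : List (ι × Bool)) :
    GarsideForm.IsValid (M i j) (dihedralForm M i j u) :=
  GarsideForm.isValid_ofWord hp.two_le _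

theorem dihedralLetter_self (a : ι × Bool) : dihedralLetter a.1 a = (true, a.2) :=
  Prod.ext (decide_eq_true rfl) rfl

theorem dihedralLetter_of_ne (h : a.1 ≠ i) : dihedralLetter i a = (false, a.2) :=
  Prod.ext (decide_eq_false h) rfl

theorem dihedralForm_replicate_append (M : ι → ι → ℕ) (i j : ι) (a : ι × Bool) (r : ℕ)
    (u : List (ι × Bool)) :
    dihedralForm M i j (List.replicate r a ++ u) =
      (GarsideForm.act (M i j) (dihedralLetter i a))^[r] (dihedralForm M i j u) := by
  induction r with
  | zero => rfl
  | succ r ih =>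
    rw [List.replicate_succ, List.cons_append, dihedralForm_cons, ih,
      Function.iterate_succ_apply']

theorem dihedralForm_append_congr (hp : IsEdge M i j)
    (h : dihedralForm M i j u = dihedralForm M i j u') (t : List (ι × Bool)) :
    dihedralForm M i j (u ++ t) = dihedralForm M i j (u' ++ t) := by
  unfold dihedralForm at *
  rw [List.map_append, List.map_append]
  exact GarsideForm.ofWord_append_congr_left hp.two_le h _

theorem dihedralForm_cons_cancel (hp : IsEdge M i j)
    (h : dihedralForm M i j (a :: u) = dihedralForm M i j (a :: u')) :
    dihedralForm M i j u = dihedralForm M i j u' :=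
  GarsideForm.act_injOn hp.one_le _ (isValid_dihedralForm hp u) (isValid_dihedralForm hp u') h

theorem dihedralForm_swap (hM : ∀ i j, M i j = M j i) (hij : i ≠ j) (h : OnPair i j u) :
    dihedralForm M j i u = GarsideForm.swap (dihedralForm M i j u) := by
  induction u with
  | nil => rfl
  | cons a u ih =>
    obtain ⟨ha, hu⟩ := List.forall_mem_cons.1 h
    have hnot : decide (a.1 = j) = !decide (a.1 = i) := by
      rcases ha with e | e <;> simp [e, hij, hij.symm]
    rw [dihedralForm_cons, dihedralForm_cons, ih hu, dihedralLetter, dihedralLetter,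
      GarsideForm.swap_act, hM j i, hnot]

theorem dihedralGeodesic_nil (M : ι → ι → ℕ) (i j : ι) : DihedralGeodesic M i j [] :=
  ⟨fun _ h => absurd h List.not_mem_nil, by
    simp [dihedralForm, GarsideForm.ofWord, GarsideForm.length, GarsideForm.level]⟩

theorem DihedralGeodesic.tail (hp : IsEdge M i j) (h : DihedralGeodesic M i j (a :: u)) :
    DihedralGeodesic M i j u := by
  refine ⟨(List.forall_mem_cons.1 h.1).2, ?_⟩
  have hlen := h.2
  rw [dihedralForm_cons, List.length_cons] at hlen
  have hact := GarsideForm.length_act hp.two_le (dihedralLetter i a) (isValid_dihedralForm hp u)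
  have hle : GarsideForm.length (M i j) (dihedralForm M i j u) ≤ _ :=
    GarsideForm.length_ofWord_le hp.two_le (u.map (dihedralLetter i))
  rw [List.length_map] at hle
  omega

theorem DihedralGeodesic.isFirst (hp : IsEdge M i j) (h : DihedralGeodesic M i j (a :: u)) :
    GarsideForm.IsFirst (M i j) (dihedralLetter i a) (dihedralForm M i j (a :: u)) := by
  unfold GarsideForm.IsFirst
  rw [h.2, dihedralForm_cons, GarsideForm.act_not_act hp.one_le _ _ (isValid_dihedralForm hp u),
    (h.tail hp).2, List.length_cons]
  exact Nat.lt_succ_self _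

theorem isFirst_invLetter_iff {m : ℕ} {s : GarsideForm} :
    GarsideForm.IsFirst m (dihedralLetter i (invLetter a)) s ↔
      GarsideForm.length m (GarsideForm.act m (dihedralLetter i a) s) <
        GarsideForm.length m s := by
  have hnot : ((dihedralLetter i (invLetter a)).1, !(dihedralLetter i (invLetter a)).2) =
      dihedralLetter i a := Prod.ext rfl (Bool.not_not _)
  rw [GarsideForm.IsFirst, hnot]

theorem DihedralGeodesic.cons (hp : IsEdge M i j) (ha : a.1 = i ∨ a.1 = j)
    (h : DihedralGeodesic M i j u)
    (hF : ¬ GarsideForm.IsFirst (M i j) (dihedralLetter i (invLetter a)) (dihedralForm M i j u)) :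
    DihedralGeodesic M i j (a :: u) := by
  refine ⟨h.1.cons ha, ?_⟩
  have hact := GarsideForm.length_act hp.two_le (dihedralLetter i a) (isValid_dihedralForm hp u)
  rw [isFirst_invLetter_iff] at hF
  rw [dihedralForm_cons, List.length_cons, ← h.2]
  exact hact.resolve_right fun hlt => hF (by omega)

theorem DihedralGeodesic.not_isFirst_invLetter (hp : IsEdge M i j)
    (h : DihedralGeodesic M i j (a :: u)) :
    ¬ GarsideForm.IsFirst (M i j) (dihedralLetter i (invLetter a)) (dihedralForm M i j u) := by
  rw [isFirst_invLetter_iff, ← dihedralForm_cons, h.2, (h.tail hp).2, List.length_cons]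
  exact Nat.not_succ_lt_self

theorem DihedralGeodesic.swap (hM : ∀ i j, M i j = M j i) (hij : i ≠ j)
    (h : DihedralGeodesic M i j u) : DihedralGeodesic M j i u := by
  refine ⟨fun a ha => (h.1 a ha).symm, ?_⟩
  rw [dihedralForm_swap hM hij h.1, GarsideForm.length_swap, hM j i, h.2]

theorem exists_map_dihedralLetter_eq (hij : i ≠ j) (x : List (Bool × Bool)) :
    ∃ u : List (ι × Bool), OnPair i j u ∧ u.map (dihedralLetter i) = x := by
  refine ⟨x.map fun p => (if p.1 then i else j, p.2), ?_, ?_⟩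
  · intro b hb
    obtain ⟨p, -, rfl⟩ := List.mem_map.1 hb
    by_cases hp : p.1 = true <;> simp [hp]
  · rw [List.map_map]
    refine List.map_id'' ?_ x
    rintro ⟨_ | _, σ⟩ <;> simp [dihedralLetter, hij.symm]

theorem exists_dihedralGeodesic (hp : IsEdge M i j) {s : GarsideForm}
    (h : GarsideForm.IsValid (M i j) s) :
    ∃ u, DihedralGeodesic M i j u ∧ dihedralForm M i j u = s := by
  obtain ⟨x, hx, hlen⟩ := GarsideForm.exists_word hp.two_le h
  obtain ⟨u, hu, rfl⟩ := exists_map_dihedralLetter_eq hp.1 x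
  have hform : dihedralForm M i j u = s := hx
  exact ⟨u, ⟨hu, by rw [hform, ← hlen, List.length_map]⟩, hform⟩

theorem exists_dihedralGeodesic_cons (hp : IsEdge M i j) (ha : a.1 = i ∨ a.1 = j)
    {s : GarsideForm} (hv : GarsideForm.IsValid (M i j) s)
    (hF : GarsideForm.IsFirst (M i j) (dihedralLetter i a) s) :
    ∃ t, DihedralGeodesic M i j (a :: t) ∧ dihedralForm M i j (a :: t) = s := by
  obtain ⟨t, ht, hform⟩ := exists_dihedralGeodesic hp
    (hv.act hp.two_le ((dihedralLetter i a).1, !(dihedralLetter i a).2))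
  have hcons : dihedralForm M i j (a :: t) = s := by
    rw [dihedralForm_cons, hform]
    exact GarsideForm.act_act_not hp.one_le _ _ hv
  refine ⟨t, ⟨ht.1.cons ha, ?_⟩, hcons⟩
  rw [hcons, (GarsideForm.isFirst_iff hp.two_le _ hv).1 hF, ← hform, ht.2, List.length_cons]

theorem eq_of_isFirst_of_fst_eq (hp : IsEdge M i j) {s : GarsideForm}
    (hv : GarsideForm.IsValid (M i j) s)
    (ha : GarsideForm.IsFirst (M i j) (dihedralLetter i a) s)
    (hb : GarsideForm.IsFirst (M i j) (dihedralLetter i b) s) (h : a.1 = b.1) : a = b := by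
  refine Prod.ext h (not_not.1 fun hne => ?_)
  refine GarsideForm.not_isFirst_not hp.two_le _ _ hv ha ?_
  rwa [dihedralLetter, ← h, Bool.eq_not_of_ne (Ne.symm hne)] at hb

theorem CoGeodesic.symm (h : CoGeodesic M i j u u') : CoGeodesic M i j u' u :=
  ⟨h.right, h.left, h.form_eq.symm⟩

theorem CoGeodesic.length_eq (h : CoGeodesic M i j u u') : u.length = u'.length := by
  rw [← h.left.2, ← h.right.2, h.form_eq]

theorem CoGeodesic.swap (hM : ∀ i j, M i j = M j i) (hij : i ≠ j) (h : CoGeodesic M i j u u') :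
    CoGeodesic M j i u u' :=
  ⟨h.left.swap hM hij, h.right.swap hM hij, by
    rw [dihedralForm_swap hM hij h.left.1, dihedralForm_swap hM hij h.right.1, h.form_eq]⟩

theorem CoGeodesic.tail (hp : IsEdge M i j) (h : CoGeodesic M i j (a :: u) (a :: u')) :
    CoGeodesic M i j u u' :=
  ⟨h.left.tail hp, h.right.tail hp, dihedralForm_cons_cancel hp h.form_eq⟩

theorem CoGeodesic.append (hp : IsEdge M i j) (h : CoGeodesic M i j u u') {t : List (ι × Bool)}
    (ht : DihedralGeodesic M i j (u ++ t)) : CoGeodesic M i j (u ++ t) (u' ++ t) := by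
  have hform := dihedralForm_append_congr hp h.form_eq t
  refine ⟨ht, ⟨h.right.1.append (List.forall_mem_append.1 ht.1).2, ?_⟩, hform⟩
  rw [← hform, ht.2, List.length_append, List.length_append, h.length_eq]

theorem CoGeodesic.isFirst_left (hp : IsEdge M i j) (h : CoGeodesic M i j (a :: u) u') :
    GarsideForm.IsFirst (M i j) (dihedralLetter i a) (dihedralForm M i j u') :=
  h.form_eq ▸ h.left.isFirst hp

theorem CoGeodesic.fst_eq_or (hp : IsEdge M i j) (h : CoGeodesic M i j (a :: u) (b :: u'))
    (hab : a ≠ b) : (a.1 = i ∧ b.1 = j) ∨ (a.1 = j ∧ b.1 = i) := by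
  have ha := h.left.1 a List.mem_cons_self
  have hb := h.right.1 b List.mem_cons_self
  have hne : a.1 ≠ b.1 := fun e => hab (eq_of_isFirst_of_fst_eq hp (isValid_dihedralForm hp _)
    (h.isFirst_left hp) (h.right.isFirst hp) e)
  rcases ha with ha | ha <;> rcases hb with hb | hb
  · exact absurd (ha.trans hb.symm) hne
  · exact Or.inl ⟨ha, hb⟩
  · exact Or.inr ⟨ha, hb⟩
  · exact absurd (ha.trans hb.symm) hne

theorem CoGeodesic.hasSyllables (hp : IsEdge M a.1 b.1)
    (h : CoGeodesic M a.1 b.1 (a :: u) (b :: u')) :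
    GarsideForm.HasSyllables (M a.1 b.1) (M a.1 b.1) true (dihedralForm M a.1 b.1 (a :: u)) := by
  have ha := h.left.isFirst hp
  have hb := h.symm.isFirst_left hp
  rw [dihedralLetter_self] at ha
  rw [dihedralLetter_of_ne hp.1.symm] at hb
  exact GarsideForm.hasSyllables_of_isFirst_of_isFirst_not hp.two_le
    (isValid_dihedralForm hp _) ha hb

theorem DihedralMove.symm (h : DihedralMove M w w') : DihedralMove M w' w := by
  obtain ⟨i, j, α, u, u', β, hp, hu, rfl, rfl⟩ := h
  exact ⟨i, j, α, u', u, β, hp, hu.symm, rfl, rfl⟩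

namespace WordEquiv

theorem refl (w : List (ι × Bool)) : WordEquiv M w w := Relation.ReflTransGen.refl

theorem trans (h : WordEquiv M w w') (h' : WordEquiv M w' w'') : WordEquiv M w w'' :=
  Relation.ReflTransGen.trans h h'

theorem symm (h : WordEquiv M w w') : WordEquiv M w' w :=
  haveI : Std.Symm (DihedralMove M) := ⟨fun _ _ => DihedralMove.symm⟩
  Std.Symm.symm (r := Relation.ReflTransGen (DihedralMove M)) _ _ h

theorem append_left (α : List (ι × Bool)) (h : WordEquiv M w w') :
    WordEquiv M (α ++ w) (α ++ w') := by
  refine Relation.ReflTransGen.lift (α ++ ·) ?_ _ _ h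
  rintro _ _ ⟨i, j, γ, u, u', β, hp, hu, rfl, rfl⟩
  exact ⟨i, j, α ++ γ, u, u', β, hp, hu, by simp, by simp⟩

theorem append_right (β : List (ι × Bool)) (h : WordEquiv M w w') :
    WordEquiv M (w ++ β) (w' ++ β) := by
  refine Relation.ReflTransGen.lift (· ++ β) ?_ _ _ h
  rintro _ _ ⟨i, j, γ, u, u', δ, hp, hu, rfl, rfl⟩
  exact ⟨i, j, γ, u, u', δ ++ β, hp, hu, by simp, by simp⟩

theorem cons (a : ι × Bool) (h : WordEquiv M w w') : WordEquiv M (a :: w) (a :: w') :=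
  h.append_left [a]

theorem append (h : WordEquiv M w w') (h' : WordEquiv M x x') :
    WordEquiv M (w ++ x) (w' ++ x') :=
  (h.append_right x).trans (h'.append_left w')

theorem length_eq (h : WordEquiv M w w') : w.length = w'.length := by
  induction h with
  | refl => rfl
  | tail _ h ih =>
    obtain ⟨i, j, α, u, u', β, -, hu, rfl, rfl⟩ := h
    rw [ih, List.length_append, List.length_append, List.length_append, List.length_append,
      hu.length_eq]

theorem eq_nil (h : WordEquiv M [] w) : w = [] := List.length_eq_zero_iff.1 h.length_eq.symm

theorem length_tail_eq (h : WordEquiv M (a :: v) (b :: v')) : v.length = v'.length :=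
  Nat.succ_injective h.length_eq

theorem isHead_iff (h : WordEquiv M w w') : IsHead M a w ↔ IsHead M a w' :=
  ⟨fun ⟨z, hz⟩ => ⟨z, h.symm.trans hz⟩, fun ⟨z, hz⟩ => ⟨z, h.trans hz⟩⟩

end WordEquiv

theorem CoGeodesic.wordEquiv (hp : IsEdge M i j) (h : CoGeodesic M i j u u') :
    WordEquiv M u u' :=
  Relation.ReflTransGen.single ⟨i, j, [], u, u', [], hp, h, by simp, by simp⟩

theorem isHead_cons (a : ι × Bool) (w : List (ι × Bool)) : IsHead M a (a :: w) :=
  ⟨w, WordEquiv.refl _⟩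

theorem IsHead.append (h : IsHead M a w) (y : List (ι × Bool)) : IsHead M a (w ++ y) := by
  obtain ⟨z, hz⟩ := h
  exact ⟨z ++ y, hz.append_right y⟩

theorem IsFreeOf.swap (h : IsFreeOf M i j w) : IsFreeOf M j i w := fun a ha => (h a ha).symm

theorem HeadSwap.swap (hM : ∀ i j, M i j = M j i) (hij : i ≠ j) (h : HeadSwap M i j a v b v') :
    HeadSwap M j i a v b v' := by
  obtain ⟨u, u', y, hu, hv, hv', hy⟩ := h
  exact ⟨u, u', y, hu.swap hM hij, hv, hv', hy.swap⟩

theorem HeadSwap.symm (h : HeadSwap M i j a v b v') : HeadSwap M i j b v' a v := by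
  obtain ⟨u, u', y, hu, hv, hv', hy⟩ := h
  exact ⟨u', u, y, hu.symm, hv', hv, hy⟩

theorem HeadSwap.congr (h : HeadSwap M i j a v b v') (e : WordEquiv M v w)
    (e' : WordEquiv M v' w') : HeadSwap M i j a w b w' := by
  obtain ⟨u, u', y, hu, hv, hv', hy⟩ := h
  exact ⟨u, u', y, hu, e.symm.trans hv, e'.symm.trans hv', hy⟩

theorem HeadSwap.on_heads (hM : ∀ i j, M i j = M j i) (hp : IsEdge M i j)
    (h : HeadSwap M i j a v b v') (hab : a ≠ b) :
    IsEdge M a.1 b.1 ∧ HeadSwap M a.1 b.1 a v b v' := by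
  obtain ⟨u, u', y, hu, -⟩ := id h
  obtain ⟨ha, hb⟩ | ⟨ha, hb⟩ := hu.fst_eq_or hp hab
  · rw [ha, hb]
    exact ⟨hp, h⟩
  · rw [ha, hb]
    exact ⟨hp.symm hM, h.swap hM hp.1⟩

theorem IsReduced.cons_congr (h : WordEquiv M v v') (hr : IsReduced M (a :: v))
    (hv : IsReduced M v') : IsReduced M (a :: v') :=
  ⟨hv, fun hh => hr.2 (h.isHead_iff.2 hh)⟩

theorem IsReduced.append_left (h : IsReduced M (u ++ y)) : IsReduced M u := by
  induction u with
  | nil => trivial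
  | cons a u ih => exact ⟨ih h.1, fun hh => h.2 (hh.append y)⟩

theorem IsReduced.append_right (h : IsReduced M (u ++ y)) : IsReduced M y := by
  induction u with
  | nil => exact h
  | cons a u ih => exact ih h.1

theorem IsReduced.dihedralGeodesic (hp : IsEdge M i j) (h : IsReduced M u) (hu : OnPair i j u) :
    DihedralGeodesic M i j u := by
  induction u with
  | nil => exact dihedralGeodesic_nil M i j
  | cons a u ih =>
    obtain ⟨ha, hu⟩ := List.forall_mem_cons.1 hu
    have hgeo := ih h.1 hu
    refine hgeo.cons hp ha fun hF => ?_
    obtain ⟨t, ht, hform⟩ := exists_dihedralGeodesic_cons hp (a := invLetter a) ha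
      (isValid_dihedralForm hp u) hF
    exact h.2 ⟨t, CoGeodesic.wordEquiv hp ⟨hgeo, ht, hform.symm⟩⟩

end Words

/-! ### Exchanging the first letter of a reduced word -/

section Exchange

variable {ι : Type*} [DecidableEq ι]

/-- The two ways in which the first letters of equivalent reduced words `a :: v` and `b :: v'` can
be related: they agree, or one dihedral move at the front exchanges them. -/
def HeadChange (M : ι → ι → ℕ) (a : ι × Bool) (v : List (ι × Bool)) (b : ι × Bool)
    (v' : List (ι × Bool)) : Prop :=
  (a = b ∧ WordEquiv M v v') ∨ (IsEdge M a.1 b.1 ∧ HeadSwap M a.1 b.1 a v b v')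

/-- Equivalence preserves reducedness of words of length at most `N`, and first letters of such
words change only by `HeadChange`. This holds for all `N`, by induction on `N`. -/
structure HeadExchange (M : ι → ι → ℕ) (N : ℕ) : Prop where
  isReduced : ∀ {w w'}, IsReduced M w → w.length ≤ N → WordEquiv M w w' → IsReduced M w'
  headChange : ∀ {a v b v'}, IsReduced M (a :: v) → v.length < N →
    WordEquiv M (a :: v) (b :: v') → HeadChange M a v b v'

/-- Up to equivalence, `w` starts with `k` nontrivial maximal powers of letters, taken alternately
from `i` and `j` and starting with `i`. -/
def HasWordSyllables (M : ι → ι → ℕ) : ℕ → ι → ι → List (ι × Bool) → Prop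
  | 0, _, _, _ => True
  | k + 1, i, j, w => ∃ a r w', a.1 = i ∧ 1 ≤ r ∧ WordEquiv M w (List.replicate r a ++ w') ∧
      (∀ b, b.1 = i → ¬ IsHead M b w') ∧ HasWordSyllables M k j i w'

variable {M : ι → ι → ℕ} {i j : ι} {a b c : ι × Bool}
  {u u' t v v' v'' w w' x x' y y' : List (ι × Bool)} {N k r r' : ℕ}

theorem HasWordSyllables.mono {k' : ℕ} (hk : k ≤ k') (h : HasWordSyllables M k' i j w) :
    HasWordSyllables M k i j w := by
  induction k generalizing k' i j w with
  | zero => trivial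
  | succ k ih =>
    obtain ⟨k', rfl⟩ := Nat.exists_eq_add_of_lt hk
    obtain ⟨a, r, w', ha, hr, he, hno, hw'⟩ := h
    exact ⟨a, r, w', ha, hr, he, hno, ih (Nat.le_add_right k k') hw'⟩

theorem HasWordSyllables.congr (e : WordEquiv M w w') (h : HasWordSyllables M k i j w) :
    HasWordSyllables M k i j w' := by
  cases k with
  | zero => trivial
  | succ k =>
    obtain ⟨a, r, x, ha, hr, he, hx⟩ := h
    exact ⟨a, r, x, ha, hr, e.symm.trans he, hx⟩

theorem HasWordSyllables.exists_isHead (h : HasWordSyllables M (k + 1) i j w) :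
    ∃ a, a.1 = i ∧ IsHead M a w := by
  obtain ⟨a, r, x, ha, hr, he, -⟩ := h
  obtain ⟨r, rfl⟩ := Nat.exists_eq_add_of_le' hr
  exact ⟨a, ha, _, he⟩

theorem HeadSwap.of_heads (hM : ∀ i j, M i j = M j i) (hp : IsEdge M a.1 b.1)
    (ha : a.1 = i ∨ a.1 = j) (hb : b.1 = i ∨ b.1 = j) (h : HeadSwap M a.1 b.1 a v b v') :
    HeadSwap M i j a v b v' := by
  rcases ha with rfl | rfl <;> rcases hb with hb | hb
  · exact absurd hb.symm hp.1
  · exact hb ▸ h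
  · exact hb ▸ h.swap hM hp.1
  · exact absurd hb.symm hp.1

theorem HeadExchange.exists_leftPart (hN : HeadExchange M N) (hp : IsEdge M i j)
    (hr : IsReduced M w) (hl : w.length ≤ N) :
    ∃ u y, WordEquiv M w (u ++ y) ∧ DihedralGeodesic M i j u ∧ IsFreeOf M i j y := by
  induction hk : w.length using Nat.strong_induction_on generalizing w with
  | _ k ih =>
    by_cases hw : IsFreeOf M i j w
    · exact ⟨[], w, WordEquiv.refl w, dihedralGeodesic_nil M i j, hw⟩
    obtain ⟨a, ⟨z, hz⟩, ha⟩ : ∃ a, IsHead M a w ∧ (a.1 = i ∨ a.1 = j) := by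
      unfold IsFreeOf at hw
      grind
    have hlen := hz.length_eq
    rw [List.length_cons] at hlen
    obtain ⟨u, y, he, hu, hy⟩ := ih z.length (by omega) (hN.isReduced hr hl hz).1 (by omega) rfl
    have hau : WordEquiv M w ((a :: u) ++ y) := hz.trans (he.cons a)
    exact ⟨a :: u, y, hau,
      (hN.isReduced hr hl hau).append_left.dihedralGeodesic hp (hu.1.cons ha), hy⟩

theorem HeadExchange.leftPart_unique (hN : HeadExchange M N) (hM : ∀ i j, M i j = M j i)
    (hp : IsEdge M i j) (hr : IsReduced M (u ++ y)) (hl : (u ++ y).length ≤ N)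
    (he : WordEquiv M (u ++ y) (u' ++ y')) (hu : DihedralGeodesic M i j u)
    (hu' : DihedralGeodesic M i j u') (hy : IsFreeOf M i j y) (hy' : IsFreeOf M i j y') :
    CoGeodesic M i j u u' ∧ WordEquiv M y y' := by
  suffices dihedralForm M i j u = dihedralForm M i j u' ∧ WordEquiv M y y' from
    ⟨⟨hu, hu', this.1⟩, this.2⟩
  have not_isHead : ∀ {a z x}, (a.1 = i ∨ a.1 = j) → IsFreeOf M i j x →
      ¬ WordEquiv M x (a :: z) := fun ha hx h => by
    have := hx _ ⟨_, h⟩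
    tauto
  induction hk : (u ++ y).length using Nat.strong_induction_on generalizing u y u' y' with
  | _ k ih =>
    have hlen := he.length_eq
    match u, u' with
    | [], [] => exact ⟨rfl, he⟩
    | [], b :: t' => exact absurd he (not_isHead (hu'.1 b List.mem_cons_self) hy)
    | a :: t, [] => exact absurd he.symm (not_isHead (hu.1 a List.mem_cons_self) hy')
    | a :: t, b :: t' =>
      simp only [List.cons_append, List.length_cons] at hk hl hlen hr he
      have hr' := hN.isReduced hr hl he
      rcases hN.headChange hr (by omega) he with ⟨rfl, htail⟩ | ⟨hab, hswap⟩
      · have := ih _ (by omega) hr.1 (by omega) htail (hu.tail hp) (hu'.tail hp) hy hy' rfl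
        exact ⟨by rw [dihedralForm_cons, dihedralForm_cons, this.1], this.2⟩
      · obtain ⟨s, s', z, hs, hts, hts', hz⟩ := hswap.of_heads hM hab
          (hu.1 a List.mem_cons_self) (hu'.1 b List.mem_cons_self)
        have h₁ := ih _ (by omega) hr.1 (by omega) hts (hu.tail hp) (hs.left.tail hp) hy hz rfl
        have h₂ := ih _ (by omega) hr'.1 (by omega) hts' (hu'.tail hp) (hs.right.tail hp)
          hy' hz rfl
        refine ⟨?_, h₁.2.trans h₂.2.symm⟩
        rw [dihedralForm_cons, h₁.1, ← dihedralForm_cons, hs.form_eq, dihedralForm_cons, ← h₂.1,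
          ← dihedralForm_cons]

theorem HeadExchange.isHead_iff_isFirst (hN : HeadExchange M N) (hM : ∀ i j, M i j = M j i)
    (hp : IsEdge M i j) (hr : IsReduced M (u ++ y)) (hl : (u ++ y).length ≤ N)
    (hu : DihedralGeodesic M i j u) (hy : IsFreeOf M i j y) (ha : a.1 = i ∨ a.1 = j) :
    IsHead M a (u ++ y) ↔
      GarsideForm.IsFirst (M i j) (dihedralLetter i a) (dihedralForm M i j u) := by
  constructor
  · rintro ⟨z, hz⟩
    have hlen := hz.length_eq
    rw [List.length_cons] at hlen
    obtain ⟨u', y', he, hu', hy'⟩ :=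
      hN.exists_leftPart hp (hN.isReduced hr hl hz).1 (by omega)
    have hau : WordEquiv M (u ++ y) ((a :: u') ++ y') := hz.trans (he.cons a)
    have hgeo : DihedralGeodesic M i j (a :: u') :=
      (hN.isReduced hr hl hau).append_left.dihedralGeodesic hp (hu'.1.cons ha)
    exact (hN.leftPart_unique hM hp hr hl hau hu hgeo hy hy').1.symm.isFirst_left hp
  · intro hF
    obtain ⟨t, ht, hform⟩ := exists_dihedralGeodesic_cons hp ha (isValid_dihedralForm hp u) hF
    exact ((isHead_cons a t).append y).imp fun z hz =>
      ((CoGeodesic.wordEquiv hp ⟨hu, ht, hform.symm⟩).append_right y).trans hz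

theorem HeadExchange.isReduced_append (hN : HeadExchange M N) (hM : ∀ i j, M i j = M j i)
    (hp : IsEdge M i j) (hr : IsReduced M y) (hl : (u ++ y).length ≤ N + 1)
    (hu : DihedralGeodesic M i j u) (hy : IsFreeOf M i j y) : IsReduced M (u ++ y) := by
  induction u with
  | nil => exact hr
  | cons a u ih =>
    rw [List.cons_append, List.length_cons] at hl
    have hred := ih (by omega) (hu.tail hp)
    refine ⟨hred, fun h => ?_⟩
    have hF := (hN.isHead_iff_isFirst hM hp hred (by omega) (hu.tail hp) hy (a := invLetter a)
      (hu.1 a List.mem_cons_self)).1 h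
    exact hu.not_isFirst_invLetter hp hF

theorem HeadExchange.syllable_unique (hN : HeadExchange M N) (hab : a.1 = b.1)
    (hr : IsReduced M (List.replicate r a ++ x)) (hl : (List.replicate r a ++ x).length ≤ N)
    (he : WordEquiv M (List.replicate r a ++ x) (List.replicate r' b ++ x'))
    (hx : ∀ c, c.1 = a.1 → ¬ IsHead M c x) (hx' : ∀ c, c.1 = a.1 → ¬ IsHead M c x') :
    WordEquiv M x x' := by
  induction r generalizing r' with
  | zero =>
    cases r' with
    | zero => exact he
    | succ r' => exact absurd ⟨_, he⟩ (hx b hab.symm)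
  | succ r ih =>
    cases r' with
    | zero => exact absurd ⟨_, he.symm⟩ (hx' a rfl)
    | succ r' =>
      have hl' : (List.replicate r a ++ x).length < N := hl
      rcases hN.headChange hr hl' he with ⟨-, htail⟩ | ⟨hedge, -⟩
      · exact ih hr.1 hl'.le htail
      · exact absurd hab hedge.1

theorem DihedralGeodesic.exists_syllable_word (hp : IsEdge M i j) (hu : DihedralGeodesic M i j u)
    (ha : a.1 = i ∨ a.1 = j) {s : GarsideForm} (hv : GarsideForm.IsValid (M i j) s)
    (hform : dihedralForm M i j u = (GarsideForm.act (M i j) (dihedralLetter i a))^[r] s)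
    (hlen : GarsideForm.length (M i j) (dihedralForm M i j u) =
      r + GarsideForm.length (M i j) s) :
    ∃ u', DihedralGeodesic M i j u' ∧ dihedralForm M i j u' = s ∧
      CoGeodesic M i j u (List.replicate r a ++ u') := by
  obtain ⟨u', hu', rfl⟩ := exists_dihedralGeodesic hp hv
  have heq : dihedralForm M i j (List.replicate r a ++ u') = dihedralForm M i j u := by
    rw [dihedralForm_replicate_append, hform]
  refine ⟨u', hu', rfl, hu, ⟨OnPair.append (fun b hb => ?_) hu'.1, ?_⟩, heq.symm⟩
  · rwa [(List.mem_replicate.1 hb).2]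
  · rw [heq, hlen, hu'.2, List.length_append, List.length_replicate]

theorem dihedralLetter_of_fst_eq_cond (hij : i ≠ j) {z : Bool} (h : a.1 = cond z i j) :
    dihedralLetter i a = (z, a.2) := by
  cases z
  · exact dihedralLetter_of_ne fun e => hij (e.symm.trans h)
  · subst h
    exact dihedralLetter_self a

theorem HeadExchange.not_isHead_of_not_isFirst (hN : HeadExchange M N)
    (hM : ∀ i j, M i j = M j i) (hp : IsEdge M i j) (hr : IsReduced M y)
    (hl : (u ++ y).length ≤ N) (hu : DihedralGeodesic M i j u) (hy : IsFreeOf M i j y) {z : Bool}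
    (hno : ∀ σ, ¬ GarsideForm.IsFirst (M i j) (z, σ) (dihedralForm M i j u)) (b : ι × Bool)
    (hb : b.1 = cond z i j) : ¬ IsHead M b (u ++ y) := by
  have hb' : b.1 = i ∨ b.1 = j := by cases z <;> simp [hb]
  rw [hN.isHead_iff_isFirst hM hp (hN.isReduced_append hM hp hr (by omega) hu hy) hl hu hy hb',
    dihedralLetter_of_fst_eq_cond hp.1 hb]
  exact hno _

theorem HeadExchange.hasWordSyllables (hN : HeadExchange M N) (hM : ∀ i j, M i j = M j i)
    (hp : IsEdge M i j) {z : Bool} (hr : IsReduced M y) (hl : (u ++ y).length ≤ N)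
    (hu : DihedralGeodesic M i j u) (hy : IsFreeOf M i j y)
    (h : GarsideForm.HasSyllables (M i j) k z (dihedralForm M i j u)) :
    HasWordSyllables M k (cond z i j) (cond z j i) (u ++ y) := by
  induction k generalizing z u with
  | zero => trivial
  | succ k ih =>
    obtain ⟨σ, r, s, hpos, hv, hform, hlen, hno, hs⟩ := h
    have hletter : dihedralLetter i (cond z i j, σ) = (z, σ) :=
      dihedralLetter_of_fst_eq_cond hp.1 rfl
    rw [← hletter] at hform
    obtain ⟨u', hu', rfl, hco⟩ :=
      hu.exists_syllable_word hp (by cases z <;> simp) hv hform hlen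
    have hlen' := hco.length_eq
    rw [List.length_append] at hlen' hl
    have hl' : (u' ++ y).length ≤ N := by rw [List.length_append]; omega
    refine ⟨(cond z i j, σ), r, u' ++ y, rfl, hpos, ?_,
      hN.not_isHead_of_not_isFirst hM hp hr hl' hu' hy hno, ?_⟩
    · rw [← List.append_assoc]
      exact (hco.wordEquiv hp).append_right y
    · simpa only [Bool.cond_not] using ih hl' hu' hs

theorem HeadExchange.hasWordSyllables_of_isHead_of_isHead (hN : HeadExchange M N)
    (hM : ∀ i j, M i j = M j i) (hr : IsReduced M y) (hl : y.length ≤ N) (hb : IsHead M b y)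
    (hc : IsHead M c y) (hbc : b ≠ c) :
    IsEdge M b.1 c.1 ∧ HasWordSyllables M (M b.1 c.1) b.1 c.1 y := by
  obtain ⟨v, hv⟩ := hb
  obtain ⟨v', hv'⟩ := hc
  have hlen := hv.length_eq
  rw [List.length_cons] at hlen
  obtain ⟨rfl, -⟩ | ⟨hp, u, u', x, hco, hvx, -, hx⟩ :=
    hN.headChange (hN.isReduced hr hl hv) (by omega) (hv.symm.trans hv')
  · exact absurd rfl hbc
  have he : WordEquiv M y ((b :: u) ++ x) := hv.trans (hvx.cons b)
  exact ⟨hp, HasWordSyllables.congr he.symm <| hN.hasWordSyllables hM hp (z := true)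
    (hN.isReduced hr hl he).append_right (he.length_eq ▸ hl) hco.left hx (hco.hasSyllables hp)⟩

/-- If `y` starts with letters on two generators, its dihedral left part there has at least three
syllables. Two syllables on a different pair would leave the same situation one syllable later,
on a shorter word. -/
theorem HeadExchange.not_hasWordSyllables_third (hN : HeadExchange M N)
    (hM : ∀ i j, M i j = M j i) (hr : IsReduced M y) (hl : y.length ≤ N) (hb : IsHead M b y)
    (hc : IsHead M c y) (hbc : b.1 ≠ c.1) (hib : i ≠ b.1) (hic : i ≠ c.1) :
    ¬ HasWordSyllables M 2 b.1 i y := by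
  induction hk : y.length using Nat.strong_induction_on generalizing y b c i with
  | _ k ih =>
    rintro ⟨a', r', x', ha', -, he', hno', hx'⟩
    obtain ⟨hp, hS⟩ := hN.hasWordSyllables_of_isHead_of_isHead hM hr hl hb hc fun e => hbc (e ▸ rfl)
    obtain ⟨a, r, x, ha, hpos, he, hno, hx⟩ := hS.mono hp.2
    have hred := hN.isReduced hr hl he
    have hlen := he.length_eq
    have hxx' : WordEquiv M x x' := hN.syllable_unique (ha.trans ha'.symm) hred (hlen ▸ hl)
      (he.symm.trans he') (ha ▸ hno) (ha ▸ hno')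
    obtain ⟨d, rfl, hd⟩ := hx'.exists_isHead
    obtain ⟨e, hec, he⟩ := hx.exists_isHead
    rw [List.length_append, List.length_replicate] at hlen
    exact ih x.length (by omega) hred.append_right (by omega) he (hxx'.isHead_iff.2 hd)
      (hec ▸ hic.symm) (hec ▸ hbc) hib.symm rfl (hec ▸ hx)

theorem CoGeodesic.exists_syllable (hp : IsEdge M a.1 b.1)
    (h : CoGeodesic M a.1 b.1 (a :: u) (b :: u')) :
    ∃ r x, CoGeodesic M a.1 b.1 u (List.replicate r a ++ x) ∧ DihedralGeodesic M a.1 b.1 x ∧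
      (∀ σ, ¬ GarsideForm.IsFirst (M a.1 b.1) (true, σ) (dihedralForm M a.1 b.1 x)) ∧
      GarsideForm.HasSyllables (M a.1 b.1) 2 false (dihedralForm M a.1 b.1 x) := by
  obtain ⟨σ, r, s, hpos, hv, hform, hlen, hno, hs⟩ := (h.hasSyllables hp).mono hp.2
  rw [← dihedralLetter_self (a.1, σ)] at hform
  obtain ⟨x, hx, rfl, hco⟩ :=
    h.left.exists_syllable_word hp (a := (a.1, σ)) (Or.inl rfl) hv hform hlen
  obtain ⟨r, rfl⟩ := Nat.exists_eq_add_of_le' hpos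
  rw [List.replicate_succ, List.cons_append] at hco
  have ha : a = (a.1, σ) := eq_of_isFirst_of_fst_eq hp (isValid_dihedralForm hp _)
    (h.left.isFirst hp) (hco.symm.isFirst_left hp) rfl
  rw [← ha] at hco
  exact ⟨r, x, hco.tail hp, hx, hno, hs⟩

theorem HeadExchange.exists_syllable (hN : HeadExchange M N) (hM : ∀ i j, M i j = M j i)
    (hr : IsReduced M v) (hl : v.length ≤ N) (hp : IsEdge M a.1 b.1)
    (h : HeadSwap M a.1 b.1 a v b v') :
    ∃ r x, WordEquiv M v (List.replicate r a ++ x) ∧ (∀ c, c.1 = a.1 → ¬ IsHead M c x) ∧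
      HasWordSyllables M 2 b.1 a.1 x := by
  obtain ⟨u, u', y, hco, hv, -, hy⟩ := h
  obtain ⟨r, x, hux, hx, hno, hs⟩ := hco.exists_syllable hp
  have he : WordEquiv M v (List.replicate r a ++ (x ++ y)) := by
    rw [← List.append_assoc]
    exact hv.trans ((hux.wordEquiv hp).append_right y)
  have hxy := (hN.isReduced hr hl he).append_right
  have hlen := he.length_eq
  rw [List.length_append] at hlen
  exact ⟨r, x ++ y, he,
    hN.not_isHead_of_not_isFirst hM hp hxy.append_right (by omega) hx hy (z := true) hno,
    hN.hasWordSyllables hM hp hxy.append_right (by omega) hx hy hs⟩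

/-- The exchanges of `a` against letters on different generators are incompatible, because each
determines the generator of the syllable that follows the initial power of `a`. -/
theorem HeadExchange.headSwap_unique (hN : HeadExchange M N) (hM : ∀ i j, M i j = M j i)
    (hr : IsReduced M v) (hl : v.length ≤ N) (hab : IsEdge M a.1 b.1) (hac : IsEdge M a.1 c.1)
    (hb : HeadSwap M a.1 b.1 a v b v') (hc : HeadSwap M a.1 c.1 a v c v'') :
    b = c ∧ WordEquiv M v' v'' := by
  by_cases hbc : b.1 = c.1
  · rw [← hbc] at hc
    obtain ⟨u, u', y, hu, hvu, hvu', hy⟩ := hb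
    obtain ⟨t, t', x, ht, hvt, hvt', hx⟩ := hc
    obtain ⟨hut, hyx⟩ := hN.leftPart_unique hM hab (hN.isReduced hr hl hvu)
      (hvu.length_eq ▸ hl) (hvu.symm.trans hvt) (hu.left.tail hab) (ht.left.tail hab) hy hx
    have hform : dihedralForm M a.1 b.1 (b :: u') = dihedralForm M a.1 b.1 (c :: t') := by
      rw [← hu.form_eq, ← ht.form_eq, dihedralForm_cons, hut.form_eq, ← dihedralForm_cons]
    have hco : CoGeodesic M a.1 b.1 (b :: u') (c :: t') := ⟨hu.right, ht.right, hform⟩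
    obtain rfl : b = c := eq_of_isFirst_of_fst_eq hab (isValid_dihedralForm hab _)
      (hco.left.isFirst hab) (hco.symm.isFirst_left hab) hbc
    exact ⟨rfl, (hvu'.trans (((hco.tail hab).wordEquiv hab).append hyx)).trans hvt'.symm⟩
  · obtain ⟨r, x, hvx, hx, hsx⟩ := hN.exists_syllable hM hr hl hab hb
    obtain ⟨r', x', hvx', hx', hsx'⟩ := hN.exists_syllable hM hr hl hac hc
    have hred := hN.isReduced hr hl hvx
    have hlen := hvx.length_eq
    have hxx' : WordEquiv M x x' :=
      hN.syllable_unique rfl hred (hlen ▸ hl) (hvx.symm.trans hvx') hx hx'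
    obtain ⟨d, hdb, hd⟩ := hsx.exists_isHead
    obtain ⟨e, hec, he⟩ := hsx'.exists_isHead
    rw [List.length_append] at hlen
    exact absurd (hdb ▸ hsx) (hN.not_hasWordSyllables_third hM hred.append_right (by omega) hd
      (hxx'.isHead_iff.2 he) (hdb ▸ hec ▸ hbc) (hdb ▸ hab.1) (hec ▸ hac.1))

theorem HeadExchange.isReduced_of_headChange (hN : HeadExchange M N) (hM : ∀ i j, M i j = M j i)
    (hr : IsReduced M (a :: v)) (hl : v.length ≤ N) (h : HeadChange M a v b v') :
    IsReduced M (b :: v') := by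
  rcases h with ⟨rfl, h⟩ | ⟨hp, u, u', y, hco, hv, hv', hy⟩
  · exact hr.cons_congr h (hN.isReduced hr.1 hl h)
  · have hlen := hco.length_eq
    have hlen' := hv.length_eq
    simp only [List.length_cons, List.length_append] at hlen hlen'
    have hred : IsReduced M ((b :: u') ++ y) :=
      hN.isReduced_append hM hp (hN.isReduced hr.1 hl hv).append_right
        (by simp only [List.length_append, List.length_cons]; omega) hco.right hy
    refine hred.cons_congr hv'.symm (hN.isReduced hred.1 ?_ hv'.symm)
    change (u' ++ y).length ≤ N
    rw [List.length_append]
    omega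

theorem DihedralMove.cons_cases (h : DihedralMove M (b :: v) w) :
    (∃ v', w = b :: v' ∧ WordEquiv M v v') ∨
      ∃ i j c t t' β, IsEdge M i j ∧ b ≠ c ∧ CoGeodesic M i j (b :: t) (c :: t') ∧
        v = t ++ β ∧ w = c :: (t' ++ β) := by
  obtain ⟨i, j, α, u, u', β, hp, hu, hv, rfl⟩ := h
  match α, u, u' with
  | d :: α, u, u' =>
    simp only [List.cons_append, List.cons.injEq] at hv
    obtain ⟨rfl, rfl⟩ := hv
    exact Or.inl ⟨_, rfl, Relation.ReflTransGen.single ⟨i, j, α, u, u', β, hp, hu, rfl, rfl⟩⟩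
  | [], [], [] => exact Or.inl ⟨v, hv.symm, WordEquiv.refl v⟩
  | [], [], c :: t' => exact absurd hu.length_eq (by simp)
  | [], d :: t, [] => exact absurd hu.length_eq (by simp)
  | [], d :: t, c :: t' =>
    simp only [List.nil_append, List.cons_append, List.cons.injEq] at hv
    obtain ⟨rfl, rfl⟩ := hv
    by_cases hbc : b = c
    · subst hbc
      exact Or.inl ⟨_, rfl, ((hu.tail hp).wordEquiv hp).append_right β⟩
    · exact Or.inr ⟨i, j, c, t, t', β, hp, hbc, hu, rfl, rfl⟩

theorem HeadExchange.headSwap_of_coGeodesic (hN : HeadExchange M N) (hp : IsEdge M i j)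
    {β : List (ι × Bool)} (hr : IsReduced M (b :: (t ++ β))) (hl : (t ++ β).length ≤ N)
    (h : CoGeodesic M i j (b :: t) (c :: u)) : HeadSwap M i j b (t ++ β) c (u ++ β) := by
  have hlen := hl
  rw [List.length_append] at hlen
  obtain ⟨s, y, hβ, hs, hy⟩ := hN.exists_leftPart hp hr.1.append_right (by omega)
  have extend : ∀ x, WordEquiv M (x ++ β) ((x ++ s) ++ y) := fun x => by
    rw [List.append_assoc]
    exact hβ.append_left x
  have hred : IsReduced M ((b :: (t ++ s)) ++ y) :=
    hr.cons_congr (extend t) (hN.isReduced hr.1 hl (extend t))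
  have hgeo : DihedralGeodesic M i j ((b :: t) ++ s) :=
    hred.append_left.dihedralGeodesic hp (h.left.1.append hs.1)
  exact ⟨t ++ s, u ++ s, y, h.append hp hgeo, extend t, extend u, hy⟩

theorem HeadExchange.headChange_of_dihedralMove (hN : HeadExchange M N)
    (hM : ∀ i j, M i j = M j i) (hr : IsReduced M (b :: v')) (hl : v'.length ≤ N)
    (h : HeadChange M a v b v') (hmove : DihedralMove M (b :: v') w) :
    ∃ c w', w = c :: w' ∧ HeadChange M a v c w' := by
  obtain ⟨v'', rfl, he⟩ | ⟨i, j, c, t, t', β, hp, hbc, hco, rfl, rfl⟩ := hmove.cons_cases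
  · exact ⟨b, v'', rfl, h.imp (fun h => ⟨h.1, h.2.trans he⟩)
      fun h => ⟨h.1, h.2.congr (WordEquiv.refl v) he⟩⟩
  · refine ⟨c, t' ++ β, rfl, ?_⟩
    obtain ⟨hbc', hswap⟩ := (hN.headSwap_of_coGeodesic hp hr hl hco).on_heads hM hp hbc
    rcases h with ⟨rfl, he⟩ | ⟨hab, hba⟩
    · exact Or.inr ⟨hbc', hswap.congr he.symm (WordEquiv.refl _)⟩
    · exact Or.inl (hN.headSwap_unique hM hr.1 hl (hab.symm hM) hbc'
        (hba.swap hM hab.1).symm hswap)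

theorem HeadExchange.exists_headChange (hN : HeadExchange M N) (hM : ∀ i j, M i j = M j i)
    (hr : IsReduced M (a :: v)) (hl : v.length ≤ N) (h : WordEquiv M (a :: v) w) :
    ∃ b v', w = b :: v' ∧ HeadChange M a v b v' := by
  induction h with
  | refl => exact ⟨a, v, rfl, Or.inl ⟨rfl, WordEquiv.refl v⟩⟩
  | tail hx hmove ih =>
    obtain ⟨b, v', rfl, hchange⟩ := ih
    exact hN.headChange_of_dihedralMove hM (hN.isReduced_of_headChange hM hr hl hchange)
      (WordEquiv.length_tail_eq hx ▸ hl) hchange hmove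

theorem headExchange (hM : ∀ i j, M i j = M j i) (N : ℕ) : HeadExchange M N := by
  induction N with
  | zero =>
    refine ⟨fun {w w'} _ hl he => ?_, fun _ hl => absurd hl (Nat.not_lt_zero _)⟩
    obtain rfl : w' = [] := List.length_eq_zero_iff.1 (he.length_eq ▸ Nat.le_zero.1 hl)
    trivial
  | succ N ih =>
    refine ⟨fun {w w'} hr hl he => ?_, fun {a v b v'} hr hl he => ?_⟩
    · match w with
      | [] => exact he.eq_nil ▸ trivial
      | a :: v =>
        obtain ⟨b, v', rfl, h⟩ := ih.exists_headChange hM hr (Nat.le_of_succ_le_succ hl) he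
        exact ih.isReduced_of_headChange hM hr (Nat.le_of_succ_le_succ hl) h
    · obtain ⟨c, w', hw, h⟩ := ih.exists_headChange hM hr (Nat.le_of_lt_succ hl) he
      obtain ⟨rfl, rfl⟩ := List.cons.inj hw
      exact h

end Exchange

/-! ### The action on classes of reduced words -/

section ReducedClass

variable {ι : Type*} [DecidableEq ι]

/-- Equivalence of reduced words under dihedral moves. -/
def reducedSetoid (M : ι → ι → ℕ) : Setoid {w : List (ι × Bool) // IsReduced M w} where
  r w w' := WordEquiv M w.1 w'.1
  iseqv := ⟨fun w => WordEquiv.refl w.1, WordEquiv.symm, WordEquiv.trans⟩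

/-- Reduced words up to equivalence. The Artin group acts on them as it does on itself by left
multiplication. -/
def ReducedClass (M : ι → ι → ℕ) : Type _ := Quotient (reducedSetoid M)

/-- The class of a reduced word. -/
def ReducedClass.mk {M : ι → ι → ℕ} (w : List (ι × Bool)) (h : IsReduced M w) : ReducedClass M :=
  Quotient.mk (reducedSetoid M) ⟨w, h⟩

open Classical in
/-- The word `a :: w`, with its first letter cancelled if possible. -/
noncomputable def reducedCons (M : ι → ι → ℕ) (a : ι × Bool) (w : List (ι × Bool)) :
    List (ι × Bool) :=
  if h : IsHead M (invLetter a) w then h.choose else a :: w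

variable {M : ι → ι → ℕ} {i j : ι} {a : ι × Bool} {u u' v v' w w' y z : List (ι × Bool)}

theorem IsReduced.cons (hr : IsReduced M w) (h : ¬ IsHead M (invLetter a) w) :
    IsReduced M (a :: w) :=
  ⟨hr, h⟩

theorem IsReduced.congr (hM : ∀ i j, M i j = M j i) (hr : IsReduced M w) (h : WordEquiv M w w') :
    IsReduced M w' :=
  (headExchange hM w.length).isReduced hr le_rfl h

theorem WordEquiv.of_cons (hM : ∀ i j, M i j = M j i) (hr : IsReduced M (a :: v))
    (h : WordEquiv M (a :: v) (a :: v')) : WordEquiv M v v' := by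
  rcases (headExchange hM _).headChange hr (Nat.lt_succ_self _) h with ⟨-, h⟩ | ⟨hp, -⟩
  · exact h
  · exact absurd rfl hp.1

theorem reducedCons_of_wordEquiv (hM : ∀ i j, M i j = M j i) (hr : IsReduced M w)
    (h : WordEquiv M w (invLetter a :: z)) : WordEquiv M (reducedCons M a w) z := by
  have hd : IsHead M (invLetter a) w := ⟨z, h⟩
  rw [reducedCons, dif_pos hd]
  exact WordEquiv.of_cons hM (hr.congr hM hd.choose_spec) (hd.choose_spec.symm.trans h)

theorem reducedCons_of_isReduced (h : IsReduced M (a :: w)) : reducedCons M a w = a :: w :=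
  dif_neg h.2

theorem isReduced_reducedCons (hM : ∀ i j, M i j = M j i) (a : ι × Bool) (hr : IsReduced M w) :
    IsReduced M (reducedCons M a w) := by
  by_cases h : IsHead M (invLetter a) w
  · obtain ⟨z, hz⟩ := h
    exact IsReduced.congr hM (hr.congr hM hz).1 (reducedCons_of_wordEquiv hM hr hz).symm
  · rw [reducedCons, dif_neg h]
    exact hr.cons h

theorem WordEquiv.reducedCons (hM : ∀ i j, M i j = M j i) (a : ι × Bool) (hr : IsReduced M w)
    (h : WordEquiv M w w') : WordEquiv M (reducedCons M a w) (reducedCons M a w') := by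
  by_cases hd : IsHead M (invLetter a) w
  · obtain ⟨z, hz⟩ := hd
    exact (reducedCons_of_wordEquiv hM hr hz).trans
      (reducedCons_of_wordEquiv hM (hr.congr hM h) (h.symm.trans hz)).symm
  · rw [reducedCons_of_isReduced (hr.cons hd),
      reducedCons_of_isReduced ((hr.congr hM h).cons (h.isHead_iff.not.1 hd))]
    exact h.cons a

namespace ReducedClass

theorem mk_eq_mk {h : IsReduced M w} {h' : IsReduced M w'} :
    mk w h = mk w' h' ↔ WordEquiv M w w' :=
  Quotient.eq (r := reducedSetoid M)

theorem ind {p : ReducedClass M → Prop} (h : ∀ w hw, p (mk w hw)) (x : ReducedClass M) : p x :=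
  Quotient.inductionOn x fun w => h w.1 w.2

/-- Multiplication of a class of reduced words by a letter on the left. -/
noncomputable def act (hM : ∀ i j, M i j = M j i) (a : ι × Bool) :
    ReducedClass M → ReducedClass M :=
  Quotient.map' (s₁ := reducedSetoid M) (s₂ := reducedSetoid M)
    (fun w => ⟨reducedCons M a w.1, isReduced_reducedCons hM a w.2⟩)
    fun w _ h => WordEquiv.reducedCons hM a w.2 h

theorem act_of_wordEquiv (hM : ∀ i j, M i j = M j i) (hr : IsReduced M w) (hz : IsReduced M z)
    (h : WordEquiv M w (invLetter a :: z)) : act hM a (mk w hr) = mk z hz :=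
  mk_eq_mk.2 (reducedCons_of_wordEquiv hM hr h)

theorem act_of_isReduced (hM : ∀ i j, M i j = M j i) (h : IsReduced M (a :: w)) :
    act hM a (mk w h.1) = mk (a :: w) h :=
  mk_eq_mk.2 (reducedCons_of_isReduced h ▸ WordEquiv.refl _)

theorem act_invLetter_act (hM : ∀ i j, M i j = M j i) (a : ι × Bool) (x : ReducedClass M) :
    act hM (invLetter a) (act hM a x) = x := by
  induction x using ind with
  | h w hw =>
    by_cases h : IsHead M (invLetter a) w
    · obtain ⟨z, hz⟩ := h
      have hr := hw.congr hM hz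
      rw [act_of_wordEquiv hM hw hr.1 hz, act_of_isReduced hM hr, mk_eq_mk]
      exact hz.symm
    · rw [act_of_isReduced hM (hw.cons h), act_of_wordEquiv hM _ hw]
      rw [invLetter_invLetter]
      exact WordEquiv.refl _

/-- The action of a generator as a permutation of the classes of reduced words. -/
noncomputable def genPerm (hM : ∀ i j, M i j = M j i) (i : ι) : Equiv.Perm (ReducedClass M) where
  toFun := act hM (i, true)
  invFun := act hM (i, false)
  left_inv := act_invLetter_act hM (i, true)
  right_inv := act_invLetter_act hM (i, false)

theorem act_mk_append (hM : ∀ i j, M i j = M j i) (hp : IsEdge M i j) (ha : a.1 = i ∨ a.1 = j)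
    (hu : DihedralGeodesic M i j u) (hu' : DihedralGeodesic M i j u') (hy : IsFreeOf M i j y)
    (hr : IsReduced M (u ++ y)) (hr' : IsReduced M (u' ++ y))
    (h : dihedralForm M i j u' =
      GarsideForm.act (M i j) (dihedralLetter i a) (dihedralForm M i j u)) :
    act hM a (mk (u ++ y) hr) = mk (u' ++ y) hr' := by
  have hhead := (headExchange hM (u ++ y).length).isHead_iff_isFirst hM hp hr le_rfl hu hy
    (a := invLetter a) ha
  by_cases hF : GarsideForm.IsFirst (M i j) (dihedralLetter i (invLetter a)) (dihedralForm M i j u)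
  · obtain ⟨t, ht, htu⟩ := exists_dihedralGeodesic_cons hp (a := invLetter a) ha
      (isValid_dihedralForm hp u) hF
    have htu' : dihedralForm M i j t = dihedralForm M i j u' := by
      rw [h, ← htu, dihedralForm_cons]
      exact (GarsideForm.act_act_not hp.one_le _ _ (isValid_dihedralForm hp t)).symm
    refine act_of_wordEquiv hM hr hr' ?_
    have hut : CoGeodesic M i j u (invLetter a :: t) := ⟨hu, ht, htu.symm⟩
    exact ((hut.wordEquiv hp).append_right y).trans
      (((CoGeodesic.wordEquiv hp ⟨ht.tail hp, hu', htu'⟩).append_right y).cons _)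
  · rw [act_of_isReduced hM (hr.cons (hhead.not.2 hF)), mk_eq_mk]
    exact (CoGeodesic.wordEquiv hp ⟨hu.cons hp ha hF, hu', h.symm⟩).append_right y

end ReducedClass

theorem altProd_semiconj {A B : Type*} (φ : A → B) {p q : Equiv.Perm A} {p' q' : Equiv.Perm B}
    (h : Function.Semiconj φ p p') (h' : Function.Semiconj φ q q') (n : ℕ) :
    Function.Semiconj φ ⇑(altProd n p q) ⇑(altProd n p' q') := by
  induction n generalizing p q p' q' with
  | zero => exact fun _ => rfl
  | succ n ih => exact h.comp_right (ih h' h)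

theorem ReducedClass.genPerm_braid (hM : ∀ i j, M i j = M j i) (hp : IsEdge M i j) :
    altProd (M i j) (genPerm hM i) (genPerm hM j) =
      altProd (M i j) (genPerm hM j) (genPerm hM i) := by
  ext x
  induction x using ind with
  | h w hw =>
    obtain ⟨u, y, he, hu, hy⟩ := (headExchange hM w.length).exists_leftPart hp hw le_rfl
    have hry := (hw.congr hM he).append_right
    choose f hf hform using
      fun s : {s // GarsideForm.IsValid (M i j) s} => exists_dihedralGeodesic hp s.2
    let φ : {s // GarsideForm.IsValid (M i j) s} → ReducedClass M := fun s =>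
      mk (f s ++ y)
        ((headExchange hM (f s ++ y).length).isReduced_append hM hp hry (by omega) (hf s) hy)
    have hφ : ∀ z, Function.Semiconj φ (GarsideForm.genPerm hp.two_le z)
        (genPerm hM (if z then i else j)) := fun z s => by
      refine (act_mk_append hM hp ?_ (hf s) (hf _) hy _ _ ?_).symm
      · cases z <;> simp
      · rw [hform, hform]
        cases z <;> simp [dihedralLetter, GarsideForm.genPerm, GarsideForm.act, hp.1.symm]
    have hx : mk w hw = φ ⟨dihedralForm M i j u, isValid_dihedralForm hp u⟩ :=
      mk_eq_mk.2 <| he.trans <|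
        (CoGeodesic.wordEquiv hp ⟨hu, hf _, (hform ⟨_, _⟩).symm⟩).append_right y
    have htrue : Function.Semiconj φ _ (genPerm hM i) := hφ true
    have hfalse : Function.Semiconj φ _ (genPerm hM j) := hφ false
    rw [hx, ← altProd_semiconj φ htrue hfalse, ← altProd_semiconj φ hfalse htrue,
      GarsideForm.genPerm_braid]

end ReducedClass

/-! ### Normal forms in Artin groups of large type -/

section NormalForm

/-- The matrix `M` defines an Artin group of large type. -/
structure IsLargeType {n : ℕ} (M : Fin n → Fin n → ℕ∞) : Prop where
  symm : ∀ i j, M i j = M j i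
  three_le : ∀ i j, i ≠ j → 3 ≤ M i j

/-- The matrix `M` with the label `∞` encoded as `0`. -/
def natLabel {n : ℕ} (M : Fin n → Fin n → ℕ∞) (i j : Fin n) : ℕ := (M i j).toNat

variable {n : ℕ} {M : Fin n → Fin n → ℕ∞} {i j : Fin n} {a : Letter n}
  {u u' w w' : List (Letter n)}

theorem IsLargeType.natLabel_symm (hA : IsLargeType M) (i j : Fin n) :
    natLabel M i j = natLabel M j i := by
  rw [natLabel, natLabel, hA.symm]

theorem natLabel_of_eq {m : ℕ} (h : M i j = m) : natLabel M i j = m := by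
  rw [natLabel, h, ENat.toNat_natCast]

theorem IsEdge.eq_natLabel (hp : IsEdge (natLabel M) i j) : M i j = natLabel M i j := by
  have htop : M i j ≠ ⊤ := fun h => by simpa [natLabel, h] using hp.2
  exact (ENat.natCast_toNat htop).symm

theorem IsLargeType.isEdge (hA : IsLargeType M) (hij : i ≠ j) {m : ℕ} (h : M i j = m) :
    IsEdge (natLabel M) i j := by
  have hm := hA.three_le i j hij
  rw [h] at hm
  exact ⟨hij, (natLabel_of_eq h).symm ▸ by exact_mod_cast hm⟩

theorem map_altProd {G H F : Type*} [Monoid G] [Monoid H] [FunLike F G H] [MonoidHomClass F G H]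
    (f : F) (k : ℕ) (x y : G) : f (altProd k x y) = altProd k (f x) (f y) := by
  induction k generalizing x y with
  | zero => exact map_one f
  | succ k ih => rw [altProd, altProd, map_mul, ih]

theorem altProd_gen_comm (hp : IsEdge (natLabel M) i j) :
    altProd (natLabel M i j) (gen n M i) (gen n M j) =
      altProd (natLabel M i j) (gen n M j) (gen n M i) := by
  have hrel := PresentedGroup.one_of_mem (rels := artinRels n M)
    ⟨i, j, hp.1, _, hp.eq_natLabel, rfl⟩
  rwa [map_mul, map_inv, mul_inv_eq_one, map_altProd, map_altProd] at hrel

theorem toGen_invLetter (a : Letter n) : toGen n M (invLetter a) = (toGen n M a)⁻¹ := by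
  obtain ⟨i, _ | _⟩ := a <;> simp [toGen, invLetter]

theorem wordElt_cons (a : Letter n) (w : List (Letter n)) :
    wordElt n M (a :: w) = toGen n M a * wordElt n M w := by
  rw [wordElt, List.map_cons, List.prod_cons, wordElt]

theorem wordElt_append (w w' : List (Letter n)) :
    wordElt n M (w ++ w') = wordElt n M w * wordElt n M w' := by
  rw [wordElt, List.map_append, List.prod_append, wordElt, wordElt]

theorem wordElt_replicate (r : ℕ) (a : Letter n) :
    wordElt n M (List.replicate r a) = toGen n M a ^ r := by
  rw [wordElt, List.map_replicate, List.prod_replicate]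

theorem wordElt_eq_mk (w : List (Letter n)) :
    wordElt n M w = PresentedGroup.mk (artinRels n M) (FreeGroup.mk w) := by
  have hlift : PresentedGroup.mk (artinRels n M) = FreeGroup.lift (gen n M) :=
    FreeGroup.ext_hom _ _ fun i => FreeGroup.lift_apply_of.symm
  rw [hlift, FreeGroup.lift_mk, wordElt]
  congr 2
  ext ⟨i, _ | _⟩ <;> rfl

theorem exists_wordElt (g : ArtinGroup n M) : ∃ w, wordElt n M w = g := by
  obtain ⟨x, rfl⟩ := PresentedGroup.mk_surjective _ g
  exact ⟨x.toWord, by rw [wordElt_eq_mk, FreeGroup.mk_toWord]⟩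

theorem genSet_eq_range : genSet n M = Set.range (toGen n M) := by
  ext x
  simp only [genSet, toGen, Set.mem_ofPred_eq, Set.mem_range, Prod.exists, Bool.exists_bool,
    Bool.false_eq_true, if_false, if_true, or_comm, eq_comm (a := x)]

theorem length_wordElt_le (w : List (Letter n)) : ℓA n M (wordElt n M w) ≤ w.length := by
  refine Nat.sInf_le ⟨w.map (toGen n M), fun x hx => ?_, List.length_map _, rfl⟩
  obtain ⟨a, -, rfl⟩ := List.mem_map.1 hx
  exact genSet_eq_range ▸ Set.mem_range_self a

theorem exists_geodesic (g : ArtinGroup n M) : ∃ w, wordElt n M w = g ∧ ℓA n M g = w.length := by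
  have hlists : ∀ x : List (ArtinGroup n M), (∀ a ∈ x, a ∈ genSet n M) ↔
      ∃ w, List.map (toGen n M) w = x := fun x => by
    rw [genSet_eq_range, ← Set.mem_range, Set.range_list_map, Set.mem_ofPred_eq]
  obtain ⟨w, hw⟩ := exists_wordElt g
  obtain ⟨x, hx, hlen, hprod⟩ := Nat.sInf_mem
    (s := {N | ∃ x : List (ArtinGroup n M), (∀ a ∈ x, a ∈ genSet n M) ∧ x.length = N ∧ x.prod = g})
    ⟨_, w.map (toGen n M), (hlists _).2 ⟨w, rfl⟩, rfl, hw⟩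
  obtain ⟨v, rfl⟩ := (hlists x).1 hx
  exact ⟨v, hprod, by rw [ℓA, wordLength, ← hlen, List.length_map]⟩

theorem wordElt_eq_of_dihedralForm_eq (hp : IsEdge (natLabel M) i j) (hu : OnPair i j u)
    (hu' : OnPair i j u') (h : dihedralForm (natLabel M) i j u = dihedralForm (natLabel M) i j u') :
    wordElt n M u = wordElt n M u' := by
  let X : Bool → ArtinGroup n M := fun z => if z then gen n M i else gen n M j
  have hX : altProd (natLabel M i j) (X true) (X false) =
      altProd (natLabel M i j) (X false) (X true) := altProd_gen_comm hp
  have hletter : ∀ a : Letter n, a.1 = i ∨ a.1 = j →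
      toGen n M a = GarsideForm.letterEval X (dihedralLetter i a) := by
    rintro ⟨k, σ⟩ (rfl | rfl) <;>
      simp [toGen, GarsideForm.letterEval, dihedralLetter, X, hp.1.symm]
  have heval : ∀ v, OnPair i j v →
      wordElt n M v = GarsideForm.eval (natLabel M i j) X (dihedralForm (natLabel M) i j v) := by
    intro v hv
    rw [dihedralForm, GarsideForm.eval_ofWord hp.two_le hX, List.map_map, wordElt]
    exact congrArg List.prod (List.map_congr_left fun a ha => hletter a (hv a ha))
  rw [heval u hu, heval u' hu', h]

theorem CoGeodesic.wordElt_eq (hp : IsEdge (natLabel M) i j)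
    (h : CoGeodesic (natLabel M) i j u u') : wordElt n M u = wordElt n M u' :=
  wordElt_eq_of_dihedralForm_eq hp h.left.1 h.right.1 h.form_eq

theorem WordEquiv.wordElt_eq (h : WordEquiv (natLabel M) w w') :
    wordElt n M w = wordElt n M w' := by
  induction h with
  | refl => rfl
  | tail _ hmove ih =>
    obtain ⟨i, j, α, u, u', β, hp, hu, rfl, rfl⟩ := hmove
    rw [ih, wordElt_append, wordElt_append, hu.wordElt_eq hp, ← wordElt_append, ← wordElt_append]

theorem isReduced_of_length_eq (h : ℓA n M (wordElt n M w) = w.length) :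
    IsReduced (natLabel M) w := by
  induction w with
  | nil => trivial
  | cons a w ih =>
    rw [wordElt_cons] at h
    constructor
    · refine ih ?_
      obtain ⟨v, hv, hlen⟩ := exists_geodesic (wordElt n M w)
      have hle := length_wordElt_le (M := M) (a :: v)
      have hle' := length_wordElt_le (M := M) w
      rw [wordElt_cons, hv, h, List.length_cons, List.length_cons] at hle
      omega
    · rintro ⟨z, hz⟩
      have hle := length_wordElt_le (M := M) z
      rw [hz.wordElt_eq, wordElt_cons, toGen_invLetter, mul_inv_cancel_left] at h
      have hlen := hz.length_eq
      simp only [List.length_cons] at h hlen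
      omega

/-- The action of an Artin group of large type on classes of reduced words. -/
noncomputable def reducedAction (hA : IsLargeType M) :
    ArtinGroup n M →* Equiv.Perm (ReducedClass (natLabel M)) :=
  PresentedGroup.toGroup (f := ReducedClass.genPerm hA.natLabel_symm) <| by
    rintro r ⟨i, j, hij, m, hm, rfl⟩
    rw [map_mul, map_inv, mul_inv_eq_one, map_altProd, map_altProd, FreeGroup.lift_apply_of,
      FreeGroup.lift_apply_of, ← natLabel_of_eq hm,
      ReducedClass.genPerm_braid _ (hA.isEdge hij hm)]

theorem reducedAction_toGen (hA : IsLargeType M) (a : Letter n) (x : ReducedClass (natLabel M)) :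
    reducedAction hA (toGen n M a) x = ReducedClass.act hA.natLabel_symm a x := by
  obtain ⟨i, _ | _⟩ := a
  · rw [toGen, if_neg Bool.false_ne_true, map_inv, reducedAction, gen, PresentedGroup.toGroup.of]
    rfl
  · rw [toGen, if_pos rfl, reducedAction, gen, PresentedGroup.toGroup.of]
    rfl

theorem reducedAction_wordElt (hA : IsLargeType M) (hr : IsReduced (natLabel M) w) :
    reducedAction hA (wordElt n M w) (ReducedClass.mk [] trivial) = ReducedClass.mk w hr := by
  induction w with
  | nil => rw [wordElt, List.map_nil, List.prod_nil, map_one, Equiv.Perm.one_apply]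
  | cons a w ih =>
    rw [wordElt_cons, map_mul, Equiv.Perm.mul_apply, ih hr.1, reducedAction_toGen,
      ReducedClass.act_of_isReduced _ hr]

theorem IsReduced.wordEquiv (hA : IsLargeType M) (hr : IsReduced (natLabel M) w)
    (hr' : IsReduced (natLabel M) w') (h : wordElt n M w = wordElt n M w') :
    WordEquiv (natLabel M) w w' := by
  rw [← ReducedClass.mk_eq_mk (h := hr) (h' := hr'), ← reducedAction_wordElt hA hr, h,
    reducedAction_wordElt hA hr']

theorem IsReduced.length_wordElt (hA : IsLargeType M) (hr : IsReduced (natLabel M) w) :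
    ℓA n M (wordElt n M w) = w.length := by
  obtain ⟨v, hv, hlen⟩ := exists_geodesic (wordElt n M w)
  have hv' : IsReduced (natLabel M) v := isReduced_of_length_eq (by rw [hv, hlen])
  rw [hlen, (hr.wordEquiv hA hv' hv.symm).length_eq]

end NormalForm

/-! ### First letters and syllables of group elements -/

section FirstLetter

variable {n : ℕ} {M : Fin n → Fin n → ℕ∞} {i j : Fin n} {a b c : Letter n} {r r' k k' : ℕ}
  {w : List (Letter n)} {g x y : ArtinGroup n M}

theorem length_mul_le (x y : ArtinGroup n M) : ℓA n M (x * y) ≤ ℓA n M x + ℓA n M y := by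
  obtain ⟨u, rfl, hu⟩ := exists_geodesic x
  obtain ⟨v, rfl, hv⟩ := exists_geodesic y
  rw [hu, hv, ← wordElt_append, ← List.length_append]
  exact length_wordElt_le _

theorem length_one : ℓA n M 1 = 0 :=
  Nat.le_zero.1 (length_wordElt_le (M := M) [])

theorem eq_one_of_length_eq_zero (h : ℓA n M x = 0) : x = 1 := by
  obtain ⟨u, rfl, hu⟩ := exists_geodesic x
  rw [List.length_eq_zero_iff.1 (hu.symm.trans h)]
  rfl

theorem wordElt_map_invLetter_reverse (w : List (Letter n)) :
    wordElt n M (w.map invLetter).reverse = (wordElt n M w)⁻¹ := by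
  rw [wordElt, wordElt, List.prod_inv_reverse, List.map_reverse, List.map_map, List.map_map]
  congr 2
  exact List.map_congr_left fun a _ => toGen_invLetter a

theorem length_inv (x : ArtinGroup n M) : ℓA n M x⁻¹ = ℓA n M x := by
  have hle : ∀ x : ArtinGroup n M, ℓA n M x⁻¹ ≤ ℓA n M x := by
    intro x
    obtain ⟨u, rfl, hu⟩ := exists_geodesic x
    rw [hu, ← wordElt_map_invLetter_reverse]
    exact (length_wordElt_le _).trans_eq (by rw [List.length_reverse, List.length_map])
  refine le_antisymm (hle x) ?_
  simpa only [inv_inv] using hle x⁻¹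

theorem length_toGen_pow_le (a : Letter n) (r : ℕ) : ℓA n M (toGen n M a ^ r) ≤ r := by
  rw [← wordElt_replicate]
  exact (length_wordElt_le _).trans_eq List.length_replicate

theorem length_toGen_mul_le (a : Letter n) (x : ArtinGroup n M) :
    ℓA n M (toGen n M a * x) ≤ ℓA n M x + 1 := by
  have hmul := length_mul_le (toGen n M a) x
  have hgen := length_toGen_pow_le (M := M) a 1
  rw [pow_one] at hgen
  omega

theorem exists_isReduced (g : ArtinGroup n M) :
    ∃ w, IsReduced (natLabel M) w ∧ wordElt n M w = g := by
  obtain ⟨w, rfl, hlen⟩ := exists_geodesic g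
  exact ⟨w, isReduced_of_length_eq hlen, rfl⟩

/-- Some geodesic word for `g` begins with the letter `a`, expressed through lengths. -/
def IsFirstLetter (a : Letter n) (g : ArtinGroup n M) : Prop :=
  ℓA n M ((toGen n M a)⁻¹ * g) < ℓA n M g

theorem IsFirstLetter.mul (h : IsFirstLetter a x)
    (hxy : ℓA n M (x * y) = ℓA n M x + ℓA n M y) : IsFirstLetter a (x * y) := by
  have hle := length_mul_le ((toGen n M a)⁻¹ * x) y
  rw [mul_assoc] at hle
  unfold IsFirstLetter at *
  omega

theorem not_isFirstLetter_one (a : Letter n) : ¬ IsFirstLetter a (1 : ArtinGroup n M) := by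
  rw [IsFirstLetter, length_one]
  exact Nat.not_lt_zero _

theorem IsFirstLetter.length_eq (h : IsFirstLetter a g) :
    ℓA n M g = ℓA n M ((toGen n M a)⁻¹ * g) + 1 := by
  have hle := length_toGen_mul_le a ((toGen n M a)⁻¹ * g)
  rw [mul_inv_cancel_left] at hle
  exact le_antisymm hle h

theorem isFirstLetter_wordElt_iff (hA : IsLargeType M) (hr : IsReduced (natLabel M) w) :
    IsFirstLetter a (wordElt n M w) ↔ IsHead (natLabel M) a w := by
  constructor
  · intro h
    obtain ⟨z, hz, hzlen⟩ := exists_geodesic ((toGen n M a)⁻¹ * wordElt n M w)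
    have haz : wordElt n M (a :: z) = wordElt n M w := by
      rw [wordElt_cons, hz, mul_inv_cancel_left]
    refine ⟨z, hr.wordEquiv hA (isReduced_of_length_eq ?_) haz.symm⟩
    rw [haz, h.length_eq, hzlen, List.length_cons]
  · rintro ⟨z, hz⟩
    have haz := hr.congr hA.natLabel_symm hz
    rw [IsFirstLetter, hz.wordElt_eq, haz.length_wordElt hA, wordElt_cons, inv_mul_cancel_left,
      haz.1.length_wordElt hA]
    exact Nat.lt_succ_self _

theorem length_inv_toGen_mul_of_not_isFirstLetter (hA : IsLargeType M)
    (h : ¬ IsFirstLetter a g) : ℓA n M ((toGen n M a)⁻¹ * g) = ℓA n M g + 1 := by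
  obtain ⟨w, hw, rfl⟩ := exists_isReduced g
  rw [isFirstLetter_wordElt_iff hA hw, ← invLetter_invLetter a] at h
  have haw : IsReduced (natLabel M) (invLetter a :: w) := ⟨hw, h⟩
  rw [← toGen_invLetter, ← wordElt_cons, haw.length_wordElt hA, hw.length_wordElt hA,
    List.length_cons]

theorem exists_isFirstLetter (hA : IsLargeType M) (h : g ≠ 1) : ∃ a, IsFirstLetter a g := by
  obtain ⟨w, hw, rfl⟩ := exists_isReduced g
  cases w with
  | nil => exact absurd rfl h
  | cons a w => exact ⟨a, (isFirstLetter_wordElt_iff hA hw).2 (isHead_cons a w)⟩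

/-- The power `a ^ r` is the complete first syllable of `g`, for some geodesic word. -/
structure IsFirstSyllable (a : Letter n) (r : ℕ) (g : ArtinGroup n M) : Prop where
  pos : 1 ≤ r
  length_eq : ℓA n M g = r + ℓA n M ((toGen n M a ^ r)⁻¹ * g)
  maximal : ∀ b, b.1 = a.1 → ¬ IsFirstLetter b ((toGen n M a ^ r)⁻¹ * g)

/-- Some geodesic word for `g` begins with at least `k` syllables, powers of the generators
`x_i`, `x_j`, `x_i`, … alternately. -/
def HasSyllables : ℕ → Fin n → Fin n → ArtinGroup n M → Prop
  | 0, _, _, _ => True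
  | k + 1, i, j, g => ∃ a r, a.1 = i ∧ IsFirstSyllable a r g ∧
      HasSyllables k j i ((toGen n M a ^ r)⁻¹ * g)

theorem hasSyllables_wordElt_iff (hA : IsLargeType M) (hr : IsReduced (natLabel M) w) :
    HasSyllables k i j (wordElt n M w) ↔ HasWordSyllables (natLabel M) k i j w := by
  induction k generalizing i j w with
  | zero => exact Iff.rfl
  | succ k ih =>
    constructor
    · rintro ⟨a, r, rfl, ha, hs⟩
      obtain ⟨x, hx, he⟩ := exists_isReduced ((toGen n M a ^ r)⁻¹ * wordElt n M w)
      have hax : wordElt n M (List.replicate r a ++ x) = wordElt n M w := by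
        rw [wordElt_append, wordElt_replicate, he, mul_inv_cancel_left]
      have hrax : IsReduced (natLabel M) (List.replicate r a ++ x) := by
        apply isReduced_of_length_eq
        rw [hax, ha.length_eq, ← he, hx.length_wordElt hA, List.length_append,
          List.length_replicate]
      refine ⟨a, r, x, rfl, ha.pos, hr.wordEquiv hA hrax hax.symm, fun b hb => ?_, ?_⟩
      · rw [← isFirstLetter_wordElt_iff hA hx, he]
        exact ha.maximal b hb
      · rwa [← ih hx, he]
    · rintro ⟨a, r, x, rfl, hpos, he, hno, hs⟩
      have hx := (hr.congr hA.natLabel_symm he).append_right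
      have hrest : (toGen n M a ^ r)⁻¹ * wordElt n M w = wordElt n M x := by
        rw [he.wordElt_eq, wordElt_append, wordElt_replicate, inv_mul_cancel_left]
      refine ⟨a, r, rfl, ⟨hpos, ?_, fun b hb => ?_⟩, ?_⟩
      · rw [hrest, hr.length_wordElt hA, hx.length_wordElt hA, he.length_eq, List.length_append,
          List.length_replicate]
      · rw [hrest, isFirstLetter_wordElt_iff hA hx]
        exact hno b hb
      · rwa [hrest, ih hx]

theorem IsFirstLetter.isEdge_and_hasSyllables (hA : IsLargeType M) (ha : IsFirstLetter a g)
    (hb : IsFirstLetter b g) (hab : a ≠ b) :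
    IsEdge (natLabel M) a.1 b.1 ∧ HasSyllables (natLabel M a.1 b.1) a.1 b.1 g := by
  obtain ⟨w, hw, rfl⟩ := exists_isReduced g
  rw [isFirstLetter_wordElt_iff hA hw] at ha hb
  rw [hasSyllables_wordElt_iff hA hw]
  exact (headExchange hA.natLabel_symm _).hasWordSyllables_of_isHead_of_isHead hA.natLabel_symm hw
    le_rfl ha hb hab

theorem IsFirstLetter.eq_of_fst_eq (hA : IsLargeType M) (ha : IsFirstLetter a g)
    (hb : IsFirstLetter b g) (h : a.1 = b.1) : a = b := by
  by_contra hab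
  exact (ha.isEdge_and_hasSyllables hA hb hab).1.1 h

theorem IsFirstLetter.not_hasSyllables_third (hA : IsLargeType M) (hb : IsFirstLetter b g)
    (hc : IsFirstLetter c g) (hbc : b.1 ≠ c.1) (hib : i ≠ b.1) (hic : i ≠ c.1) :
    ¬ HasSyllables 2 b.1 i g := by
  obtain ⟨w, hw, rfl⟩ := exists_isReduced g
  rw [isFirstLetter_wordElt_iff hA hw] at hb hc
  rw [hasSyllables_wordElt_iff hA hw]
  exact (headExchange hA.natLabel_symm _).not_hasWordSyllables_third hA.natLabel_symm hw
    le_rfl hb hc hbc hib hic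

theorem HasSyllables.mono (hk : k ≤ k') (h : HasSyllables k' i j g) : HasSyllables k i j g := by
  induction k generalizing k' i j g with
  | zero => trivial
  | succ k ih =>
    obtain ⟨k', rfl⟩ := Nat.exists_eq_add_of_lt hk
    obtain ⟨a, r, ha, hs, hrest⟩ := h
    exact ⟨a, r, ha, hs, ih (Nat.le_add_right k k') hrest⟩

theorem isFirstLetter_of_length_eq_add (hr : 1 ≤ r)
    (h : ℓA n M g = r + ℓA n M ((toGen n M a ^ r)⁻¹ * g)) : IsFirstLetter a g := by
  obtain ⟨r, rfl⟩ := Nat.exists_eq_add_of_le' hr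
  have hle := length_mul_le (toGen n M a ^ r) ((toGen n M a ^ (r + 1))⁻¹ * g)
  have hpow := length_toGen_pow_le (M := M) a r
  rw [pow_succ', mul_inv_rev, mul_assoc, mul_inv_cancel_left] at hle
  rw [pow_succ', mul_inv_rev, mul_assoc] at h
  rw [IsFirstLetter]
  omega

theorem IsFirstSyllable.isFirstLetter (h : IsFirstSyllable a r g) : IsFirstLetter a g :=
  isFirstLetter_of_length_eq_add h.pos h.length_eq

theorem HasSyllables.exists_isFirstLetter (h : HasSyllables (k + 1) i j g) :
    ∃ a, a.1 = i ∧ IsFirstLetter a g := by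
  obtain ⟨a, r, ha, hs, -⟩ := h
  exact ⟨a, ha, hs.isFirstLetter⟩

theorem eq_invLetter_of_fst_eq (h : b.1 = a.1) (hne : b ≠ a) : b = invLetter a := by
  refine Prod.ext h (Bool.eq_not_of_ne fun hσ => hne (Prod.ext h hσ))

theorem IsFirstLetter.not_isFirstLetter_invLetter (h : IsFirstLetter a g) :
    ¬ IsFirstLetter (invLetter a) ((toGen n M a)⁻¹ * g) := by
  rw [IsFirstLetter, toGen_invLetter, inv_inv, mul_inv_cancel_left, h.length_eq]
  omega

theorem IsFirstLetter.exists_isFirstSyllable (h : IsFirstLetter a g) :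
    ∃ r, IsFirstSyllable a r g := by
  induction hk : ℓA n M g using Nat.strong_induction_on generalizing g with
  | _ k ih =>
    have hlen := h.length_eq
    by_cases hrest : IsFirstLetter a ((toGen n M a)⁻¹ * g)
    · obtain ⟨r, hr⟩ := ih _ (by omega) hrest rfl
      have hpow : (toGen n M a ^ (r + 1))⁻¹ * g =
          (toGen n M a ^ r)⁻¹ * ((toGen n M a)⁻¹ * g) := by
        rw [pow_succ', mul_inv_rev, mul_assoc]
      refine ⟨r + 1, r.succ_pos, ?_, hpow ▸ hr.maximal⟩
      rw [hpow, hlen, hr.length_eq]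
      omega
    · refine ⟨1, le_rfl, by rw [pow_one, hlen, add_comm], fun b hb hfirst => ?_⟩
      rw [pow_one] at hfirst
      by_cases hba : b = a
      · exact hrest (hba ▸ hfirst)
      · exact h.not_isFirstLetter_invLetter (eq_invLetter_of_fst_eq hb hba ▸ hfirst)

theorem IsFirstSyllable.le (h : IsFirstSyllable a r g) (h' : IsFirstSyllable a r' g) :
    r' ≤ r := by
  by_contra! hlt
  obtain ⟨s, rfl⟩ := Nat.exists_eq_add_of_lt hlt
  refine h.maximal a rfl (isFirstLetter_of_length_eq_add (r := s + 1) (Nat.le_add_left 1 s) ?_)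
  have hpow : (toGen n M a ^ (r + s + 1))⁻¹ * g =
      (toGen n M a ^ (s + 1))⁻¹ * ((toGen n M a ^ r)⁻¹ * g) := by
    rw [add_assoc, pow_add, mul_inv_rev, mul_assoc]
  have hlen := h.length_eq
  have hlen' := h'.length_eq
  rw [hpow] at hlen'
  omega

theorem IsFirstSyllable.unique (hA : IsLargeType M) (h : IsFirstSyllable a r g)
    (h' : IsFirstSyllable b r' g) (hab : a.1 = b.1) : a = b ∧ r = r' := by
  obtain rfl := h.isFirstLetter.eq_of_fst_eq hA h'.isFirstLetter hab
  exact ⟨rfl, le_antisymm (h'.le h) (h.le h')⟩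

theorem HasSyllables.of_isFirstSyllable (hA : IsLargeType M) (hs : HasSyllables (k + 1) i j g)
    (h : IsFirstSyllable a r g) (ha : a.1 = i) :
    HasSyllables k j i ((toGen n M a ^ r)⁻¹ * g) := by
  obtain ⟨b, s, hb, hs, hrest⟩ := hs
  obtain ⟨rfl, rfl⟩ := hs.unique hA h (hb.trans ha.symm)
  exact hrest

theorem IsFirstLetter.hasSyllables_one (h : IsFirstLetter a g) (j : Fin n) :
    HasSyllables 1 a.1 j g := by
  obtain ⟨r, hr⟩ := h.exists_isFirstSyllable
  exact ⟨a, r, rfl, hr, trivial⟩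

end FirstLetter

/-! ### Cosets of the dihedral subgroups -/

section DihedralSubgroup

variable {n : ℕ} {M : Fin n → Fin n → ℕ∞} {i j : Fin n} {a b c d e f : Letter n}
  {r s t k : ℕ} {g h u x y z : ArtinGroup n M}

theorem toGen_mem_Gij (ha : a.1 = i ∨ a.1 = j) : toGen n M a ∈ Gij n M i j := by
  have hgen : gen n M a.1 ∈ Gij n M i j :=
    Subgroup.subset_closure (ha.imp (congrArg _) (congrArg _))
  rw [toGen]
  split_ifs
  · exact hgen
  · exact inv_mem hgen

theorem exists_onPair_of_mem_Gij (hx : x ∈ Gij n M i j) :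
    ∃ u, OnPair i j u ∧ wordElt n M u = x := by
  induction hx using Subgroup.closure_induction with
  | mem x hx =>
    obtain rfl | rfl := hx
    · exact ⟨[(i, true)], by simp [OnPair], by simp [wordElt, toGen]⟩
    · exact ⟨[(j, true)], by simp [OnPair], by simp [wordElt, toGen]⟩
  | one => exact ⟨[], by simp [OnPair], rfl⟩
  | mul x y _ _ hx hy =>
    obtain ⟨u, hu, rfl⟩ := hx
    obtain ⟨v, hv, rfl⟩ := hy
    exact ⟨u ++ v, hu.append hv, wordElt_append u v⟩
  | inv x _ hx =>
    obtain ⟨u, hu, rfl⟩ := hx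
    refine ⟨(u.map invLetter).reverse, fun a ha => ?_, wordElt_map_invLetter_reverse u⟩
    obtain ⟨b, hb, rfl⟩ := List.mem_map.1 (List.mem_reverse.1 ha)
    exact hu b hb

theorem exists_dihedralGeodesic_of_mem_Gij (hp : IsEdge (natLabel M) i j)
    (hx : x ∈ Gij n M i j) : ∃ u, DihedralGeodesic (natLabel M) i j u ∧ wordElt n M u = x := by
  obtain ⟨u, hu, rfl⟩ := exists_onPair_of_mem_Gij hx
  obtain ⟨v, hv, hform⟩ := exists_dihedralGeodesic hp (isValid_dihedralForm hp u)
  exact ⟨v, hv, wordElt_eq_of_dihedralForm_eq hp hv.1 hu hform⟩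

/-- No first letter of `y` is a power of `x_i` or `x_j`; when `m_{ij} < ∞` this makes `y` the
unique shortest element of the coset `G(i,j) y`. -/
def IsCosetMin (i j : Fin n) (y : ArtinGroup n M) : Prop :=
  ∀ a, IsFirstLetter a y → a.1 ≠ i ∧ a.1 ≠ j

theorem IsCosetMin.length_mul (hy : IsCosetMin i j y) (hA : IsLargeType M)
    (hp : IsEdge (natLabel M) i j) (hx : x ∈ Gij n M i j) :
    ℓA n M (x * y) = ℓA n M x + ℓA n M y := by
  obtain ⟨u, hu, rfl⟩ := exists_dihedralGeodesic_of_mem_Gij hp hx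
  obtain ⟨v, hv, rfl⟩ := exists_isReduced y
  have hfree : IsFreeOf (natLabel M) i j v :=
    fun a ha => hy a ((isFirstLetter_wordElt_iff hA hv).2 ha)
  have huv : IsReduced (natLabel M) (u ++ v) :=
    (headExchange hA.natLabel_symm (u ++ v).length).isReduced_append hA.natLabel_symm hp hv
      (Nat.le_succ _) hu hfree
  rw [← wordElt_append, huv.length_wordElt hA, huv.append_left.length_wordElt hA,
    hv.length_wordElt hA, List.length_append]

theorem exists_isFirstLetter_of_mem_Gij (hA : IsLargeType M) (hp : IsEdge (natLabel M) i j)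
    (hx : x ∈ Gij n M i j) (hne : x ≠ 1) : ∃ a, (a.1 = i ∨ a.1 = j) ∧ IsFirstLetter a x := by
  by_contra! hno
  have hmin : IsCosetMin i j x := fun a ha => not_or.1 fun h => hno a h ha
  have hlen := hmin.length_mul hA hp (inv_mem hx)
  rw [inv_mul_cancel, length_one] at hlen
  exact hne (eq_one_of_length_eq_zero (Nat.eq_zero_of_add_eq_zero_left hlen.symm))

theorem IsCosetMin.isFirstLetter_mul_iff (hy : IsCosetMin i j y) (hA : IsLargeType M)
    (hp : IsEdge (natLabel M) i j) (hx : x ∈ Gij n M i j) (ha : a.1 = i ∨ a.1 = j) :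
    IsFirstLetter a (x * y) ↔ IsFirstLetter a x := by
  rw [IsFirstLetter, IsFirstLetter, ← mul_assoc, hy.length_mul hA hp hx,
    hy.length_mul hA hp (mul_mem (inv_mem (toGen_mem_Gij ha)) hx), add_lt_add_iff_right]

theorem IsMaxLD.isCosetMin (hh : IsMaxLD n M i j g h) : IsCosetMin i j (h⁻¹ * g) := by
  intro a ha
  by_contra! hname
  obtain ⟨hmem, hdiv, hmax⟩ := hh
  rw [IsLeftDiv] at hdiv
  have hlen := ha.length_eq
  have hassoc : (h * toGen n M a)⁻¹ * g = (toGen n M a)⁻¹ * (h⁻¹ * g) := by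
    rw [mul_inv_rev, mul_assoc]
  have hle := length_mul_le (h * toGen n M a) ((h * toGen n M a)⁻¹ * g)
  have hle' := length_mul_le h (toGen n M a)
  have hgen := length_toGen_pow_le (M := M) a 1
  rw [mul_inv_cancel_left, hassoc] at hle
  rw [pow_one] at hgen
  have hlonger := hmax (h * toGen n M a)
    (mul_mem hmem (toGen_mem_Gij (or_iff_not_imp_left.2 hname)))
    (by rw [IsLeftDiv, hassoc]; omega)
  omega

theorem IsMaxLD.eq_of_isCosetMin (hh : IsMaxLD n M i j g h) (hA : IsLargeType M)
    (hp : IsEdge (natLabel M) i j) (hu : u ∈ Gij n M i j) (hmin : IsCosetMin i j (u⁻¹ * g)) :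
    h = u := by
  have hle := hh.isCosetMin.length_mul hA hp (mul_mem (inv_mem hu) hh.1)
  have hge := hmin.length_mul hA hp (mul_mem (inv_mem hh.1) hu)
  rw [mul_assoc, mul_inv_cancel_left] at hle hge
  exact (inv_mul_eq_one.1 (eq_one_of_length_eq_zero (by omega))).symm

theorem isLeftDiv_inv_iff : IsLeftDiv (ℓA n M) h⁻¹ g⁻¹ ↔ IsRightDiv (ℓA n M) h g := by
  rw [IsLeftDiv, IsRightDiv, length_inv, length_inv, inv_inv, ← length_inv (g * h⁻¹),
    mul_inv_rev, inv_inv, add_comm]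

theorem IsMaxRD.inv (hh : IsMaxRD n M i j g h) : IsMaxLD n M i j g⁻¹ h⁻¹ := by
  refine ⟨inv_mem hh.1, isLeftDiv_inv_iff.2 hh.2.1, fun h' hmem hdiv => ?_⟩
  rw [← inv_inv h', isLeftDiv_inv_iff] at hdiv
  rw [length_inv, ← length_inv h']
  exact hh.2.2 h'⁻¹ (inv_mem hmem) hdiv

theorem IsFirstLetter.of_isLeftDiv (ha : IsFirstLetter a u) (hd : IsLeftDiv (ℓA n M) u g) :
    IsFirstLetter a g := by
  have hmul := ha.mul (y := u⁻¹ * g) (by rw [mul_inv_cancel_left, hd])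
  rwa [mul_inv_cancel_left] at hmul

theorem IsLeftDiv.inv_toGen_mul (hd : IsLeftDiv (ℓA n M) u g) (ha : IsFirstLetter a u) :
    IsLeftDiv (ℓA n M) ((toGen n M a)⁻¹ * u) ((toGen n M a)⁻¹ * g) := by
  have hu := ha.length_eq
  have hg := (ha.of_isLeftDiv hd).length_eq
  rw [IsLeftDiv] at hd ⊢
  rw [mul_inv_rev, inv_inv, mul_assoc, mul_inv_cancel_left]
  omega

theorem isFirstSyllable_pow (ht : 1 ≤ t) (hl : ℓA n M (toGen n M a ^ t) = t) :
    IsFirstSyllable a t (toGen n M a ^ t) where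
  pos := ht
  length_eq := by rw [inv_mul_cancel, length_one, hl, add_zero]
  maximal b _ := by
    rw [inv_mul_cancel]
    exact not_isFirstLetter_one b

theorem not_hasSyllables_two_pow (hA : IsLargeType M) (ht : 1 ≤ t)
    (hl : ℓA n M (toGen n M d ^ t) = t) (j : Fin n) :
    ¬ HasSyllables 2 d.1 j (toGen n M d ^ t) := by
  intro hs
  have hrest := hs.of_isFirstSyllable hA (isFirstSyllable_pow ht hl) rfl
  rw [inv_mul_cancel] at hrest
  obtain ⟨a, -, ha⟩ := hrest.exists_isFirstLetter
  exact not_isFirstLetter_one a ha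

theorem eq_of_isFirstLetter_pow (hA : IsLargeType M) (hl : ℓA n M (toGen n M d ^ t) = t)
    (ha : IsFirstLetter a (toGen n M d ^ t)) : a = d := by
  obtain rfl | ht := Nat.eq_zero_or_pos t
  · exact absurd (pow_zero (toGen n M d) ▸ ha) (not_isFirstLetter_one a)
  by_contra hne
  obtain ⟨hp, hs⟩ :=
    (isFirstSyllable_pow ht hl).isFirstLetter.isEdge_and_hasSyllables hA ha (Ne.symm hne)
  exact not_hasSyllables_two_pow hA ht hl a.1 (hs.mono hp.two_le)

theorem eq_of_length_pow_mul_pow (hl : ℓA n M (toGen n M e ^ s * toGen n M f ^ t) = s + t)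
    (hs : 1 ≤ s) (ht : 1 ≤ t) (h : f.1 = e.1) : f = e := by
  by_contra hne
  obtain ⟨s, rfl⟩ := Nat.exists_eq_add_of_le' hs
  obtain ⟨t, rfl⟩ := Nat.exists_eq_add_of_le' ht
  rw [eq_invLetter_of_fst_eq h hne, toGen_invLetter, pow_succ, pow_succ', mul_assoc,
    mul_inv_cancel_left] at hl
  have hmul := length_mul_le (toGen n M e ^ s) ((toGen n M e)⁻¹ ^ t)
  have hes := length_toGen_pow_le (M := M) e s
  have het := length_toGen_pow_le (M := M) (invLetter e) t
  rw [toGen_invLetter] at het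
  omega

theorem eq_of_isFirstLetter_pow_mul_pow (hA : IsLargeType M)
    (hl : ℓA n M (toGen n M e ^ s * toGen n M f ^ t) = s + t) (hs : 1 ≤ s)
    (ha : IsFirstLetter a (toGen n M e ^ s * toGen n M f ^ t)) : a = e := by
  obtain rfl | ht := Nat.eq_zero_or_pos t
  · rw [pow_zero, mul_one] at ha hl
    exact eq_of_isFirstLetter_pow hA hl ha
  by_cases hname : f.1 = e.1
  · obtain rfl := eq_of_length_pow_mul_pow hl hs ht hname
    rw [← pow_add] at hl ha
    exact eq_of_isFirstLetter_pow hA hl ha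
  have hlf : ℓA n M (toGen n M f ^ t) = t := by
    have hmul := length_mul_le (toGen n M e ^ s) (toGen n M f ^ t)
    have hes := length_toGen_pow_le (M := M) e s
    have hft := length_toGen_pow_le (M := M) f t
    omega
  have hsyll : IsFirstSyllable e s (toGen n M e ^ s * toGen n M f ^ t) := by
    refine ⟨hs, by rw [inv_mul_cancel_left, hl, hlf], fun b hb hF => hname ?_⟩
    rw [inv_mul_cancel_left] at hF
    rw [← eq_of_isFirstLetter_pow hA hlf hF, hb]
  by_contra hne
  obtain ⟨hp, hss⟩ := hsyll.isFirstLetter.isEdge_and_hasSyllables hA ha (Ne.symm hne)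
  have hrest := (hss.mono hp.2).of_isFirstSyllable hA hsyll rfl
  rw [inv_mul_cancel_left] at hrest
  obtain ⟨b, hb, hF⟩ := hrest.exists_isFirstLetter
  rw [← hb, eq_of_isFirstLetter_pow hA hlf hF] at hrest
  exact not_hasSyllables_two_pow hA ht hlf _ hrest

theorem eq_one_of_isLeftDiv_one (hd : IsLeftDiv (ℓA n M) u 1) : u = 1 := by
  rw [IsLeftDiv, length_one] at hd
  exact eq_one_of_length_eq_zero (Nat.eq_zero_of_add_eq_zero_right hd)

theorem eq_pow_of_isLeftDiv_pow (hA : IsLargeType M) (hl : ℓA n M (toGen n M f ^ t) = t)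
    (hd : IsLeftDiv (ℓA n M) u (toGen n M f ^ t)) : u = toGen n M f ^ ℓA n M u := by
  induction t generalizing u with
  | zero =>
    rw [pow_zero] at hd
    rw [eq_one_of_isLeftDiv_one hd, length_one, pow_zero]
  | succ t ih =>
    obtain rfl | hne := eq_or_ne u 1
    · rw [length_one, pow_zero]
    obtain ⟨a, ha⟩ := exists_isFirstLetter hA hne
    obtain rfl := eq_of_isFirstLetter_pow hA hl (ha.of_isLeftDiv hd)
    have hlen := (ha.of_isLeftDiv hd).length_eq
    have hdiv := hd.inv_toGen_mul ha
    rw [pow_succ', inv_mul_cancel_left] at hlen hdiv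
    rw [pow_succ'] at hl
    rw [ha.length_eq, pow_succ', ← ih (by omega) hdiv, mul_inv_cancel_left]

theorem exists_eq_pow_mul_pow_of_isLeftDiv (hA : IsLargeType M)
    (hl : ℓA n M (toGen n M e ^ s * toGen n M f ^ t) = s + t)
    (hd : IsLeftDiv (ℓA n M) u (toGen n M e ^ s * toGen n M f ^ t)) :
    ∃ s' t', u = toGen n M e ^ s' * toGen n M f ^ t' ∧ ℓA n M u = s' + t' := by
  induction s generalizing u with
  | zero =>
    rw [pow_zero, one_mul] at hl hd
    refine ⟨0, ℓA n M u, ?_, (zero_add _).symm⟩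
    rw [pow_zero, one_mul]
    exact eq_pow_of_isLeftDiv_pow hA (hl.trans (zero_add t)) hd
  | succ s ih =>
    obtain rfl | hne := eq_or_ne u 1
    · exact ⟨0, 0, by rw [pow_zero, pow_zero, one_mul], length_one⟩
    obtain ⟨a, ha⟩ := exists_isFirstLetter hA hne
    obtain rfl :=
      eq_of_isFirstLetter_pow_mul_pow hA hl (Nat.le_add_left 1 s) (ha.of_isLeftDiv hd)
    have hlen := (ha.of_isLeftDiv hd).length_eq
    have hdiv := hd.inv_toGen_mul ha
    rw [pow_succ', mul_assoc, inv_mul_cancel_left] at hlen hdiv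
    rw [pow_succ', mul_assoc] at hl
    obtain ⟨s', t', hu, hlu⟩ := ih (by omega) hdiv
    refine ⟨s' + 1, t', ?_, by rw [ha.length_eq, hlu, Nat.add_right_comm]⟩
    rw [pow_succ', mul_assoc, ← hu, mul_inv_cancel_left]

-- A second syllable of `z`, together with the first letter `c`, would contradict
-- `IsFirstLetter.not_hasSyllables_third`.
theorem IsCosetMin.exists_eq_pow (hy : IsCosetMin i j y) (hA : IsLargeType M)
    (hp : IsEdge (natLabel M) i j) (hz : z ∈ Gij n M i j) (hd : IsFirstLetter d z)
    (hdn : d.1 = i ∨ d.1 = j) (hc : IsFirstLetter c (z * y)) (hci : c.1 ≠ i) (hcj : c.1 ≠ j) :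
    ∃ t, 1 ≤ t ∧ z = toGen n M d ^ t ∧ ℓA n M z = t := by
  obtain ⟨t, hsyll⟩ := hd.exists_isFirstSyllable
  have hrest : (toGen n M d ^ t)⁻¹ * z ∈ Gij n M i j :=
    mul_mem (inv_mem (pow_mem (toGen_mem_Gij hdn) t)) hz
  obtain h1 | hne := eq_or_ne ((toGen n M d ^ t)⁻¹ * z) 1
  · refine ⟨t, hsyll.pos, (inv_mul_eq_one.1 h1).symm, ?_⟩
    rw [hsyll.length_eq, h1, length_one, add_zero]
  exfalso
  obtain ⟨f, hfn, hf⟩ := exists_isFirstLetter_of_mem_Gij hA hp hrest hne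
  have hfd : f.1 ≠ d.1 := fun h => hsyll.maximal f h hf
  have hout : ∀ b : Letter n, b.1 = i ∨ b.1 = j → b.1 ≠ c.1 := by
    rintro b (h | h) e
    · exact hci (e ▸ h)
    · exact hcj (e ▸ h)
  have hdzy : IsFirstLetter d (z * y) := (hy.isFirstLetter_mul_iff hA hp hz hdn).2 hd
  refine hdzy.not_hasSyllables_third hA hc (hout d hdn) hfd (hout f hfn)
    ⟨d, t, rfl, ⟨hsyll.pos, ?_, fun b hb => ?_⟩, ?_⟩
  · rw [← mul_assoc, hy.length_mul hA hp hz, hy.length_mul hA hp hrest, hsyll.length_eq, add_assoc]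
  · rw [← mul_assoc, hy.isFirstLetter_mul_iff hA hp hrest (hb ▸ hdn)]
    exact hsyll.maximal b hb
  · refine IsFirstLetter.hasSyllables_one ?_ d.1
    rwa [← mul_assoc, hy.isFirstLetter_mul_iff hA hp hrest hfn]

end DihedralSubgroup

/-! ### Branching of left divisors out of a dihedral subgroup -/

section Branching

variable {n : ℕ} {M : Fin n → Fin n → ℕ∞} {i j p q q' : Fin n} {b c c' d d' : Letter n}
  {s t t' : ℕ} {h x x' y : ArtinGroup n M}

theorem isFirstLetter_invLetter_inv (ht : 1 ≤ t)
    (hl : ℓA n M (x * toGen n M d ^ t) = ℓA n M x + t) :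
    IsFirstLetter (invLetter d) (x * toGen n M d ^ t)⁻¹ := by
  refine isFirstLetter_of_length_eq_add ht ?_
  rw [toGen_invLetter, inv_pow, inv_inv, mul_inv_rev, mul_inv_cancel_left, ← mul_inv_rev,
    length_inv, length_inv, hl, add_comm]

theorem IsFirstLetter.of_mul_toGen_mul_toGen (hA : IsLargeType M)
    (hb : IsFirstLetter b (x * toGen n M d * toGen n M d))
    (hl : ℓA n M (x * toGen n M d * toGen n M d) = ℓA n M x + 2) :
    IsFirstLetter b (x * toGen n M d) := by
  by_contra hno
  have hb' := hb.length_eq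
  have hno' := length_inv_toGen_mul_of_not_isFirstLetter hA hno
  have hgen := length_toGen_pow_le (M := M) d 1
  rw [pow_one] at hgen
  have hxd := length_mul_le x (toGen n M d)
  have hxdd := length_mul_le (x * toGen n M d) (toGen n M d)
  have hbx := length_toGen_mul_le (invLetter b) x
  rw [toGen_invLetter] at hbx
  -- Here `b⁻¹ x d` is shortened by one letter both on cancelling its last `d` and on appending `d`.
  have hcancel : IsFirstLetter d ((toGen n M b)⁻¹ * (x * toGen n M d))⁻¹ := by
    rw [IsFirstLetter, ← mul_inv_rev, length_inv, length_inv, mul_assoc]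
    omega
  have happend : IsFirstLetter (invLetter d) ((toGen n M b)⁻¹ * (x * toGen n M d))⁻¹ := by
    rw [IsFirstLetter, toGen_invLetter, ← mul_inv_rev, length_inv, length_inv, ← mul_assoc,
      mul_inv_cancel_right, mul_assoc]
    omega
  have heq : d = invLetter d := hcancel.eq_of_fst_eq hA happend rfl
  exact Bool.self_ne_not d.2 (congrArg Prod.snd heq)

theorem length_mul_pow_of_le (hl : ℓA n M (x * toGen n M d ^ t) = ℓA n M x + t) (hst : s ≤ t) :
    ℓA n M (x * toGen n M d ^ s) = ℓA n M x + s := by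
  obtain ⟨r, rfl⟩ := Nat.exists_eq_add_of_le hst
  rw [pow_add, ← mul_assoc] at hl
  have hxs := length_mul_le x (toGen n M d ^ s)
  have hxr := length_mul_le (x * toGen n M d ^ s) (toGen n M d ^ r)
  have hs := length_toGen_pow_le (M := M) d s
  have hr := length_toGen_pow_le (M := M) d r
  omega

theorem IsFirstLetter.of_mul_pow (hA : IsLargeType M)
    (hb : IsFirstLetter b (x * toGen n M d ^ t))
    (hl : ℓA n M (x * toGen n M d ^ t) = ℓA n M x + t) (hs : 1 ≤ s) (hst : s ≤ t) :
    IsFirstLetter b (x * toGen n M d ^ s) := by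
  induction t, hst using Nat.le_induction with
  | base => exact hb
  | succ t hst ih =>
    obtain ⟨r, rfl⟩ := Nat.exists_eq_add_of_le' (hs.trans hst)
    refine ih ?_ (length_mul_pow_of_le hl (Nat.le_succ _))
    have hr := length_mul_pow_of_le hl (show r ≤ r + 1 + 1 by omega)
    rw [pow_succ, pow_succ, ← mul_assoc, ← mul_assoc] at hb hl
    rw [pow_succ, ← mul_assoc]
    exact hb.of_mul_toGen_mul_toGen hA (by omega)

/-- The left divisor `x` of `h y`, where `h ∈ G(i,j)` begins with `b`, branches off inside
`G(i,j)`: `h = x d ^ t` is geodesic, `x` does not begin with `b`, and after `x` the word for `h y`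
may be continued by a letter `c` outside `G(i,j)`. -/
structure IsBranching (i j : Fin n) (b : Letter n) (h y x : ArtinGroup n M) (c d : Letter n)
    (t : ℕ) : Prop where
  mem : x ∈ Gij n M i j
  ne_left : c.1 ≠ i
  ne_right : c.1 ≠ j
  onPair : d.1 = i ∨ d.1 = j
  pos : 1 ≤ t
  eq_mul_pow : h = x * toGen n M d ^ t
  length_eq : ℓA n M h = ℓA n M x + t
  isFirstLetter : IsFirstLetter c (toGen n M d ^ t * y)
  not_isFirstLetter : ¬ IsFirstLetter b x

/-- No three distinct generators `x_i`, `x_j`, `x_k` have `m_{ij} = m_{ik} = 3` and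
`m_{jk} < ∞`: the (3,3,m)-hypothesis. -/
def ThreeThreeHypothesis (M : Fin n → Fin n → ℕ∞) : Prop :=
  ¬ ∃ i j k : Fin n, i ≠ j ∧ i ≠ k ∧ j ≠ k ∧ M i j = 3 ∧ M i k = 3 ∧ M j k < ⊤

namespace IsBranching

theorem length_pow (D : IsBranching i j b h y x c d t) : ℓA n M (toGen n M d ^ t) = t := by
  have hle := length_mul_le x (toGen n M d ^ t)
  have hle' := length_toGen_pow_le (M := M) d t
  have hl := D.length_eq
  rw [D.eq_mul_pow] at hl
  omega

theorem isFirstSyllable (hA : IsLargeType M) (hp : IsEdge (natLabel M) i j)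
    (hy : IsCosetMin i j y) (D : IsBranching i j b h y x c d t) :
    IsFirstSyllable d t (toGen n M d ^ t * y) where
  pos := D.pos
  length_eq := by
    rw [inv_mul_cancel_left, hy.length_mul hA hp (pow_mem (toGen_mem_Gij D.onPair) t),
      D.length_pow]
  maximal a ha hfirst := by
    rw [inv_mul_cancel_left] at hfirst
    exact D.onPair.elim (fun h => (hy a hfirst).1 (ha.trans h))
      fun h => (hy a hfirst).2 (ha.trans h)

theorem letter_ne (D : IsBranching i j b h y x c d t) : c ≠ d := by
  rintro rfl
  exact D.onPair.elim D.ne_left D.ne_right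

theorem isEdge_and_hasSyllables (hA : IsLargeType M) (hp : IsEdge (natLabel M) i j)
    (hy : IsCosetMin i j y) (D : IsBranching i j b h y x c d t) :
    IsEdge (natLabel M) c.1 d.1 ∧ HasSyllables (natLabel M c.1 d.1 - 1) c.1 d.1 y := by
  have hsyll := D.isFirstSyllable hA hp hy
  obtain ⟨hedge, hs⟩ :=
    hsyll.isFirstLetter.isEdge_and_hasSyllables hA D.isFirstLetter D.letter_ne.symm
  refine ⟨hedge.symm hA.natLabel_symm, ?_⟩
  rw [hA.natLabel_symm c.1]
  obtain ⟨k, hk⟩ := Nat.exists_eq_add_of_le' (hedge.one_le)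
  rw [hk] at hs ⊢
  have hrest := hs.of_isFirstSyllable hA hsyll rfl
  rwa [inv_mul_cancel_left] at hrest

theorem fst_eq_left (hA : IsLargeType M) (hp : IsEdge (natLabel M) i j) (hy : IsCosetMin i j y)
    (D : IsBranching i j b h y x c d t) (D' : IsBranching i j b h y x' c' d' t') :
    c.1 = c'.1 := by
  by_contra hne
  obtain ⟨hedge, hs⟩ := D.isEdge_and_hasSyllables hA hp hy
  obtain ⟨hedge', hs'⟩ := D'.isEdge_and_hasSyllables hA hp hy
  have h2 : HasSyllables 2 c.1 d.1 y := hs.mono (Nat.le_sub_of_add_le hedge.2)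
  have h1 : HasSyllables 1 c'.1 d'.1 y := hs'.mono (Nat.le_sub_of_add_le hedge'.two_le)
  obtain ⟨e, he, hfirst⟩ := (h2.mono one_le_two).exists_isFirstLetter
  obtain ⟨e', he', hfirst'⟩ := h1.exists_isFirstLetter
  have hdc' : d.1 ≠ c'.1 := fun h =>
    D.onPair.elim (fun hi => D'.ne_left (h ▸ hi)) fun hj => D'.ne_right (h ▸ hj)
  rw [← he] at h2 hne hedge
  rw [← he'] at hne hdc'
  exact hfirst.not_hasSyllables_third hA hfirst' hne hedge.1.symm hdc' h2

end IsBranching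

theorem HasSyllables.eq_of_two (hA : IsLargeType M) (h3 : HasSyllables 3 p q y)
    (h2 : HasSyllables 2 p q' y) (hpq : p ≠ q) (hpq' : p ≠ q') : q = q' := by
  by_contra hne
  obtain ⟨a, r, ha, hsyll, hrest⟩ := h3
  obtain ⟨e, he, hfirst⟩ := hrest.exists_isFirstLetter
  obtain ⟨e', he', hfirst'⟩ := (h2.of_isFirstSyllable hA hsyll ha).exists_isFirstLetter
  subst he he'
  exact hfirst.not_hasSyllables_third hA hfirst' hne hpq hpq' hrest

namespace IsBranching

theorem fst_eq_right (hA : IsLargeType M) (h33 : ThreeThreeHypothesis M)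
    (hp : IsEdge (natLabel M) i j) (hy : IsCosetMin i j y)
    (D : IsBranching i j b h y x c d t) (D' : IsBranching i j b h y x' c' d' t') :
    d.1 = d'.1 := by
  by_contra hne
  obtain ⟨hedge, hs⟩ := D.isEdge_and_hasSyllables hA hp hy
  obtain ⟨hedge', hs'⟩ := D'.isEdge_and_hasSyllables hA hp hy
  rw [← D.fst_eq_left hA hp hy D'] at hedge' hs'
  have hfinite : M d.1 d'.1 < ⊤ := by
    have hij : M i j < ⊤ := hp.eq_natLabel ▸ ENat.natCast_lt_top _
    obtain hd | hd := D.onPair <;> obtain hd' | hd' := D'.onPair <;> rw [hd, hd'] at hne ⊢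
    · exact absurd rfl hne
    · exact hij
    · rwa [hA.symm]
    · exact absurd rfl hne
  have hfour : 4 ≤ natLabel M c.1 d.1 ∨ 4 ≤ natLabel M c.1 d'.1 := by
    by_contra! hlt
    refine h33 ⟨c.1, d.1, d'.1, hedge.1, hedge'.1, hne, ?_, ?_, hfinite⟩
    · rw [hedge.eq_natLabel, Nat.le_antisymm (Nat.le_of_lt_succ hlt.1) hedge.2]
      rfl
    · rw [hedge'.eq_natLabel, Nat.le_antisymm (Nat.le_of_lt_succ hlt.2) hedge'.2]
      rfl
  have h2 := hs.mono (Nat.le_sub_of_add_le hedge.2)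
  have h2' := hs'.mono (Nat.le_sub_of_add_le hedge'.2)
  obtain h4 | h4 := hfour
  · exact hne ((hs.mono (Nat.le_sub_of_add_le h4)).eq_of_two hA h2' hedge.1 hedge'.1)
  · exact hne ((hs'.mono (Nat.le_sub_of_add_le h4)).eq_of_two hA h2 hedge'.1 hedge.1).symm

theorem isFirstLetter_invLetter (D : IsBranching i j b h y x c d t) :
    IsFirstLetter (invLetter d) h⁻¹ := by
  have hl := D.length_eq
  rw [D.eq_mul_pow] at hl ⊢
  exact isFirstLetter_invLetter_inv D.pos hl

theorem exponent_le (hA : IsLargeType M) (hb : IsFirstLetter b h)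
    (D : IsBranching i j b h y x c d t) (D' : IsBranching i j b h y x' c' d t') : t' ≤ t := by
  by_contra! hlt
  obtain ⟨k, rfl⟩ := Nat.exists_eq_add_of_lt hlt
  have hx : x = x' * toGen n M d ^ (k + 1) := by
    refine mul_right_cancel (b := toGen n M d ^ t) ?_
    rw [← D.eq_mul_pow, D'.eq_mul_pow, mul_assoc, ← pow_add]
    congr 2
    omega
  have hl := D'.length_eq
  rw [D'.eq_mul_pow] at hb hl
  exact D.not_isFirstLetter
    (hx ▸ hb.of_mul_pow hA hl (Nat.le_add_left 1 k) (by omega))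

theorem unique (hA : IsLargeType M) (h33 : ThreeThreeHypothesis M)
    (hp : IsEdge (natLabel M) i j) (hy : IsCosetMin i j y) (hb : IsFirstLetter b h)
    (D : IsBranching i j b h y x c d t) (D' : IsBranching i j b h y x' c' d' t') :
    x = x' ∧ c = c' ∧ d = d' ∧ t = t' := by
  obtain rfl : d = d' := by
    have hfst : d.1 = d'.1 := D.fst_eq_right hA h33 hp hy D'
    have hinv := D.isFirstLetter_invLetter.eq_of_fst_eq hA D'.isFirstLetter_invLetter hfst
    rw [← invLetter_invLetter d, hinv, invLetter_invLetter]
  obtain rfl : t = t' := le_antisymm (D'.exponent_le hA hb D) (D.exponent_le hA hb D')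
  exact ⟨mul_right_cancel (D.eq_mul_pow.symm.trans D'.eq_mul_pow),
    D.isFirstLetter.eq_of_fst_eq hA D'.isFirstLetter (D.fst_eq_left hA hp hy D'), rfl, rfl⟩

end IsBranching

end Branching

/-! ### The right dihedral divisor grows slowly -/

section RightDivisor

variable {n : ℕ} {M : Fin n → Fin n → ℕ∞} {i j : Fin n} {a b c d e f : Letter n} {s t N N' : ℕ}
  {g h r u v w x y z H : ArtinGroup n M}

theorem eq_of_isFirstLetters_pow_mul_pow (hA : IsLargeType M)
    (hl : ℓA n M (toGen n M e ^ s * toGen n M f ^ t) = s + t)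
    (ha : IsFirstLetter a (toGen n M e ^ s * toGen n M f ^ t))
    (hb : IsFirstLetter b (toGen n M e ^ s * toGen n M f ^ t)) : a = b := by
  obtain rfl | hs := Nat.eq_zero_or_pos s
  · rw [pow_zero, one_mul] at ha hb hl
    rw [zero_add] at hl
    rw [eq_of_isFirstLetter_pow hA hl ha, eq_of_isFirstLetter_pow hA hl hb]
  · rw [eq_of_isFirstLetter_pow_mul_pow hA hl hs ha, eq_of_isFirstLetter_pow_mul_pow hA hl hs hb]

namespace IsBranching

theorem exists_eq_pow_mul_pow (hA : IsLargeType M) (D : IsBranching i j b h y x c d t)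
    (hl : ℓA n M (toGen n M e ^ N * toGen n M f ^ N') = N + N') (he : e.1 = d.1)
    (hx : IsLeftDiv (ℓA n M) x⁻¹ (toGen n M e ^ N * toGen n M f ^ N')) :
    ∃ k l, h = toGen n M (invLetter f) ^ k * toGen n M d ^ l ∧ ℓA n M h = k + l := by
  obtain ⟨l, k, hxinv, hlen⟩ := exists_eq_pow_mul_pow_of_isLeftDiv hA hl hx
  rw [length_inv] at hlen
  have hx' : x = toGen n M (invLetter f) ^ k * toGen n M (invLetter e) ^ l := by
    rw [← inv_inv x, hxinv, toGen_invLetter, toGen_invLetter, mul_inv_rev, inv_pow, inv_pow]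
  obtain rfl | hpos := Nat.eq_zero_or_pos l
  · exact ⟨k, t, by rw [D.eq_mul_pow, hx', pow_zero, mul_one], by rw [D.length_eq]; omega⟩
  have hk := length_toGen_pow_le (M := M) (invLetter f) k
  have hl' := length_toGen_pow_le (M := M) (invLetter e) l
  have hle := length_mul_le (toGen n M (invLetter f) ^ k)
    (toGen n M (invLetter e) ^ l * toGen n M d ^ t)
  have hle' := length_mul_le (toGen n M (invLetter e) ^ l) (toGen n M d ^ t)
  rw [← mul_assoc, ← hx', ← D.eq_mul_pow, D.length_eq] at hle
  rw [D.length_pow] at hle'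
  -- `x` ends in a power of the generator of `d`, and `x d ^ t` is geodesic, so the signs agree.
  have hsign : d = invLetter e :=
    eq_of_length_pow_mul_pow (M := M) (by omega) hpos D.pos he.symm
  refine ⟨k, l + t, ?_, by rw [D.length_eq]; omega⟩
  rw [D.eq_mul_pow, hx', ← hsign, mul_assoc, pow_add]

theorem eq_of_isLeftDiv_pow_mul_pow (hA : IsLargeType M) (D : IsBranching i j b h y x c d t)
    (ha : IsFirstLetter a h) (hb : IsFirstLetter b h)
    (hl : ℓA n M (toGen n M e ^ N * toGen n M f ^ N') = N + N') (he : e.1 = d.1)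
    (hx : IsLeftDiv (ℓA n M) x⁻¹ (toGen n M e ^ N * toGen n M f ^ N')) : a = b := by
  obtain ⟨k, l, heq, hlen⟩ := D.exists_eq_pow_mul_pow hA hl he hx
  rw [heq] at ha hb hlen
  exact eq_of_isFirstLetters_pow_mul_pow hA hlen ha hb

theorem not_isFirstLetter_rest (hA : IsLargeType M) (hp : IsEdge (natLabel M) i j)
    (D : IsBranching i j b h y x c d t) (ha : IsFirstLetter a h) (hb : IsFirstLetter b h)
    (hab : a ≠ b) (hw : IsCosetMin i j w) (he : e.1 = d.1) (hv : v ∈ Gij n M i j)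
    (hl : ℓA n M (toGen n M e ^ N * v) = N + ℓA n M v)
    (hx : IsLeftDiv (ℓA n M) x⁻¹ (toGen n M e ^ N * v)) :
    v ≠ 1 ∧ ∀ c', c'.1 = c.1 → ¬ IsFirstLetter c' (v * w) := by
  have hne : v ≠ 1 := by
    rintro rfl
    rw [length_one] at hl
    rw [← pow_zero (toGen n M e)] at hl hx
    exact hab (D.eq_of_isLeftDiv_pow_mul_pow hA ha hb hl he hx)
  refine ⟨hne, fun c' hc' hfirst => ?_⟩
  obtain ⟨f, hf, hfv⟩ := exists_isFirstLetter_of_mem_Gij hA hp hv hne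
  obtain ⟨N', -, heq, hlen⟩ := hw.exists_eq_pow hA hp hv hfv hf hfirst
    (hc' ▸ D.ne_left) (hc' ▸ D.ne_right)
  rw [hlen, heq] at hl
  rw [heq] at hx
  exact hab (D.eq_of_isLeftDiv_pow_mul_pow hA ha hb hl he hx)

theorem length_lt_of_isMaxLD (hA : IsLargeType M) (hp : IsEdge (natLabel M) i j)
    (hcd : IsEdge (natLabel M) c.1 d.1) (D : IsBranching i j b h y x c d t)
    (ha : IsFirstLetter a h) (hb : IsFirstLetter b h) (hab : a ≠ b) (hw : IsCosetMin i j w)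
    (hv : v ∈ Gij n M i j) (hx : IsLeftDiv (ℓA n M) x⁻¹ v)
    (hz : IsMaxLD n M c.1 d.1 (v * w) z) : ℓA n M z < ℓA n M v := by
  by_cases hd : ∃ e, e.1 = d.1 ∧ IsFirstLetter e (v * w)
  · obtain ⟨e, he, hfirst⟩ := hd
    have hev : IsFirstLetter e v := (hw.isFirstLetter_mul_iff hA hp hv (he ▸ D.onPair)).1 hfirst
    obtain ⟨N, hsyll⟩ := hev.exists_isFirstSyllable
    have hv' : (toGen n M e ^ N)⁻¹ * v ∈ Gij n M i j :=
      mul_mem (inv_mem (pow_mem (toGen_mem_Gij (he ▸ D.onPair)) N)) hv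
    have hlen := hsyll.length_eq
    obtain ⟨hne, hc⟩ := D.not_isFirstLetter_rest (N := N) hA hp ha hb hab hw he hv'
      (by rwa [mul_inv_cancel_left]) (by rwa [mul_inv_cancel_left])
    have hmin : IsCosetMin c.1 d.1 ((toGen n M e ^ N)⁻¹ * (v * w)) := by
      intro f hf
      rw [← mul_assoc] at hf
      refine ⟨fun hfc => hc f hfc hf, fun hfd => hsyll.maximal f (hfd.trans he.symm) ?_⟩
      exact (hw.isFirstLetter_mul_iff hA hp hv' (hfd ▸ D.onPair)).1 hf
    rw [hz.eq_of_isCosetMin hA hcd (pow_mem (toGen_mem_Gij (Or.inr he)) N) hmin]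
    have hpow := length_toGen_pow_le (M := M) e N
    have hpos : ℓA n M ((toGen n M e ^ N)⁻¹ * v) ≠ 0 := fun h =>
      hne (eq_one_of_length_eq_zero h)
    omega
  · push Not at hd
    obtain ⟨hne, hc⟩ := D.not_isFirstLetter_rest (e := d) (N := 0) hA hp ha hb hab hw rfl hv
      (by rw [pow_zero, one_mul, zero_add]) (by rwa [pow_zero, one_mul])
    have hmin : IsCosetMin c.1 d.1 (1⁻¹ * (v * w)) := by
      rw [inv_one, one_mul]
      exact fun f hf => ⟨fun hfc => hc f hfc hf, fun hfd => hd f hfd hf⟩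
    rw [hz.eq_of_isCosetMin hA hcd (one_mem _) hmin, length_one]
    exact Nat.pos_of_ne_zero fun h => hne (eq_one_of_length_eq_zero h)

end IsBranching

theorem IsMaxLD.eq_mul (hu : IsMaxLD n M i j g u) (hA : IsLargeType M)
    (hp : IsEdge (natLabel M) i j) (hr : r ∈ Gij n M i j) (hz : IsMaxLD n M i j (r * g) z) :
    z = r * u := by
  refine hz.eq_of_isCosetMin hA hp (mul_mem hr hu.1) ?_
  rw [mul_inv_rev, mul_assoc, inv_mul_cancel_left]
  exact hu.isCosetMin

theorem IsMaxRD.eq_mul (hu : IsMaxRD n M i j H u) (hA : IsLargeType M)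
    (hp : IsEdge (natLabel M) i j) (hr : r ∈ Gij n M i j) (hz : IsMaxRD n M i j (H * r) z) :
    z = u * r := by
  rw [← inv_inj, mul_inv_rev]
  refine hu.inv.eq_mul hA hp (inv_mem hr) ?_
  rw [← mul_inv_rev]
  exact hz.inv

theorem IsRightDiv.length_mul (hu : IsRightDiv (ℓA n M) u H)
    (hl : ℓA n M (H * x) = ℓA n M H + ℓA n M x) : ℓA n M (u * x) = ℓA n M u + ℓA n M x := by
  have hH := length_mul_le (H * u⁻¹) (u * x)
  rw [mul_assoc, inv_mul_cancel_left, hl, ← hu] at hH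
  have hle := length_mul_le u x
  omega

theorem IsMaxLD.isFirstLetter_iff (hu : IsMaxLD n M i j g u) (hA : IsLargeType M)
    (hp : IsEdge (natLabel M) i j) (ha : a.1 = i ∨ a.1 = j) :
    IsFirstLetter a u ↔ IsFirstLetter a g := by
  rw [← hu.isCosetMin.isFirstLetter_mul_iff hA hp hu.1 ha, mul_inv_cancel_left]

theorem IsBranching.length_isMaxRD_lt (hA : IsLargeType M) (hp : IsEdge (natLabel M) i j)
    (hcd : IsEdge (natLabel M) c.1 d.1) (D : IsBranching i j b h y x c d t)
    (ha : IsFirstLetter a h) (hb : IsFirstLetter b h) (hab : a ≠ b)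
    (hl : ℓA n M (H * x) = ℓA n M H + ℓA n M x) (hu : IsMaxRD n M i j H u)
    (hz : IsMaxRD n M c.1 d.1 (H * x) z) : ℓA n M z < ℓA n M u + ℓA n M x := by
  have hlen := hu.2.1.length_mul hl
  have hdiv : IsLeftDiv (ℓA n M) x⁻¹ (u * x)⁻¹ :=
    isLeftDiv_inv_iff.2 (by rw [IsRightDiv, mul_inv_cancel_right, hlen])
  have hsplit : (H * x)⁻¹ = (u * x)⁻¹ * (u⁻¹⁻¹ * H⁻¹) := by group
  have hlt := D.length_lt_of_isMaxLD hA hp hcd ha hb hab hu.inv.isCosetMin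
    (inv_mem (mul_mem hu.1 D.mem)) hdiv (hsplit ▸ hz.inv)
  rwa [length_inv, length_inv, hlen] at hlt

end RightDivisor

/-! ### Counting -/

section Counting

/-- The set `s` is finite and has at most `B` elements. -/
def HasCardLE {α : Type*} (s : Set α) (B : ℝ) : Prop :=
  s.Finite ∧ (s.ncard : ℝ) ≤ B

namespace HasCardLE

variable {α β : Type*} {s t : Set α} {B C : ℝ}

theorem nonneg (h : HasCardLE s B) : 0 ≤ B :=
  (Nat.cast_nonneg _).trans h.2

theorem empty (hB : 0 ≤ B) : HasCardLE (∅ : Set α) B :=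
  ⟨Set.finite_empty, by rwa [Set.ncard_empty, Nat.cast_zero]⟩

theorem subset (h : HasCardLE t B) (hst : s ⊆ t) : HasCardLE s B :=
  ⟨h.1.subset hst, le_trans (mod_cast Set.ncard_le_ncard hst h.1) h.2⟩

theorem mono (h : HasCardLE s B) (hBC : B ≤ C) : HasCardLE s C :=
  ⟨h.1, h.2.trans hBC⟩

theorem image (h : HasCardLE s B) (f : α → β) : HasCardLE (f '' s) B :=
  ⟨h.1.image f, le_trans (mod_cast Set.ncard_image_le h.1) h.2⟩

theorem preimage {f : α → β} {t : Set β} (h : HasCardLE t B) (hf : Function.Injective f) :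
    HasCardLE (f ⁻¹' t) B :=
  ⟨h.1.preimage hf.injOn,
    le_trans (mod_cast Set.ncard_le_ncard_of_injOn f (fun _ hx => hx) hf.injOn h.1) h.2⟩

theorem union (hs : HasCardLE s B) (ht : HasCardLE t C) : HasCardLE (s ∪ t) (B + C) :=
  ⟨hs.1.union ht.1, le_trans (mod_cast Set.ncard_union_le s t) (add_le_add hs.2 ht.2)⟩

end HasCardLE

variable {n : ℕ} {M : Fin n → Fin n → ℕ∞} {i j : Fin n} {a b c d : Letter n} {k t : ℕ}
  {g h r u x y H : ArtinGroup n M} {LD RD : Fin n → Fin n → ArtinGroup n M → ArtinGroup n M}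
  {B : ℕ → ℝ}

/-- Each element of a dihedral subgroup `G(i,j)` has at most `B k` permissible factorisations
in `𝒫_{ij}` with first factor of length `k`. -/
def DihedralBound (M : Fin n → Fin n → ℕ∞) (B : ℕ → ℝ) : Prop :=
  ∀ i j : Fin n, i ≠ j → ∀ h ∈ Gij n M i j, ∀ k,
    HasCardLE {h₁ | ℓA n M h₁ = k ∧ PijMem n M i j h₁ (h₁⁻¹ * h)} (B k)

/-- The left divisors `r` of `g` of length `k` beginning with `a` and with no other letter, such
that `(H r, r⁻¹ g)` satisfies the dihedral conditions of `𝒫`. The induction on `k` moves an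
initial part of the divisor into the prefix `H`. -/
def permissibleDivisors (LD RD : Fin n → Fin n → ArtinGroup n M → ArtinGroup n M)
    (H g : ArtinGroup n M) (a : Letter n) (k : ℕ) : Set (ArtinGroup n M) :=
  {r | ℓA n M r = k ∧ IsLeftDiv (ℓA n M) r g ∧
    (∀ i j, i ≠ j → PijMem n M i j (RD i j (H * r)) (LD i j (r⁻¹ * g))) ∧
    ∀ c, IsFirstLetter c r ↔ c = a}

theorem IsLeftDiv.length_mul (hr : IsLeftDiv (ℓA n M) r g)
    (hl : ℓA n M (H * g) = ℓA n M H + ℓA n M g) : ℓA n M (H * r) = ℓA n M H + ℓA n M r := by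
  have hle := length_mul_le H r
  have hle' := length_mul_le (H * r) (r⁻¹ * g)
  rw [mul_assoc, mul_inv_cancel_left, hl, ← hr] at hle'
  omega

theorem IsLeftDiv.trans (hx : IsLeftDiv (ℓA n M) x r) (hr : IsLeftDiv (ℓA n M) r g) :
    IsLeftDiv (ℓA n M) x g := by
  have hle := length_mul_le x (x⁻¹ * g)
  have hle' := length_mul_le (x⁻¹ * r) (r⁻¹ * g)
  rw [mul_inv_cancel_left] at hle
  rw [mul_assoc, mul_inv_cancel_left] at hle'
  rw [IsLeftDiv] at hx hr ⊢
  omega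

theorem IsLeftDiv.inv_mul (hx : IsLeftDiv (ℓA n M) x r) (hr : IsLeftDiv (ℓA n M) r g) :
    IsLeftDiv (ℓA n M) (x⁻¹ * r) (x⁻¹ * g) := by
  have hxg := hx.trans hr
  rw [IsLeftDiv] at hx hr hxg ⊢
  rw [mul_inv_rev, inv_inv, mul_assoc, mul_inv_cancel_left]
  omega

theorem DihedralBound.hasCardLE_inter_Gij (hB : DihedralBound M B) (hA : IsLargeType M)
    (hLD : ∀ i j : Fin n, i ≠ j → ∀ g, IsMaxLD n M i j g (LD i j g))
    (hRD : ∀ i j : Fin n, i ≠ j → ∀ g, IsMaxRD n M i j g (RD i j g))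
    (hp : IsEdge (natLabel M) i j) (hl : ℓA n M (H * g) = ℓA n M H + ℓA n M g) :
    HasCardLE (permissibleDivisors LD RD H g a k ∩ Gij n M i j) (B (ℓA n M (RD i j H) + k)) := by
  have hu := hLD i j hp.1 g
  have hv := hRD i j hp.1 H
  refine ((hB i j hp.1 _ (mul_mem hv.1 hu.1) _).preimage (mul_right_injective (RD i j H))).subset ?_
  rintro r ⟨⟨hk, hdiv, hperm, -⟩, hr⟩
  refine ⟨?_, ?_⟩
  · rw [hv.2.1.length_mul (hdiv.length_mul hl), hk]
  · have hpair := hperm i j hp.1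
    rw [hv.eq_mul hA hp hr (hRD i j hp.1 (H * r)),
      hu.eq_mul hA hp (inv_mem hr) (hLD i j hp.1 (r⁻¹ * g))] at hpair
    rwa [mul_inv_rev, mul_assoc, inv_mul_cancel_left]

theorem IsBranching.length_pos (hA : IsLargeType M) (D : IsBranching i j b h y x c d t)
    (ha : IsFirstLetter a h) (hb : IsFirstLetter b h) (hab : a ≠ b) : 0 < ℓA n M x := by
  refine Nat.pos_of_ne_zero fun hzero => hab ?_
  rw [D.eq_mul_pow, eq_one_of_length_eq_zero hzero, one_mul] at ha hb
  rw [eq_of_isFirstLetter_pow hA D.length_pow ha, eq_of_isFirstLetter_pow hA D.length_pow hb]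

theorem IsBranching.inv_mul_eq (D : IsBranching i j b u (u⁻¹ * g) x c d t) :
    x⁻¹ * g = toGen n M d ^ t * (u⁻¹ * g) := by
  have hu : x⁻¹ * u = toGen n M d ^ t := inv_mul_eq_iff_eq_mul.2 D.eq_mul_pow
  rw [← hu, mul_assoc, mul_inv_cancel_left]

theorem IsMaxLD.exists_isBranching (hu : IsMaxLD n M i j g u) (hx : IsMaxLD n M i j r x)
    (hA : IsLargeType M) (hp : IsEdge (natLabel M) i j) (hr : IsLeftDiv (ℓA n M) r g)
    (hb : IsFirstLetter b u) (hbx : ¬ IsFirstLetter b x) (hc : IsFirstLetter c (x⁻¹ * r)) :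
    ∃ d t, IsBranching i j b u (u⁻¹ * g) x c d t := by
  have hsplit : x⁻¹ * u * (u⁻¹ * g) = x⁻¹ * g := by rw [mul_assoc, mul_inv_cancel_left]
  have hmem : x⁻¹ * u ∈ Gij n M i j := mul_mem (inv_mem hx.1) hu.1
  have hne : x⁻¹ * u ≠ 1 := fun h => hbx (inv_mul_eq_one.1 h ▸ hb)
  obtain ⟨hci, hcj⟩ := hx.isCosetMin c hc
  obtain ⟨d, hdn, hd⟩ := exists_isFirstLetter_of_mem_Gij hA hp hmem hne
  have hfirst : IsFirstLetter c (x⁻¹ * u * (u⁻¹ * g)) := by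
    rw [hsplit]
    exact hc.of_isLeftDiv (hx.2.1.inv_mul hr)
  obtain ⟨t, ht, heq, hlen⟩ := hu.isCosetMin.exists_eq_pow hA hp hmem hd hdn hfirst hci hcj
  have hxg : ℓA n M x + ℓA n M (x⁻¹ * g) = ℓA n M g := hx.2.1.trans hr
  have hug : ℓA n M u + ℓA n M (u⁻¹ * g) = ℓA n M g := hu.2.1
  have hmul := hu.isCosetMin.length_mul hA hp hmem
  rw [hsplit, hlen] at hmul
  exact ⟨d, t, hx.1, hci, hcj, hdn, ht, inv_mul_eq_iff_eq_mul.1 heq, by omega, heq ▸ hfirst, hbx⟩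

theorem exists_isBranching_of_notMem_Gij (hA : IsLargeType M) (h33 : ThreeThreeHypothesis M)
    (hLD : ∀ i j : Fin n, i ≠ j → ∀ g, IsMaxLD n M i j g (LD i j g))
    (hp : IsEdge (natLabel M) i j) (hb : IsFirstLetter b g) (hbj : b.1 = j) (hab : a ≠ b)
    (hr : r ∈ permissibleDivisors LD RD H g a k) (hrG : r ∉ Gij n M i j) :
    ∃ x c d t, IsBranching i j b (LD i j g) ((LD i j g)⁻¹ * g) x c d t ∧
      IsLeftDiv (ℓA n M) x g ∧ ℓA n M x ≤ k ∧
      x⁻¹ * r ∈ permissibleDivisors LD RD (H * x) (x⁻¹ * g) c (k - ℓA n M x) := by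
  obtain ⟨hk, hdiv, hperm, hletter⟩ := hr
  have hu := hLD i j hp.1 g
  have hx := hLD i j hp.1 r
  generalize LD i j r = x at hx
  have hbu : IsFirstLetter b (LD i j g) := (hu.isFirstLetter_iff hA hp (Or.inr hbj)).2 hb
  have hbx : ¬ IsFirstLetter b x := fun h => hab ((hletter b).1 (h.of_isLeftDiv hx.2.1)).symm
  have hne : x⁻¹ * r ≠ 1 := fun h => hrG (inv_mul_eq_one.1 h ▸ hx.1)
  have hrest : (x⁻¹ * r)⁻¹ * (x⁻¹ * g) = r⁻¹ * g := by group
  have hlen : ℓA n M x + ℓA n M (x⁻¹ * r) = ℓA n M r := hx.2.1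
  obtain ⟨c, hc⟩ := exists_isFirstLetter hA hne
  obtain ⟨d, t, D⟩ := hu.exists_isBranching hx hA hp hdiv hbu hbx hc
  refine ⟨x, c, d, t, D, hx.2.1.trans hdiv, by omega, by omega, hx.2.1.inv_mul hdiv, ?_,
    fun c' => ⟨fun hc' => ?_, fun h => h ▸ hc⟩⟩
  · rw [hrest, mul_assoc, mul_inv_cancel_left]
    exact hperm
  · obtain ⟨d', t', D'⟩ := hu.exists_isBranching hx hA hp hdiv hbu hbx hc'
    exact (D'.unique hA h33 hp hu.isCosetMin hbu D).2.1

theorem exists_diff_Gij_subset_image (hA : IsLargeType M) (h33 : ThreeThreeHypothesis M)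
    (hLD : ∀ i j : Fin n, i ≠ j → ∀ g, IsMaxLD n M i j g (LD i j g))
    (hRD : ∀ i j : Fin n, i ≠ j → ∀ g, IsMaxRD n M i j g (RD i j g))
    (hp : IsEdge (natLabel M) a.1 b.1) (ha : IsFirstLetter a g) (hb : IsFirstLetter b g)
    (hab : a ≠ b) (hl : ℓA n M (H * g) = ℓA n M H + ℓA n M g)
    (hne : (permissibleDivisors LD RD H g a k \ Gij n M a.1 b.1).Nonempty) :
    ∃ x c d, c ≠ d ∧ IsFirstLetter c (x⁻¹ * g) ∧ IsFirstLetter d (x⁻¹ * g) ∧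
      0 < ℓA n M x ∧ ℓA n M x ≤ k ∧
      ℓA n M (H * x * (x⁻¹ * g)) = ℓA n M (H * x) + ℓA n M (x⁻¹ * g) ∧
      ℓA n M (RD c.1 d.1 (H * x)) < ℓA n M (RD a.1 b.1 H) + ℓA n M x ∧
      permissibleDivisors LD RD H g a k \ Gij n M a.1 b.1 ⊆
        (x * ·) '' permissibleDivisors LD RD (H * x) (x⁻¹ * g) c (k - ℓA n M x) := by
  obtain ⟨r, hr, hrG⟩ := hne
  obtain ⟨x, c, d, t, D, hxg, hxk, -⟩ :=
    exists_isBranching_of_notMem_Gij hA h33 hLD hp hb rfl hab hr hrG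
  have hu := hLD a.1 b.1 hp.1 g
  have hau := (hu.isFirstLetter_iff hA hp (Or.inl rfl)).2 ha
  have hbu := (hu.isFirstLetter_iff hA hp (Or.inr rfl)).2 hb
  have hcd := (D.isEdge_and_hasSyllables hA hp hu.isCosetMin).1
  have hHx := hxg.length_mul hl
  refine ⟨x, c, d, D.letter_ne, ?_, ?_, D.length_pos hA hau hbu hab, hxk, ?_, ?_, ?_⟩
  · rw [D.inv_mul_eq]
    exact D.isFirstLetter
  · rw [D.inv_mul_eq]
    exact (D.isFirstSyllable hA hp hu.isCosetMin).isFirstLetter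
  · rw [mul_assoc, mul_inv_cancel_left, hl, hHx, ← hxg, add_assoc]
  · exact D.length_isMaxRD_lt hA hp hcd hau hbu hab hHx (hRD _ _ hp.1 H) (hRD _ _ hcd.1 _)
  · rintro s ⟨hs, hsG⟩
    obtain ⟨x', c', d', t', D', -, -, hmem⟩ :=
      exists_isBranching_of_notMem_Gij hA h33 hLD hp hb rfl hab hs hsG
    obtain ⟨rfl, rfl, -, -⟩ := D.unique hA h33 hp hu.isCosetMin hbu D'
    exact ⟨x⁻¹ * s, hmem, mul_inv_cancel_left x s⟩

theorem permissibleDivisors_zero : permissibleDivisors LD RD H g a 0 = ∅ := by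
  refine Set.eq_empty_of_forall_notMem fun r hr => ?_
  have hfirst := (hr.2.2.2 a).2 rfl
  rw [eq_one_of_length_eq_zero hr.1] at hfirst
  exact not_isFirstLetter_one a hfirst

theorem DihedralBound.hasCardLE_permissibleDivisors (hB : DihedralBound M B) (hA : IsLargeType M)
    (h33 : ThreeThreeHypothesis M)
    (hLD : ∀ i j : Fin n, i ≠ j → ∀ g, IsMaxLD n M i j g (LD i j g))
    (hRD : ∀ i j : Fin n, i ≠ j → ∀ g, IsMaxRD n M i j g (RD i j g))
    (ha : IsFirstLetter a g) (hb : IsFirstLetter b g) (hab : a ≠ b)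
    (hl : ℓA n M (H * g) = ℓA n M H + ℓA n M g) :
    HasCardLE (permissibleDivisors LD RD H g a k)
      (∑ l ∈ Finset.Icc 1 (ℓA n M (RD a.1 b.1 H) + k), B l) := by
  induction k using Nat.strong_induction_on generalizing a b H g with
  | _ k ih =>
  obtain ⟨hp, -⟩ := ha.isEdge_and_hasSyllables hA hb hab
  have hBpos : ∀ l, 0 ≤ B l := fun l => (hB a.1 b.1 hp.1 1 (one_mem _) l).nonneg
  have hsum : ∀ m, 0 ≤ ∑ l ∈ Finset.Icc 1 m, B l := fun m => Finset.sum_nonneg fun l _ => hBpos l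
  obtain rfl | hk := Nat.eq_zero_or_pos k
  · rw [permissibleDivisors_zero]
    exact .empty (hsum _)
  have hin := hB.hasCardLE_inter_Gij (a := a) (k := k) hA hLD hRD hp hl
  have hout : HasCardLE (permissibleDivisors LD RD H g a k \ Gij n M a.1 b.1)
      (∑ l ∈ Finset.Icc 1 (ℓA n M (RD a.1 b.1 H) + k - 1), B l) := by
    obtain hempty | hne :=
      (permissibleDivisors LD RD H g a k \ Gij n M a.1 b.1).eq_empty_or_nonempty
    · rw [hempty]
      exact .empty (hsum _)
    obtain ⟨x, c, d, hcd, hc, hd, hpos, hxk, hlx, hlt, hsub⟩ :=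
      exists_diff_Gij_subset_image hA h33 hLD hRD hp ha hb hab hl hne
    refine (((ih _ (by omega) hc hd hcd hlx).image _).subset hsub).mono ?_
    exact Finset.sum_le_sum_of_subset_of_nonneg (Finset.Icc_subset_Icc_right (by omega))
      fun l _ _ => hBpos l
  have htotal := hout.union hin
  rw [Set.sdiff_union_inter] at htotal
  obtain ⟨m, hm⟩ := Nat.exists_eq_add_of_le' (le_add_left hk : 1 ≤ ℓA n M (RD a.1 b.1 H) + k)
  rw [hm, Nat.add_sub_cancel] at htotal
  rwa [hm, Finset.sum_Icc_succ_top (Nat.le_add_left 1 m)]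

theorem isFirstLetter_of_isGeodesic {v : List (Letter n)} (hv : IsGeodesic n M v)
    (ha : v.head? = some a) : IsFirstLetter a (wordElt n M v) := by
  obtain ⟨v, rfl⟩ := List.head?_eq_some_iff.1 ha
  have hlen : ℓA n M (wordElt n M (a :: v)) = v.length + 1 := hv
  rw [IsFirstLetter, hlen, wordElt_cons, inv_mul_cancel_left]
  exact Nat.lt_succ_of_le (length_wordElt_le v)

theorem IsFirstLetter.exists_isGeodesic_cons (ha : IsFirstLetter a g) :
    ∃ v, IsGeodesic n M (a :: v) ∧ wordElt n M (a :: v) = g := by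
  obtain ⟨v, hv, hlen⟩ := exists_geodesic ((toGen n M a)⁻¹ * g)
  have hg : wordElt n M (a :: v) = g := by rw [wordElt_cons, hv, mul_inv_cancel_left]
  refine ⟨v, ?_, hg⟩
  change ℓA n M (wordElt n M (a :: v)) = v.length + 1
  rw [hg, ha.length_eq, hlen]

theorem isFirstLetter_iff_of_forall_head?_eq
    (h : ∀ v, IsGeodesic n M v → wordElt n M v = g → v.head? = some a) :
    IsFirstLetter c g ↔ c = a := by
  constructor
  · intro hc
    obtain ⟨v, hv, hvg⟩ := hc.exists_isGeodesic_cons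
    exact Option.some_inj.1 (h _ hv hvg)
  · rintro rfl
    obtain ⟨v, rfl, hlen⟩ := exists_geodesic g
    exact isFirstLetter_of_isGeodesic hlen (h v hlen rfl)

theorem IsMaxRD.eq_one (hu : IsMaxRD n M i j 1 u) : u = 1 := by
  have hdiv : ℓA n M (1 * u⁻¹) + ℓA n M u = ℓA n M 1 := hu.2.1
  rw [length_one] at hdiv
  exact eq_one_of_length_eq_zero (Nat.eq_zero_of_add_eq_zero_left hdiv)

end Counting

theorem count_left_divisors_with_fixed_first_letter_general {n : ℕ} {M : Fin n → Fin n → ℕ∞}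
    (hA : IsLargeType M) (h33 : ThreeThreeHypothesis M)
    {LD RD : Fin n → Fin n → ArtinGroup n M → ArtinGroup n M}
    (hLD : ∀ i j : Fin n, i ≠ j → ∀ g, IsMaxLD n M i j g (LD i j g))
    (hRD : ∀ i j : Fin n, i ≠ j → ∀ g, IsMaxRD n M i j g (RD i j g))
    {B : ℕ → ℝ} (hB : DihedralBound M B) {g : ArtinGroup n M} {v w : List (Letter n)}
    (hv : IsGeodesic n M v) (hvg : wordElt n M v = g)
    (hw : IsGeodesic n M w) (hwg : wordElt n M w = g)
    {a b : Letter n} (ha : v.head? = some a) (hb : w.head? = some b) (hab : a ≠ b) (k : ℕ) :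
    HasCardLE {g₁ | ℓA n M g₁ = k ∧ PMem n M LD RD (g₁, g₁⁻¹ * g) ∧
        ∀ u, IsGeodesic n M u → wordElt n M u = g₁ → u.head? = some a}
      (∑ l ∈ Finset.Icc 1 k, B l) := by
  have hag : IsFirstLetter a g := hvg ▸ isFirstLetter_of_isGeodesic hv ha
  have hbg : IsFirstLetter b g := hwg ▸ isFirstLetter_of_isGeodesic hw hb
  obtain ⟨hp, -⟩ := hag.isEdge_and_hasSyllables hA hbg hab
  have hcount := hB.hasCardLE_permissibleDivisors (k := k) hA h33 hLD hRD hag hbg hab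
    (H := 1) (by rw [one_mul, length_one, zero_add])
  rw [(hRD a.1 b.1 hp.1 1).eq_one, length_one, zero_add] at hcount
  refine hcount.subset ?_
  rintro r ⟨hk, ⟨hdiv, hperm⟩, hhead⟩
  rw [mul_inv_cancel_left] at hdiv
  refine ⟨hk, hdiv, ?_, fun c => isFirstLetter_iff_of_forall_head?_eq hhead⟩
  rwa [one_mul]

open Finset in
/-- **Lemma.** Suppose `P'` bounds the number of permissible left divisors of given
length in each dihedral subgroup `G(i,j)`. If `g` has geodesic representatives `v, w`
with different first letters, then the number of permissible left divisors `g₁` of `g`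
of length `k` all of whose geodesic representatives begin with the first letter of `v`
is at most `Σ_{j=1}^{k} P'(j)`. -/
theorem count_left_divisors_with_fixed_first_letter
    (n : ℕ) (hn : 2 ≤ n) (M : Fin n → Fin n → ℕ∞)
    (hsymm : ∀ i j, M i j = M j i)
    (hdiag : ∀ i, M i i = 1)
    (hlarge : ∀ i j, i ≠ j → 3 ≤ M i j)
    (h33m : ¬ ∃ i j k : Fin n, i ≠ j ∧ i ≠ k ∧ j ≠ k ∧
        M i j = 3 ∧ M i k = 3 ∧ M j k < ⊤)
    (LD RD : Fin n → Fin n → ArtinGroup n M → ArtinGroup n M)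
    (hLD : ∀ i j : Fin n, i ≠ j → ∀ g, IsMaxLD n M i j g (LD i j g))
    (hRD : ∀ i j : Fin n, i ≠ j → ∀ g, IsMaxRD n M i j g (RD i j g))
    (P' : Polynomial ℝ) (hP'c : ∀ c : ℕ, 0 ≤ P'.coeff c)
    (hP' : ∀ i j : Fin n, i ≠ j → ∀ h : ArtinGroup n M, h ∈ Gij n M i j → ∀ k' : ℕ,
      {h₁ : ArtinGroup n M | ℓA n M h₁ = k' ∧ PijMem n M i j h₁ (h₁⁻¹ * h)}.Finite ∧
      ({h₁ : ArtinGroup n M | ℓA n M h₁ = k' ∧ PijMem n M i j h₁ (h₁⁻¹ * h)}.ncard : ℝ) ≤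
        P'.eval (k' : ℝ))
    (g : ArtinGroup n M) (v w : List (Letter n))
    (hv : IsGeodesic n M v) (hvg : wordElt n M v = g)
    (hw : IsGeodesic n M w) (hwg : wordElt n M w = g)
    (av bw : Letter n) (hav : v.head? = some av) (hbw : w.head? = some bw)
    (hdiff : av ≠ bw)
    (k : ℕ) (hk : k ≤ ℓA n M g) :
    {g₁ : ArtinGroup n M | ℓA n M g₁ = k ∧ PMem n M LD RD (g₁, g₁⁻¹ * g) ∧
        ∀ u : List (Letter n), IsGeodesic n M u → wordElt n M u = g₁ →
          u.head? = some av}.Finite ∧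
    ({g₁ : ArtinGroup n M | ℓA n M g₁ = k ∧ PMem n M LD RD (g₁, g₁⁻¹ * g) ∧
        ∀ u : List (Letter n), IsGeodesic n M u → wordElt n M u = g₁ →
          u.head? = some av}.ncard : ℝ) ≤
      ∑ jj ∈ Finset.Icc 1 k, P'.eval (jj : ℝ) := by
  exact count_left_divisors_with_fixed_first_letter_general ⟨hsymm, hlarge⟩ h33m hLD hRD hP'
    hv hvg hw hwg hav hbw hdiff k

end ArtinRD
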